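/- Let L/k be a Galois extension of number fields with dihedral Galois group D of order 2q, q odd. Let G ⊂ D be the subgroup of order q, Σ ⊂ D a subgroup of order 2, F = L^G, K = L^Σ. Then h(L)·h(k)² / (h(F)·h(K)²) = |Ĥ⁰(D, U_L ⊗ Z[1/2])| / |Ĥ^{-1}(D, U_L ⊗ Z[1/2])|, where h denotes class number and U_L the unit group of the ring of integers of L. -/

import Mathlib

open DihedralGroup NumberField IntermediateField

section FixedNormAug

variable {M : Type*} [AddCommGroup M] {ι : Type*} [Fintype ι]

/-- The common fixed points of a family of additive endomorphisms. -/
def fixedPts (T : ι → (M →+ M)) : AddSubgroup M where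
  carrier := {x | ∀ i, T i x = x}
  zero_mem' := fun i => map_zero (T i)
  add_mem' := by intro a b ha hb i; rw [map_add, ha i, hb i]
  neg_mem' := by intro a ha i; rw [map_neg, ha i]

/-- The norm map of a family of additive endomorphisms. -/
def normOf (T : ι → (M →+ M)) : M →+ M := ∑ i, T i

/-- The augmentation submodule of a family of additive endomorphisms. -/
def augOf (T : ι → (M →+ M)) : AddSubgroup M :=
  AddSubgroup.closure {x | ∃ (i : ι) (y : M), x = y - T i y}

/-- Tate cohomology `Ĥ⁰` for a group acting via the family `T`. -/
abbrev tateH0Of (T : ι → (M →+ M)) : Type _ :=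
  fixedPts T ⧸ ((normOf T).range.addSubgroupOf (fixedPts T))

/-- Tate cohomology `Ĥ⁻¹` for a group acting via the family `T`. -/
abbrev tateHneg1Of (T : ι → (M →+ M)) : Type _ :=
  (normOf T).ker ⧸ ((augOf T).addSubgroupOf (normOf T).ker)

end FixedNormAug

section UnitsAct

variable (q : ℕ) (k L : Type*) [Field k] [Field L] [NumberField k] [NumberField L]
  [Algebra k L] [IsGalois k L]

/-- `U_L ⊗ ℤ[1/2]`: the unit group of `𝓞 L`, made additive and localized away from 2. -/
abbrev UnitsHalf : Type _ :=
  LocalizedModule (Submonoid.powers (2 : ℤ)) (Additive (𝓞 L)ˣ)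

/-- The action of `g ∈ Gal(L/k)` on `U_L ⊗ ℤ[1/2]`. -/
noncomputable def unitsAct (g : L ≃ₐ[k] L) : UnitsHalf L →+ UnitsHalf L :=
  (LocalizedModule.map (Submonoid.powers (2 : ℤ))
    (MonoidHom.toAdditive
      (Units.map (galRestrict (𝓞 k) k L (𝓞 L) g).toAlgHom.toRingHom.toMonoidHom)
    ).toIntLinearMap).toAddMonoidHom

end UnitsAct

section MultisetZeta

open scoped ENNReal

/-- The generating sum over all multisets of a weight. -/
noncomputable def multisetZeta {α : Type*} (w : α → ℝ≥0∞) : ℝ≥0∞ :=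
  ∑' m : Multiset α, (m.map w).prod

lemma multisetZeta_equiv {α β : Type*} (e : α ≃ β) (u : α → ℝ≥0∞) (w : β → ℝ≥0∞)
    (h : ∀ a, w (e a) = u a) : multisetZeta u = multisetZeta w := by
  unfold multisetZeta
  let E : Multiset α ≃ Multiset β :=
    { toFun := Multiset.map e
      invFun := Multiset.map e.symm
      left_inv := fun m => by simp
      right_inv := fun m => by simp }
  rw [← E.tsum_eq]
  refine tsum_congr fun m => ?_
  have : (E m).map w = m.map u := by
    simp only [E, Equiv.coe_fn_mk, Multiset.map_map]
    exact Multiset.map_congr rfl fun a _ => h a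
  rw [this]

lemma filterMap_const_none {γ δ : Type*} (m : Multiset γ) :
    m.filterMap (fun _ => (none : Option δ)) = 0 := by
  induction m using Multiset.induction_on <;> simp_all

lemma multisetZeta_sum {α β : Type*} (u : α → ℝ≥0∞) (w : β → ℝ≥0∞) :
    multisetZeta (Sum.elim u w) = multisetZeta u * multisetZeta w := by
  classical
  unfold multisetZeta
  let E : Multiset α × Multiset β ≃ Multiset (α ⊕ β) :=
    { toFun := fun p => p.1.map Sum.inl + p.2.map Sum.inr
      invFun := fun m => (m.filterMap Sum.getLeft?, m.filterMap Sum.getRight?)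
      left_inv := fun p => by
        have h1 : (Sum.getLeft? : α ⊕ β → Option α) ∘ Sum.inl = some := rfl
        have h2 : (Sum.getLeft? : α ⊕ β → Option α) ∘ Sum.inr = fun _ => none := rfl
        have h3 : (Sum.getRight? : α ⊕ β → Option β) ∘ Sum.inl = fun _ => none := rfl
        have h4 : (Sum.getRight? : α ⊕ β → Option β) ∘ Sum.inr = some := rfl
        simp [Multiset.filterMap_add, Multiset.filterMap_map, h1, h2, h3, h4,
          filterMap_const_none]
      right_inv := fun m => by
        induction m using Multiset.induction_on with
        | empty => simp
        | cons a s ih =>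
          dsimp only at ih ⊢
          rcases a with a | b
          · rw [Multiset.filterMap_cons_some _ _ _ (by rfl : Sum.getLeft? (Sum.inl a) = some a),
              Multiset.filterMap_cons_none _ _ (by rfl), Multiset.map_cons, Multiset.cons_add, ih]
          · rw [Multiset.filterMap_cons_some _ _ _ (by rfl : Sum.getRight? (Sum.inr b) = some b),
              Multiset.filterMap_cons_none _ _ (by rfl), Multiset.map_cons, Multiset.add_cons, ih] }
  rw [← E.tsum_eq, ENNReal.tsum_prod']
  simp only [E, Equiv.coe_fn_mk, Multiset.map_add, Multiset.prod_add, Multiset.map_map]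
  simp [Function.comp_def, ENNReal.tsum_mul_left, ENNReal.tsum_mul_right]

end MultisetZeta

section DedekindZeta

open scoped ENNReal nonZeroDivisors
open IsDedekindDomain UniqueFactorizationMonoid

variable (E : Type*) [Field E] [NumberField E]

/-- The absolute norm of a maximal ideal. -/
noncomputable abbrev primeNorm (v : HeightOneSpectrum (𝓞 E)) : ℕ := Ideal.absNorm v.asIdeal

/-- The number of maximal ideals of the ring of integers with given norm. -/
noncomputable def primeCount (n : ℕ) : ℕ :=
  Nat.card {v : HeightOneSpectrum (𝓞 E) // Ideal.absNorm v.asIdeal = n}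

/-- Nonzero ideals are the multisets of maximal ideals. -/
noncomputable def multisetEquivIdeal :
    Multiset (HeightOneSpectrum (𝓞 E)) ≃ {I : Ideal (𝓞 E) // I ≠ ⊥} :=
  Equiv.ofBijective (fun m => ⟨(m.map HeightOneSpectrum.asIdeal).prod, by
    simp only [ne_eq, ← Ideal.zero_eq_bot, Multiset.prod_eq_zero_iff, Multiset.mem_map, not_exists,
      not_and]
    intro v _
    exact v.ne_bot⟩) (by
    classical
    have hprime (m : Multiset (HeightOneSpectrum (𝓞 E))) :
        normalizedFactors (m.map HeightOneSpectrum.asIdeal).prod =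
          m.map HeightOneSpectrum.asIdeal := by
      refine normalizedFactors_prod_of_prime fun p hp => ?_
      obtain ⟨v, -, rfl⟩ := Multiset.mem_map.mp hp
      exact v.prime
    constructor
    · intro m m' h
      have h1 := congrArg (fun I : {I : Ideal (𝓞 E) // I ≠ ⊥} => normalizedFactors I.1) h
      simp only [hprime] at h1
      exact Multiset.map_injective (fun v w h => HeightOneSpectrum.ext h) h1
    · rintro ⟨I, hI⟩
      have hmem (P) (hP : P ∈ normalizedFactors I) : P.IsPrime ∧ P ≠ ⊥ :=
        ⟨Ideal.isPrime_of_prime (prime_of_normalized_factor P hP),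
          (prime_of_normalized_factor P hP).ne_zero⟩
      refine ⟨(normalizedFactors I).pmap (fun P h => ⟨P, h.1, h.2⟩) hmem, Subtype.ext ?_⟩
      simp only [Multiset.map_pmap, Multiset.pmap_eq_map, Multiset.map_id']
      exact Ideal.prod_normalizedFactors_eq_self hI)

lemma coe_multisetEquivIdeal (m : Multiset (HeightOneSpectrum (𝓞 E))) :
    (multisetEquivIdeal E m : Ideal (𝓞 E)) = (m.map HeightOneSpectrum.asIdeal).prod := rfl

lemma dedekindZeta_eq_multisetZeta (s : ℝ) (hs : 0 < s) :
    dedekindZeta E s = ((multisetZeta fun v : HeightOneSpectrum (𝓞 E) =>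
      ((Ideal.absNorm v.asIdeal : ℝ≥0∞) ^ s)⁻¹).toReal : ℂ) := by
  have h1 : (multisetZeta fun v : HeightOneSpectrum (𝓞 E) =>
      ((Ideal.absNorm v.asIdeal : ℝ≥0∞) ^ s)⁻¹) =
      ∑' I : {I : Ideal (𝓞 E) // I ≠ ⊥}, ((Ideal.absNorm I.1 : ℝ≥0∞) ^ s)⁻¹ := by
    rw [multisetZeta, ← (multisetEquivIdeal E).tsum_eq]
    refine tsum_congr fun m => ?_
    rw [coe_multisetEquivIdeal]
    induction m using Multiset.induction_on with
    | empty => simp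
    | cons v m ih =>
      rw [Multiset.map_cons, Multiset.prod_cons, ih, Multiset.map_cons, Multiset.prod_cons, map_mul,
        Nat.cast_mul, ENNReal.mul_rpow_of_nonneg _ _ hs.le, ENNReal.mul_inv]
      · right
        simp [ENNReal.rpow_eq_top_iff, hs.not_gt]
      · left
        simp [ENNReal.rpow_eq_top_iff, hs.not_gt]
  have h2 : (∑' I : {I : Ideal (𝓞 E) // I ≠ ⊥}, ((Ideal.absNorm I.1 : ℝ≥0∞) ^ s)⁻¹) =
      ∑' n : ℕ, if n = 0 then 0 else
        (Nat.card {I : Ideal (𝓞 E) // Ideal.absNorm I = n} : ℝ≥0∞) * ((n : ℝ≥0∞) ^ s)⁻¹ := by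
    rw [← ENNReal.tsum_fiberwise _ (fun I : {I : Ideal (𝓞 E) // I ≠ ⊥} => Ideal.absNorm I.1)]
    refine tsum_congr fun n => ?_
    split_ifs with hn
    · refine ENNReal.tsum_eq_zero.mpr fun I => ?_
      have := I.2
      simp [hn, Ideal.absNorm_eq_zero_iff, I.1.2] at this
    · have e : ((fun I : {I : Ideal (𝓞 E) // I ≠ ⊥} => Ideal.absNorm I.1) ⁻¹' {n}) ≃
          {I : Ideal (𝓞 E) // Ideal.absNorm I = n} :=
        { toFun := fun I => ⟨I.1.1, I.2⟩
          invFun := fun I => ⟨⟨I.1, by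
            rintro h
            have := I.2
            rw [h, Ideal.absNorm_bot] at this
            exact hn this.symm⟩, I.2⟩
          left_inv := fun I => rfl
          right_inv := fun I => rfl }
      have hfin : Finite {I : Ideal (𝓞 E) // Ideal.absNorm I = n} :=
        Ideal.finite_setOfPred_absNorm_eq n
      rw [← Nat.card_congr e]
      have : Finite ((fun I : {I : Ideal (𝓞 E) // I ≠ ⊥} => Ideal.absNorm I.1) ⁻¹' {n}) :=
        Finite.of_equiv _ e.symm
      have := Fintype.ofFinite ((fun I : {I : Ideal (𝓞 E) // I ≠ ⊥} => Ideal.absNorm I.1) ⁻¹' {n})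
      rw [tsum_fintype, Finset.sum_congr rfl (g := fun _ => ((n : ℝ≥0∞) ^ s)⁻¹)]
      · simp
      · intro I _
        rw [show Ideal.absNorm I.1.1 = n from I.2]
  rw [h1, h2, dedekindZeta, LSeries, ENNReal.tsum_toReal_eq, Complex.ofReal_tsum]
  · refine tsum_congr fun n => ?_
    rw [LSeries.term_def]
    split_ifs with hn
    · simp
    · rw [ENNReal.toReal_mul, ENNReal.toReal_inv, ← ENNReal.toReal_rpow]
      simp only [ENNReal.toReal_natCast, Complex.ofReal_mul, Complex.ofReal_inv,
        Complex.ofReal_natCast]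
      rw [Complex.ofReal_cpow (by positivity), div_eq_mul_inv, Complex.ofReal_natCast]
  · intro n
    split_ifs with hn
    · simp
    · refine ENNReal.mul_ne_top (by simp) (ENNReal.inv_ne_top.mpr ?_)
      simp [ENNReal.rpow_eq_zero_iff, hn, hs.not_gt]

lemma finite_primes_of_norm (n : ℕ) :
    Finite {v : HeightOneSpectrum (𝓞 E) // Ideal.absNorm v.asIdeal = n} := by
  have : Finite {I : Ideal (𝓞 E) // Ideal.absNorm I = n} :=
    Ideal.finite_setOfPred_absNorm_eq n
  exact Finite.of_injective
    (fun v => (⟨v.1.asIdeal, v.2⟩ : {I : Ideal (𝓞 E) // Ideal.absNorm I = n})) fun v w h =>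
      Subtype.ext (HeightOneSpectrum.ext (congrArg Subtype.val h))

end DedekindZeta

/-- Two types with a map to a common type whose fibres are finite of the same size are equivalent
over that type. -/
lemma exists_equiv_of_card_fiber_eq {α β γ : Type*} (f : α → γ) (g : β → γ)
    [∀ c, Finite {a // f a = c}] [∀ c, Finite {b // g b = c}]
    (h : ∀ c, Nat.card {a // f a = c} = Nat.card {b // g b = c}) :
    ∃ e : α ≃ β, ∀ a, g (e a) = f a := by
  let e' (c : γ) : {a // f a = c} ≃ {b // g b = c} := (Finite.card_eq.mp (h c)).some
  refine ⟨(Equiv.sigmaFiberEquiv f).symm.trans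
    ((Equiv.sigmaCongrRight e').trans (Equiv.sigmaFiberEquiv g)), fun a => ?_⟩
  exact (e' (f a) ⟨a, rfl⟩).2

lemma finite_sumElim_fiber {α β : Type*} (u : α → ℕ) (w : β → ℕ) (hu : ∀ n, Finite {x // u x = n})
    (hw : ∀ n, Finite {x // w x = n}) (n : ℕ) : Finite {x // Sum.elim u w x = n} :=
  have : Finite {a // Sum.elim u w (Sum.inl a) = n} := hu n
  have : Finite {b // Sum.elim u w (Sum.inr b) = n} := hw n
  Finite.of_equiv _ (Equiv.subtypeSum (p := fun x => Sum.elim u w x = n)).symm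

lemma card_sumElim_fiber {α β : Type*} (u : α → ℕ) (w : β → ℕ) (hu : ∀ n, Finite {x // u x = n})
    (hw : ∀ n, Finite {x // w x = n}) (n : ℕ) :
    Nat.card {x // Sum.elim u w x = n} = Nat.card {x // u x = n} + Nat.card {x // w x = n} := by
  have : Finite {a // Sum.elim u w (Sum.inl a) = n} := hu n
  have : Finite {b // Sum.elim u w (Sum.inr b) = n} := hw n
  rw [Nat.card_congr (Equiv.subtypeSum (p := fun x => Sum.elim u w x = n))]
  exact Nat.card_sum

lemma inv_rpow_sumElim {α β : Type*} (u : α → ℕ) (w : β → ℕ) (s : ℝ) :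
    (fun x => (((Sum.elim u w x : ℕ) : ENNReal) ^ s)⁻¹) =
      Sum.elim (fun x => ((u x : ENNReal) ^ s)⁻¹) (fun x => ((w x : ENNReal) ^ s)⁻¹) := by
  ext x
  rcases x with x | x <;> rfl

section BrauerRelation

open scoped ENNReal Topology
open IsDedekindDomain Filter

variable (L k F K : Type*) [Field L] [Field k] [Field F] [Field K] [NumberField L] [NumberField k]
  [NumberField F] [NumberField K]

lemma dedekindZeta_relation_of_primeCount
    (h : ∀ n, primeCount L n + 2 * primeCount k n = primeCount F n + 2 * primeCount K n)
    (s : ℝ) (hs : 0 < s) :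
    dedekindZeta L s * dedekindZeta k s ^ 2 = dedekindZeta F s * dedekindZeta K s ^ 2 := by
  let f : HeightOneSpectrum (𝓞 L) ⊕ (HeightOneSpectrum (𝓞 k) ⊕ HeightOneSpectrum (𝓞 k)) → ℕ :=
    Sum.elim (primeNorm L) (Sum.elim (primeNorm k) (primeNorm k))
  let g : HeightOneSpectrum (𝓞 F) ⊕ (HeightOneSpectrum (𝓞 K) ⊕ HeightOneSpectrum (𝓞 K)) → ℕ :=
    Sum.elim (primeNorm F) (Sum.elim (primeNorm K) (primeNorm K))
  have hf : ∀ n, Finite {x // f x = n} := finite_sumElim_fiber _ _ (finite_primes_of_norm L)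
    (finite_sumElim_fiber _ _ (finite_primes_of_norm k) (finite_primes_of_norm k))
  have hg : ∀ n, Finite {x // g x = n} := finite_sumElim_fiber _ _ (finite_primes_of_norm F)
    (finite_sumElim_fiber _ _ (finite_primes_of_norm K) (finite_primes_of_norm K))
  obtain ⟨e, he⟩ := exists_equiv_of_card_fiber_eq f g fun n => by
    rw [card_sumElim_fiber _ _ (finite_primes_of_norm L)
      (finite_sumElim_fiber _ _ (finite_primes_of_norm k) (finite_primes_of_norm k)),
      card_sumElim_fiber _ _ (finite_primes_of_norm k) (finite_primes_of_norm k),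
      card_sumElim_fiber _ _ (finite_primes_of_norm F)
      (finite_sumElim_fiber _ _ (finite_primes_of_norm K) (finite_primes_of_norm K)),
      card_sumElim_fiber _ _ (finite_primes_of_norm K) (finite_primes_of_norm K)]
    have := h n
    unfold primeCount at this
    linarith
  have key := multisetZeta_equiv e (fun x => ((f x : ℝ≥0∞) ^ s)⁻¹) (fun x => ((g x : ℝ≥0∞) ^ s)⁻¹)
    fun a => by rw [he]
  simp only [f, g, inv_rpow_sumElim, multisetZeta_sum] at key
  simp only [dedekindZeta_eq_multisetZeta _ s hs]
  have := congrArg ENNReal.toReal key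
  simp only [ENNReal.toReal_mul] at this
  rw [sq, sq]
  exact_mod_cast this

theorem dedekindZeta_residue_relation
    (h : ∀ n, primeCount L n + 2 * primeCount k n = primeCount F n + 2 * primeCount K n) :
    dedekindZeta_residue L * dedekindZeta_residue k ^ 2 =
      dedekindZeta_residue F * dedekindZeta_residue K ^ 2 := by
  have h1 := (tendsto_sub_one_mul_dedekindZeta_nhdsGT L).mul
    ((tendsto_sub_one_mul_dedekindZeta_nhdsGT k).pow 2)
  have h2 := (tendsto_sub_one_mul_dedekindZeta_nhdsGT F).mul
    ((tendsto_sub_one_mul_dedekindZeta_nhdsGT K).pow 2)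
  have := tendsto_nhds_unique_of_eventuallyEq h1 h2 (by
    filter_upwards [self_mem_nhdsWithin] with s hs
    have := dedekindZeta_relation_of_primeCount L k F K h s (lt_trans one_pos hs)
    linear_combination ((s : ℂ) - 1) ^ 3 * this)
  exact_mod_cast this

end BrauerRelation

theorem DihedralGroup.apply_sr_eq {q : ℕ} (hq : Odd q) {α : Type*} (c : DihedralGroup q → α)
    (hc : ∀ g h, c (h * g * h⁻¹) = c g) (i : ZMod q) : c (sr i) = c (sr 0) := by
  obtain ⟨m, rfl⟩ := hq
  have h := hc (sr 0) (r (-(m + 1 : ZMod (2 * m + 1)) * i))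
  rw [← h]
  have hz : (2 * (m : ZMod (2 * m + 1)) + 1) = 0 := by
    have := ZMod.natCast_self (2 * m + 1)
    push_cast at this
    exact this
  congr 1
  simp only [r_mul_sr, inv_r, sr_mul_r]
  congr 1
  linear_combination (-i) * hz

theorem DihedralGroup.sum_eq {q : ℕ} [NeZero q] {α : Type*} [AddCommMonoid α]
    (c : DihedralGroup q → α) : ∑ g, c g = ∑ i, c (r i) + ∑ i, c (sr i) := by
  let e : ZMod q ⊕ ZMod q ≃ DihedralGroup q :=
    { toFun := Sum.elim r sr
      invFun := fun g => match g with
        | r i => Sum.inl i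
        | sr i => Sum.inr i
      left_inv := by rintro (i | i) <;> rfl
      right_inv := by rintro (i | i) <;> rfl }
  rw [← e.sum_comp, Fintype.sum_sum_type]
  rfl

/-- The relation between averages of a class function over the subgroups `1`, `D`, `⟨r⟩`, `⟨s⟩` of
a dihedral group of order `2q`, `q` odd. -/
theorem DihedralGroup.average_relation {q : ℕ} [NeZero q] (hq : Odd q) {R : Type*}
    [AddCommMonoid R] [IsAddTorsionFree R] (c : DihedralGroup q → R)
    (hc : ∀ g h, c (h * g * h⁻¹) = c g) {a d g s : R} (ha : a = c 1)
    (hd : (2 * q) • d = ∑ x, c x) (hg : q • g = ∑ i, c (r i)) (hs : 2 • s = c 1 + c (sr 0)) :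
    a + 2 • d = g + 2 • s := by
  rw [DihedralGroup.sum_eq, ← hg] at hd
  simp only [DihedralGroup.apply_sr_eq hq c hc, Finset.sum_const, Finset.card_univ,
    ZMod.card] at hd
  have : 2 • d = g + c (sr 0) := by
    apply nsmul_right_injective (NeZero.ne q)
    simp only [smul_add, ← hd, mul_comm 2 q, mul_smul]
  rw [this, hs, ha]
  abel

theorem Subgroup.sum_closure_r {q : ℕ} [NeZero q] {α : Type*} [AddCommMonoid α]
    (c : DihedralGroup q → α) :
    ∑ᶠ g : Subgroup.closure {(r 1 : DihedralGroup q)}, c g = ∑ i, c (r i) := by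
  rw [← Subgroup.zpowers_eq_closure]
  have hmem : ∀ i : ZMod q, (r i : DihedralGroup q) ∈ Subgroup.zpowers (r 1 : DihedralGroup q) := by
    intro i
    rw [Subgroup.mem_zpowers_iff]
    exact ⟨i.val, by simp⟩
  let e : ZMod q ≃ Subgroup.zpowers (r 1 : DihedralGroup q) :=
    Equiv.ofBijective (fun i => ⟨r i, hmem i⟩) ⟨fun i j h => by simpa using h, by
      rintro ⟨g, n, rfl⟩
      exact ⟨n, by simp⟩⟩
  rw [← finsum_comp_equiv e, finsum_eq_sum_of_fintype]
  rfl

theorem Subgroup.sum_closure_sr {q : ℕ} {α : Type*} [AddCommMonoid α]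
    (c : DihedralGroup q → α) :
    ∑ᶠ g : Subgroup.closure {(sr 0 : DihedralGroup q)}, c g = c 1 + c (sr 0) := by
  rw [← Subgroup.zpowers_eq_closure]
  let f : Fin 2 → Subgroup.zpowers (sr 0 : DihedralGroup q) :=
    ![1, ⟨sr 0, Subgroup.mem_zpowers _⟩]
  have hf : Function.Bijective f := by
    constructor
    · have h : (1 : DihedralGroup q) ≠ sr 0 := fun h => by cases h
      intro i j hij
      have hij := congrArg Subtype.val hij
      fin_cases i <;> fin_cases j
      · rfl
      · exact absurd hij h
      · exact absurd hij.symm h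
      · rfl
    · rintro ⟨g, n, rfl⟩
      rcases Int.even_or_odd' n with ⟨m, rfl | rfl⟩
      · exact ⟨0, Subtype.ext (by simp [f, zpow_mul, pow_two, -r_zero]; rfl)⟩
      · exact ⟨1, Subtype.ext (by simp [f, zpow_add, zpow_mul, pow_two, -r_zero])⟩
  rw [← finsum_comp_equiv (Equiv.ofBijective f hf), finsum_eq_sum_of_fintype, Fin.sum_univ_two]
  rfl

theorem MulAction.sum_card_stabilizer_orbit {H X : Type*} [Group H] [Finite H] [Finite X]
    [MulAction H X] (x₀ : X) :
    ∑ᶠ x : MulAction.orbit H x₀, Nat.card (MulAction.stabilizer H (x : X)) = Nat.card H := by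
  have hst : ∀ x : MulAction.orbit H x₀, Nat.card (MulAction.stabilizer H (x : X)) =
      Nat.card (MulAction.stabilizer H x₀) := fun x =>
    Nat.card_congr (MulAction.stabilizerEquivStabilizerOfOrbitRel x.2).toEquiv
  have := Fintype.ofFinite (MulAction.orbit H x₀)
  rw [finsum_congr hst, finsum_eq_sum_of_fintype, Finset.sum_const, smul_eq_mul,
    Finset.card_univ, ← Nat.card_eq_fintype_card, ← Nat.card_prod]
  exact Nat.card_congr (MulAction.orbitProdStabilizerEquivGroup H x₀)

/-- Counting the fixed points of the map induced on orbits by an equivariant map. -/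
theorem MulAction.card_mul_card_fixed_quotient {H X Y : Type*} [Group H] [Finite H] [Finite X]
    [MulAction H X] (π : X → Y) (hπ : Function.Surjective π)
    (hfib : ∀ x x', π x = π x' ↔ x ∈ MulAction.orbit H x') (φ : X → X)
    (ψ : Y → Y) (hψ : ∀ x, ψ (π x) = π (φ x)) :
    Nat.card H * Nat.card {y // ψ y = y} = ∑ᶠ h : H, Nat.card {x // φ x = h • x} := by
  classical
  have := Fintype.ofFinite H
  have := Fintype.ofFinite X
  have : Finite Y := Finite.of_surjective π hπ
  have := Fintype.ofFinite Y
  have h1 : ∑ᶠ h : H, Nat.card {x // φ x = h • x} =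
      ∑ x, Nat.card {h : H // h • x = φ x} := by
    rw [finsum_eq_sum_of_fintype]
    simp only [Nat.card_eq_fintype_card, Fintype.card_subtype, Finset.card_filter]
    rw [Finset.sum_comm]
    simp only [eq_comm]
  have h2 : ∀ x, Nat.card {h : H // h • x = φ x} =
      if ψ (π x) = π x then Nat.card (MulAction.stabilizer H x) else 0 := by
    intro x
    rw [hψ, hfib]
    split_ifs with h
    · obtain ⟨g, hg⟩ := h
      have hg : g • x = φ x := hg
      refine Nat.card_congr
        { toFun := fun h => ⟨g⁻¹ * h.1, ?_⟩
          invFun := fun h => ⟨g * h.1, ?_⟩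
          left_inv := fun h => by simp
          right_inv := fun h => by simp }
      · rw [MulAction.mem_stabilizer_iff, mul_smul, h.2, ← hg, inv_smul_smul]
      · rw [mul_smul, h.2, hg]
    · rw [Nat.card_eq_zero]
      left
      exact ⟨fun g => h ⟨g.1, g.2⟩⟩
  rw [h1, Finset.sum_congr rfl fun x _ => h2 x, ← Finset.sum_fiberwise (g := π)]
  have h3 : ∀ y : Y, ∑ x with π x = y,
      (if ψ (π x) = π x then Nat.card (MulAction.stabilizer H x) else 0) =
      if ψ y = y then Nat.card H else 0 := by
    intro y
    obtain ⟨x₀, rfl⟩ := hπ y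
    rw [← MulAction.sum_card_stabilizer_orbit x₀, finsum_eq_sum_of_fintype]
    split_ifs with h
    · rw [Finset.sum_congr rfl (g := fun x => Nat.card (MulAction.stabilizer H x))
        (fun x hx => by rw [(Finset.mem_filter.mp hx).2, if_pos h])]
      exact Finset.sum_subtype _ (by simp [hfib]) _
    · exact Finset.sum_eq_zero fun x hx => by rw [(Finset.mem_filter.mp hx).2, if_neg h]
  rw [Finset.sum_congr rfl fun y _ => h3 y, ← Finset.sum_filter, Finset.sum_const, smul_eq_mul,
    Nat.card_eq_fintype_card (α := {y // ψ y = y}), Fintype.card_subtype, mul_comm]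

section Homs

variable {A B Ω : Type*} [CommRing A] [CommRing B] [Algebra A B] [Field Ω]
  {H : Type*} [Group H] [Finite H] [MulSemiringAction H B] [Algebra.IsInvariant A B H]

theorem exists_smul_of_comp_algebraMap_eq (f g : B →+* Ω)
    (h : f.comp (algebraMap A B) = g.comp (algebraMap A B)) :
    ∃ σ : H, ∀ b, g b = f (σ • b) := by
  classical
  have := Fintype.ofFinite H
  by_contra! hne
  choose b hb using hne
  let ε := Fintype.equivFin H
  let β : Polynomial B := ∑ τ, Polynomial.monomial (ε τ : ℕ) (b τ)
  have hcoeff : ∀ σ, β.coeff (ε σ) = b σ := by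
    intro σ
    simp only [β, Polynomial.finsetSum_coeff, Polynomial.coeff_monomial]
    rw [Finset.sum_eq_single σ]
    · simp
    · intro τ _ hτ
      rw [if_neg]
      intro h
      exact hτ (ε.injective (Fin.ext h))
    · simp
  let P := MulSemiringAction.charpoly H β
  have hP : P.map (Polynomial.mapRingHom f) = P.map (Polynomial.mapRingHom g) := by
    ext n m
    simp only [Polynomial.coeff_map, Polynomial.coe_mapRingHom]
    have hinv : ∀ σ : H, σ • (P.coeff n).coeff m = (P.coeff n).coeff m := by
      intro σ
      rw [← Polynomial.coeff_smul, MulSemiringAction.smul_coeff_charpoly]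
    obtain ⟨a, ha⟩ := Algebra.IsInvariant.isInvariant (A := A) (G := H) _ hinv
    rw [← ha]
    exact RingHom.congr_fun h a
  have h0 : (P.map (Polynomial.mapRingHom g)).eval (β.map g) = 0 := by
    rw [← Polynomial.coe_mapRingHom, Polynomial.eval_map_apply,
      MulSemiringAction.eval_charpoly, map_zero]
  rw [← hP] at h0
  simp only [P] at h0
  rw [MulSemiringAction.charpoly_eq, Polynomial.map_prod, Polynomial.eval_prod,
    Finset.prod_eq_zero_iff] at h0
  obtain ⟨σ, -, hσ⟩ := h0
  rw [Polynomial.map_sub, Polynomial.map_X, Polynomial.map_C, Polynomial.eval_sub,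
    Polynomial.eval_X, Polynomial.eval_C, sub_eq_zero] at hσ
  apply hb σ
  have := congrArg (fun p => p.coeff (ε σ)) hσ
  simpa [hcoeff] using this

theorem exists_comp_algebraMap_eq [Algebra.IsIntegral A B] [IsDomain B]
    [FaithfulSMul A B] [IsAlgClosed Ω]
    (x : A →+* Ω) : ∃ f : B →+* Ω, f.comp (algebraMap A B) = x := by
  have := RingHom.ker_isPrime x
  obtain ⟨Q, hQ, hQP⟩ := Ideal.exists_ideal_over_prime_of_isIntegral_of_isDomain (S := B)
    (RingHom.ker x) (by
      rw [(RingHom.injective_iff_ker_eq_bot _).mp (FaithfulSMul.algebraMap_injective A B)]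
      exact bot_le)
  have : Q.LiesOver (RingHom.ker x) := ⟨hQP.symm⟩
  let : Algebra (A ⧸ RingHom.ker x) Ω := (RingHom.kerLift x).toAlgebra
  have hf : FaithfulSMul (A ⧸ RingHom.ker x) Ω :=
    (faithfulSMul_iff_algebraMap_injective _ _).mpr (RingHom.kerLift_injective x)
  have : Module.IsTorsionFree (A ⧸ RingHom.ker x) (B ⧸ Q) :=
    Module.isTorsionFree_iff_algebraMap_injective.mpr
      ((faithfulSMul_iff_algebraMap_injective _ _).mp (Ideal.Quotient.instFaithfulSMul _ _))
  let g : B ⧸ Q →ₐ[A ⧸ RingHom.ker x] Ω := IsAlgClosed.lift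
  refine ⟨g.toRingHom.comp (Ideal.Quotient.mk Q), ?_⟩
  ext a
  exact g.commutes (Ideal.Quotient.mk _ a)

end Homs

/-- The number of ring homomorphisms to an algebraic closure of `𝔽_p` taking values in the field
with `p ^ m` elements. -/
noncomputable def frobHomCount (p m : ℕ) [Fact p.Prime] (R : Type*) [CommRing R] : ℕ :=
  Nat.card {x : R →+* AlgebraicClosure (ZMod p) // ∀ a, x a ^ p ^ m = x a}

/-- The number of ring homomorphisms to an algebraic closure of `𝔽_p` on which `σ` acts as the
`m`-th power of Frobenius. -/
noncomputable def twistedFrobHomCount (p m : ℕ) [Fact p.Prime] (R : Type*) [CommRing R]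
    {G : Type*} [SMul G R] (σ : G) : ℕ :=
  Nat.card {x : R →+* AlgebraicClosure (ZMod p) // ∀ a, x a ^ p ^ m = x (σ • a)}

section

variable (p m : ℕ) [Fact p.Prime]

theorem twistedFrobHomCount_one (R : Type*) [CommRing R] {G : Type*} [Group G]
    [MulSemiringAction G R] : twistedFrobHomCount p m R (1 : G) = frobHomCount p m R := by
  simp [twistedFrobHomCount, frobHomCount]

theorem twistedFrobHomCount_conj (R : Type*) [CommRing R] {G : Type*} [Group G]
    [MulSemiringAction G R] (σ τ : G) :
    twistedFrobHomCount p m R (τ * σ * τ⁻¹) = twistedFrobHomCount p m R σ := by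
  refine Nat.card_congr
    { toFun := fun x => ⟨x.1.comp (MulSemiringAction.toRingHom G R τ), fun a => ?_⟩
      invFun := fun x => ⟨x.1.comp (MulSemiringAction.toRingHom G R τ⁻¹), fun a => ?_⟩
      left_inv := fun x => ?_
      right_inv := fun x => ?_ }
  · simp [x.2, mul_smul]
  · simp [x.2, mul_smul]
  · ext; simp
  · ext; simp

theorem card_mul_frobHomCount (E L G : Type*) [Field E] [NumberField E] [Field L] [NumberField L]
    [Algebra E L] [Group G] [Finite G] [MulSemiringAction G L] [IsGaloisGroup G E L] :
    Nat.card G * frobHomCount p m (𝓞 E) = ∑ᶠ σ : G, twistedFrobHomCount p m (𝓞 L) σ := by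
  set Ω := AlgebraicClosure (ZMod p)
  let act : MulAction G (𝓞 L →+* Ω) :=
    { smul := fun σ x => x.comp (MulSemiringAction.toRingHom G (𝓞 L) σ⁻¹)
      one_smul := fun x => by
        ext a
        change x ((1 : G)⁻¹ • a) = x a
        simp
      mul_smul := fun σ τ x => by
        ext a
        change x ((σ * τ)⁻¹ • a) = x (τ⁻¹ • σ⁻¹ • a)
        rw [mul_inv_rev, mul_smul] }
  have hact : ∀ (σ : G) (x : 𝓞 L →+* Ω) a, (σ • x) a = x (σ⁻¹ • a) := fun _ _ _ => rfl
  have : Finite (𝓞 L →+* Ω) :=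
    Finite.of_injective (β := 𝓞 L →ₐ[ℤ] Ω) RingHom.toIntAlgHom fun x y h =>
      RingHom.ext fun a => DFunLike.congr_fun h a
  have key := MulAction.card_mul_card_fixed_quotient (H := G)
    (π := fun x : 𝓞 L →+* Ω => x.comp (algebraMap (𝓞 E) (𝓞 L)))
    (fun x => exists_comp_algebraMap_eq x) (fun x x' => ?_)
    (fun x => (iterateFrobenius Ω p m).comp x) (fun x => (iterateFrobenius Ω p m).comp x)
    (fun x => rfl)
  · rw [frobHomCount]
    convert key using 1
    · congr 1
      refine Nat.card_congr (Equiv.subtypeEquivRight fun x => ?_)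
      simp [RingHom.ext_iff, iterateFrobenius_def]
    · rw [← finsum_comp_equiv (Equiv.inv G)]
      refine finsum_congr fun σ => Nat.card_congr (Equiv.subtypeEquivRight fun x => ?_)
      simp [RingHom.ext_iff, iterateFrobenius_def, hact]
  · constructor
    · intro h
      obtain ⟨σ, hσ⟩ := exists_smul_of_comp_algebraMap_eq (H := G) x' x h.symm
      exact ⟨σ⁻¹, by ext a; simp [hact, hσ]⟩
    · rintro ⟨σ, rfl⟩
      ext a
      simp [hact]

end

theorem finsum_comap_mulEquiv {G D α : Type*} [Group G] [Group D] [AddCommMonoid α] (e : G ≃* D)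
    (S : Subgroup D) (c : G → α) :
    ∑ᶠ g : S.comap e.toMonoidHom, c g = ∑ᶠ d : S, c (e.symm d) := by
  let f : S.comap e.toMonoidHom ≃ S := e.toEquiv.subtypeEquiv fun _ => Iff.rfl
  rw [← finsum_comp_equiv f]
  exact finsum_congr fun g => congrArg c (e.symm_apply_apply g).symm

theorem finsum_const_eq_card {G : Type*} [Finite G] : ∑ᶠ _ : G, (1 : ℕ) = Nat.card G := by
  have := Fintype.ofFinite G
  simp [finsum_eq_sum_of_fintype]

theorem average_relation_of_mulEquiv_dihedralGroup {q : ℕ} [NeZero q] (hq : Odd q) {G R : Type*}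
    [Group G] [AddCommMonoid R] [IsAddTorsionFree R] (e : G ≃* DihedralGroup q) (c : G → R)
    (hc : ∀ g h, c (h * g * h⁻¹) = c g) {a d g s : R} (ha : a = c 1)
    (hd : Nat.card G • d = ∑ᶠ x, c x)
    (hg : Nat.card ((Subgroup.closure {(r 1 : DihedralGroup q)}).comap e.toMonoidHom) • g =
      ∑ᶠ x : (Subgroup.closure {(r 1 : DihedralGroup q)}).comap e.toMonoidHom, c x)
    (hs : Nat.card ((Subgroup.closure {(sr 0 : DihedralGroup q)}).comap e.toMonoidHom) • s =
      ∑ᶠ x : (Subgroup.closure {(sr 0 : DihedralGroup q)}).comap e.toMonoidHom, c x) :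
    a + 2 • d = g + 2 • s := by
  have : Finite G := Finite.of_equiv _ e.symm.toEquiv
  rw [← finsum_const_eq_card, finsum_comap_mulEquiv e _ (fun _ => 1),
    finsum_comap_mulEquiv] at hg hs
  rw [Subgroup.sum_closure_r (fun _ => 1), Subgroup.sum_closure_r (fun x => c (e.symm x))] at hg
  rw [Subgroup.sum_closure_sr (fun _ => 1), Subgroup.sum_closure_sr (fun x => c (e.symm x))] at hs
  rw [← finsum_comp_equiv e.symm.toEquiv, Nat.card_congr e.toEquiv, DihedralGroup.nat_card,
    finsum_eq_sum_of_fintype] at hd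
  refine DihedralGroup.average_relation hq (fun x => c (e.symm x)) (fun x y => ?_)
    (by simpa using ha)
    hd (by simpa using hg) (by simpa using hs)
  simp only [map_mul, map_inv, hc]

theorem isGaloisGroup_of_eq_fixedField {k L : Type*} [Field k] [Field L] [Algebra k L]
    [IsGalois k L] {F : IntermediateField k L} {S : Subgroup (L ≃ₐ[k] L)}
    (hF : F = fixedField S) : IsGaloisGroup S F L :=
  IsGaloisGroup.of_fixedPoints_eq _ k L S F hF.symm

/-- `L/k` is Galois with dihedral group of order `2 * q`, and `F`, `K` are the fixed fields of the
rotation subgroup and of a reflection. -/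
structure IsDihedralTower (q : ℕ) {k L : Type*} [Field k] [Field L] [Algebra k L]
    (e : (L ≃ₐ[k] L) ≃* DihedralGroup q) (F K : IntermediateField k L) : Prop where
  odd : Odd q
  eqF : F = fixedField ((Subgroup.closure {(r 1 : DihedralGroup q)}).comap e.toMonoidHom)
  eqK : K = fixedField ((Subgroup.closure {(sr 0 : DihedralGroup q)}).comap e.toMonoidHom)

theorem IsDihedralTower.frobHomCount_relation {q : ℕ} [NeZero q]
    {k L : Type*} [Field k] [Field L] [NumberField k] [NumberField L]
    [Algebra k L] [IsGalois k L] {e : (L ≃ₐ[k] L) ≃* DihedralGroup q} {F K : IntermediateField k L}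
    (h : IsDihedralTower q e F K) (p m : ℕ) [Fact p.Prime] :
    frobHomCount p m (𝓞 L) + 2 * frobHomCount p m (𝓞 k) =
      frobHomCount p m (𝓞 F) + 2 * frobHomCount p m (𝓞 K) := by
  have := isGaloisGroup_of_eq_fixedField h.eqF
  have := isGaloisGroup_of_eq_fixedField h.eqK
  have : Finite (L ≃ₐ[k] L) := Finite.of_equiv _ e.symm.toEquiv
  exact average_relation_of_mulEquiv_dihedralGroup h.odd e (twistedFrobHomCount p m (𝓞 L))
    (twistedFrobHomCount_conj p m (𝓞 L)) (twistedFrobHomCount_one p m (𝓞 L)).symm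
    (card_mul_frobHomCount p m k L _) (card_mul_frobHomCount p m F L _)
    (card_mul_frobHomCount p m K L _)

theorem frobHomCount_field (p m : ℕ) [Fact p.Prime] (hm : m ≠ 0) (κ : Type*) [Field κ]
    [Finite κ] :
    frobHomCount p m κ = ∑ d ∈ m.divisors, if Nat.card κ = p ^ d then d else 0 := by
  have hp := (Fact.out : p.Prime)
  have := Fintype.ofFinite κ
  by_cases hκ : CharP κ p
  · have : Algebra (ZMod p) κ := ZMod.algebra κ p
    have hcard : Nat.card κ = p ^ Module.finrank (ZMod p) κ := by
      rw [Module.natCard_eq_pow_finrank (K := ZMod p), Nat.card_zmod]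
    have hiff : Module.finrank (ZMod p) κ ∣ m ↔ ∀ a : κ, a ^ p ^ m = a := by
      rw [← FiniteField.orderOf_frobeniusAlgHom, orderOf_dvd_iff_pow_eq_one]
      simp only [DFunLike.ext_iff, AlgHom.coe_pow, FiniteField.coe_frobeniusAlgHom,
        pow_iterate, ZMod.card, AlgHom.one_apply]
    simp only [hcard, (Nat.pow_right_injective hp.two_le).eq_iff]
    rw [Finset.sum_ite_eq]
    have hmem : Module.finrank (ZMod p) κ ∈ m.divisors ↔ ∀ a : κ, a ^ p ^ m = a := by
      rw [Nat.mem_divisors, ← hiff, and_iff_left hm]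
    have hx : ∀ x : κ →+* AlgebraicClosure (ZMod p),
        (∀ a, x a ^ p ^ m = x a) ↔ ∀ a : κ, a ^ p ^ m = a := fun x => by
      simp only [← map_pow, x.injective.eq_iff]
    simp only [frobHomCount, hx]
    split_ifs with h
    · rw [← AlgHom.card (ZMod p) κ (AlgebraicClosure (ZMod p)), ← Nat.card_eq_fintype_card]
      refine Nat.card_congr
        { toFun := fun x => ⟨x.1, fun a => ?_⟩
          invFun := fun x => ⟨x, hmem.mp h⟩
          left_inv := fun _ => rfl
          right_inv := fun _ => rfl }
      have := Subsingleton.elim (x.1.comp (algebraMap (ZMod p) κ)) (algebraMap _ _)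
      exact RingHom.congr_fun this a
    · rw [Nat.card_eq_zero]
      exact Or.inl ⟨fun x => h (hmem.mpr x.2)⟩
  · rw [frobHomCount, Finset.sum_eq_zero, Nat.card_eq_zero]
    · left
      refine ⟨fun x => hκ ?_⟩
      exact (x.1.charP_iff x.1.injective p).mpr inferInstance
    · intro d hd
      rw [if_neg]
      intro hc
      apply hκ
      have hd0 : d ≠ 0 := (Nat.pos_of_mem_divisors hd).ne'
      rw [Nat.card_eq_fintype_card] at hc
      obtain ⟨ℓ, hℓ⟩ := CharP.exists κ
      obtain ⟨n, hℓp, hn⟩ := FiniteField.card κ ℓ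
      rw [hn] at hc
      have : ℓ = p := by
        have h1 : ℓ ∣ p ^ d := hc ▸ dvd_pow_self _ n.ne_zero
        exact (Nat.prime_dvd_prime_iff_eq hℓp hp).mp (hℓp.dvd_of_dvd_pow h1)
      exact this ▸ hℓ

theorem frobHomCount_ringOfIntegers (p m : ℕ) [Fact p.Prime] (hm : m ≠ 0) (E : Type*) [Field E]
    [NumberField E] :
    frobHomCount p m (𝓞 E) = ∑ d ∈ m.divisors, d * primeCount E (p ^ d) := by
  have hp := (Fact.out : p.Prime)
  set Ω := AlgebraicClosure (ZMod p)
  have hker : ∀ x : 𝓞 E →+* Ω, RingHom.ker x ≠ ⊥ := by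
    intro x h
    have : (p : 𝓞 E) ∈ RingHom.ker x := by
      rw [RingHom.mem_ker, map_natCast, CharP.cast_eq_zero]
    rw [h, Ideal.mem_bot] at this
    exact hp.ne_zero (by exact_mod_cast this)
  let V := IsDedekindDomain.HeightOneSpectrum (𝓞 E)
  let κer : (𝓞 E →+* Ω) → V := fun x => ⟨RingHom.ker x, RingHom.ker_isPrime x, hker x⟩
  let X := {x : 𝓞 E →+* Ω // ∀ a, x a ^ p ^ m = x a}
  have hfin : Finite X :=
    Finite.of_injective (β := 𝓞 E →ₐ[ℤ] Ω) (fun x => RingHom.toIntAlgHom x.1) fun x y h =>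
      Subtype.ext (RingHom.ext fun a => DFunLike.congr_fun h a)
  have hfib : ∀ v : V, Nat.card {x : X // κer x.1 = v} =
      ∑ d ∈ m.divisors, if Ideal.absNorm v.asIdeal = p ^ d then d else 0 := by
    intro v
    have hmax : v.asIdeal.IsMaximal := v.isMaximal
    let _ : Field (𝓞 E ⧸ v.asIdeal) := Ideal.Quotient.field _
    have : Finite (𝓞 E ⧸ v.asIdeal) := Ideal.finiteQuotientOfFreeOfNeBot _ v.ne_bot
    rw [Ideal.absNorm_apply, Submodule.cardQuot_apply]
    refine Eq.trans ?_ (frobHomCount_field p m hm (𝓞 E ⧸ v.asIdeal))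
    refine Nat.card_congr
      { toFun := fun x => ⟨Ideal.Quotient.lift v.asIdeal x.1.1 (fun a ha => ?_), fun a => ?_⟩
        invFun := fun y => ⟨⟨y.1.comp (Ideal.Quotient.mk _), fun a => y.2 _⟩, ?_⟩
        left_inv := fun x => ?_
        right_inv := fun y => ?_ }
    · have := congrArg IsDedekindDomain.HeightOneSpectrum.asIdeal x.2
      rw [← this] at ha
      exact ha
    · obtain ⟨a, rfl⟩ := Ideal.Quotient.mk_surjective a
      exact x.1.2 a
    · ext a
      change (y.1.comp (Ideal.Quotient.mk _)) a = 0 ↔ _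
      rw [RingHom.comp_apply, map_eq_zero, Ideal.Quotient.eq_zero_iff_mem]
    · rfl
    · apply Subtype.ext
      ext a
      rfl
  let S : Finset ℕ := m.divisors
  have hfinV : Set.Finite {v : V | ∃ d ∈ S, Ideal.absNorm v.asIdeal = p ^ d} := by
    have : {v : V | ∃ d ∈ S, Ideal.absNorm v.asIdeal = p ^ d} =
        ⋃ d ∈ S, {v : V | Ideal.absNorm v.asIdeal = p ^ d} := by ext; simp
    rw [this]
    refine Set.Finite.biUnion S.finite_toSet fun d _ => ?_
    have : Finite {v : V | Ideal.absNorm v.asIdeal = p ^ d} := finite_primes_of_norm E (p ^ d)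
    exact Set.toFinite {v : V | Ideal.absNorm v.asIdeal = p ^ d}
  set T := hfinV.toFinset
  have := Fintype.ofFinite X
  classical
  have hX : ∀ x ∈ (Finset.univ : Finset X), κer x.1 ∈ T := by
    intro x _
    by_contra hx
    have h0 : Nat.card {y : X // κer y.1 = κer x.1} = 0 := by
      rw [hfib]
      refine Finset.sum_eq_zero fun d hd => if_neg fun h => hx ?_
      rw [Set.Finite.mem_toFinset]
      exact ⟨d, hd, h⟩
    rw [Nat.card_eq_zero] at h0
    rcases h0 with h0 | h0
    · exact h0.elim ⟨x, rfl⟩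
    · exact not_finite_iff_infinite.mpr h0 inferInstance
  have h1 : Nat.card X = ∑ v ∈ T, Nat.card {x : X // κer x.1 = v} := by
    rw [Nat.card_eq_fintype_card, ← Finset.card_univ, Finset.card_eq_sum_card_fiberwise hX]
    refine Finset.sum_congr rfl fun v _ => ?_
    rw [Nat.card_eq_fintype_card, Fintype.card_subtype]
  rw [frobHomCount, h1, Finset.sum_congr rfl fun v _ => hfib v, Finset.sum_comm]
  refine Finset.sum_congr rfl fun d hd => ?_
  rw [← Finset.sum_filter, Finset.sum_const, smul_eq_mul, mul_comm]
  congr 1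
  rw [primeCount, ← Nat.card_eq_finsetCard]
  refine Nat.card_congr (Equiv.subtypeEquivRight fun v => ?_)
  rw [Finset.mem_filter, Set.Finite.mem_toFinset]
  exact ⟨fun h => h.2, fun h => ⟨⟨d, hd, h⟩, h⟩⟩

theorem primeCount_eq_zero (E : Type*) [Field E] [NumberField E] {n : ℕ} (hn : ¬ IsPrimePow n) :
    primeCount E n = 0 := by
  rw [primeCount, Nat.card_eq_zero]
  left
  refine ⟨fun v => hn ?_⟩
  obtain ⟨v, rfl⟩ := v
  have hmax : v.asIdeal.IsMaximal := v.isMaximal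
  let _ : Field (𝓞 E ⧸ v.asIdeal) := Ideal.Quotient.field _
  have : Finite (𝓞 E ⧸ v.asIdeal) := Ideal.finiteQuotientOfFreeOfNeBot _ v.ne_bot
  have := Fintype.ofFinite (𝓞 E ⧸ v.asIdeal)
  rw [Ideal.absNorm_apply, Submodule.cardQuot_apply, Nat.card_eq_fintype_card]
  exact FiniteField.isPrimePow_card _

theorem IsDihedralTower.primeCount_relation {q : ℕ} [NeZero q]
    {k L : Type*} [Field k] [Field L] [NumberField k] [NumberField L]
    [Algebra k L] [IsGalois k L] {e : (L ≃ₐ[k] L) ≃* DihedralGroup q} {F K : IntermediateField k L}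
    (h : IsDihedralTower q e F K) (n : ℕ) :
    primeCount L n + 2 * primeCount k n = primeCount F n + 2 * primeCount K n := by
  by_cases hn : IsPrimePow n
  · obtain ⟨p, m, hp, hm, rfl⟩ := hn
    have : Fact p.Prime := ⟨hp.nat_prime⟩
    induction m using Nat.strong_induction_on with
    | _ m ih =>
      have key := h.frobHomCount_relation p m
      simp only [frobHomCount_ringOfIntegers p m hm.ne', ← Nat.insert_self_properDivisors hm.ne',
        Finset.sum_insert Nat.self_notMem_properDivisors] at key
      have hprop : ∑ d ∈ m.properDivisors, d * primeCount L (p ^ d) +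
          2 * ∑ d ∈ m.properDivisors, d * primeCount k (p ^ d) =
          ∑ d ∈ m.properDivisors, d * primeCount F (p ^ d) +
          2 * ∑ d ∈ m.properDivisors, d * primeCount K (p ^ d) := by
        simp only [Finset.mul_sum, ← Finset.sum_add_distrib]
        refine Finset.sum_congr rfl fun d hd => ?_
        have := ih d (Nat.mem_properDivisors.mp hd).2 (Nat.pos_of_mem_properDivisors hd)
        linear_combination d * this
      apply Nat.eq_of_mul_eq_mul_left hm
      linarith
  · simp [primeCount_eq_zero _ hn]

theorem IsDihedralTower.residue_relation {q : ℕ} [NeZero q]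
    {k L : Type*} [Field k] [Field L] [NumberField k] [NumberField L]
    [Algebra k L] [IsGalois k L] {e : (L ≃ₐ[k] L) ≃* DihedralGroup q} {F K : IntermediateField k L}
    (h : IsDihedralTower q e F K) :
    dedekindZeta_residue L * dedekindZeta_residue k ^ 2 =
      dedekindZeta_residue F * dedekindZeta_residue K ^ 2 :=
  dedekindZeta_residue_relation L k F K h.primeCount_relation

theorem Ideal.mul_eq_self_of_forall_isMaximal {B : Type*} [CommRing B] [IsDedekindDomain B]
    {P I : Ideal B} [hP : P.IsMaximal] (hP0 : P ≠ ⊥) (hI : I ≤ P) (hI2 : ¬ I ≤ P ^ 2)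
    (hmax : ∀ Q : Ideal B, Q.IsMaximal → I ≤ Q → Q = P) : I = P := by
  obtain ⟨J, rfl⟩ := Ideal.dvd_iff_le.mpr hI
  suffices J = ⊤ by rw [this, Ideal.mul_top]
  by_contra hJ
  obtain ⟨Q, hQ, hJQ⟩ := Ideal.exists_le_maximal J hJ
  obtain rfl := hmax Q hQ (Ideal.mul_le_right.trans hJQ)
  exact hI2 (by rw [pow_two]; exact Ideal.mul_mono_right hJQ)

/-- A generator of the residue field at `P` which reduces a uniformizer from a polynomial
expression and is divisible by all other primes above a given prime. -/
theorem exists_residue_generator {B : Type*} [CommRing B] [IsDedekindDomain B]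
    {P I : Ideal B} [hP : P.IsMaximal] [Finite (B ⧸ P)] (hP0 : P ≠ ⊥) (hI : I ≠ ⊥) :
    ∃ (α : B) (N : ℕ), α ∉ P ∧ (∀ Q : Ideal B, Q.IsMaximal → I ≤ Q → Q ≠ P → α ∈ Q) ∧
      (∀ b : B, b ∉ P → ∃ n : ℕ, b - α ^ n ∈ P) ∧ α ^ N - α ∈ P ∧ α ^ N - α ∉ P ^ 2 := by
  let _ : Field (B ⧸ P) := Ideal.Quotient.field P
  have := Fintype.ofFinite (B ⧸ P)
  obtain ⟨g, hg⟩ := IsCyclic.exists_generator (α := (B ⧸ P)ˣ)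
  obtain ⟨α₀, hα₀⟩ := Ideal.Quotient.mk_surjective (g : B ⧸ P)
  obtain ⟨π, hπ, hπ2⟩ : ∃ π ∈ P, π ∉ P ^ 2 := by
    by_contra! h
    have h1 : P ^ 1 ≤ P ^ 2 := by rwa [pow_one]
    exact absurd h1 (not_le_of_gt (Ideal.pow_right_strictAnti P hP0 hP.ne_top one_lt_two))
  set N := Nat.card (B ⧸ P) with hN
  have hfrob : ∀ x : B, x ^ N - x ∈ P := fun x => by
    rw [← Ideal.Quotient.eq, map_pow, hN, Nat.card_eq_fintype_card, FiniteField.pow_card]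
  have hNP : (N : B) ∈ P := by
    rw [← Ideal.Quotient.eq_zero_iff_mem, map_natCast, hN, Nat.card_eq_fintype_card,
      FiniteField.cast_card_eq_zero]
  obtain ⟨α₁, h1, h2⟩ : ∃ α₁, α₁ - α₀ ∈ P ∧ α₁ ^ N - α₁ ∉ P ^ 2 := by
    by_cases h : α₀ ^ N - α₀ ∈ P ^ 2
    · refine ⟨α₀ + π, by simpa using hπ, fun h' => hπ2 ?_⟩
      have h3 : (α₀ + π) ^ N - α₀ ^ N ∈ P ^ 2 := by
        obtain ⟨k, hk⟩ := Polynomial.binomExpansion (Polynomial.X ^ N) α₀ π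
        simp only [Polynomial.eval_pow, Polynomial.eval_X, Polynomial.derivative_X_pow,
          Polynomial.eval_mul, Polynomial.eval_C] at hk
        rw [hk, show α₀ ^ N + N * α₀ ^ (N - 1) * π + k * π ^ 2 - α₀ ^ N =
          α₀ ^ (N - 1) * (N * π) + k * π ^ 2 by ring]
        refine Ideal.add_mem _ (Ideal.mul_mem_left _ _ ?_) (Ideal.mul_mem_left _ _ ?_)
        · rw [pow_two]; exact Ideal.mul_mem_mul hNP hπ
        · exact Ideal.pow_mem_pow hπ 2
      have := Ideal.sub_mem _ (Ideal.add_mem _ h h3) h'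
      convert this using 1; ring
    · exact ⟨α₀, by simp, h⟩
  obtain ⟨e, J, hJ, hIJ⟩ : ∃ e J, ¬ P ∣ J ∧ I = P ^ e * J := by
    have hfin : FiniteMultiplicity P I :=
      FiniteMultiplicity.of_not_isUnit (by rw [Ideal.isUnit_iff]; exact hP.ne_top) hI
    obtain ⟨J, h, h'⟩ := hfin.exists_eq_pow_mul_and_not_dvd
    exact ⟨_, J, h', h⟩
  have hcop : P ^ 2 ⊔ J = ⊤ := by
    by_contra h
    obtain ⟨Q, hQ, hle⟩ := Ideal.exists_le_maximal _ h
    have hPQ : P ≤ Q := hQ.isPrime.le_of_pow_le (le_sup_left.trans hle)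
    obtain rfl := hP.eq_of_le hQ.ne_top hPQ
    exact hJ (Ideal.dvd_iff_le.mpr (le_sup_right.trans hle))
  obtain ⟨x, hx, α, hα, hxα⟩ := Submodule.mem_sup.mp (hcop ▸ Submodule.mem_top : α₁ ∈ P ^ 2 ⊔ J)
  have hαα₁ : Ideal.Quotient.mk (P ^ 2) α = Ideal.Quotient.mk (P ^ 2) α₁ := by
    rw [eq_comm, Ideal.Quotient.eq, ← hxα]; simpa using hx
  have hαg : Ideal.Quotient.mk P α = g := by
    rw [← hα₀, Ideal.Quotient.eq]
    have := Ideal.sub_mem _ h1 (Ideal.pow_le_self two_ne_zero hx)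
    convert this using 1
    rw [← hxα]; ring
  refine ⟨α, N, ?_, ?_, ?_, hfrob α, ?_⟩
  · rw [← Ideal.Quotient.eq_zero_iff_mem, hαg]; exact g.ne_zero
  · intro Q hQ hIQ hQP
    rw [hIJ] at hIQ
    rcases hQ.isPrime.mul_le.mp hIQ with h | h
    · exact absurd (hP.eq_of_le hQ.ne_top (hQ.isPrime.le_of_pow_le h)).symm hQP
    · exact h hα
  · intro b hb
    have hb' : Ideal.Quotient.mk P b ≠ 0 := by rwa [Ne, Ideal.Quotient.eq_zero_iff_mem]
    obtain ⟨n, hn⟩ := mem_powers_iff_mem_zpowers.mpr (hg (Units.mk0 _ hb'))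
    refine ⟨n, ?_⟩
    rw [← Ideal.Quotient.eq, map_pow, hαg]
    have := congrArg Units.val hn
    simpa using this.symm
  · rwa [← Ideal.Quotient.eq_zero_iff_mem, map_sub, map_pow, hαα₁, ← map_pow, ← map_sub,
      Ideal.Quotient.eq_zero_iff_mem]

theorem exists_not_conductor_le {A B : Type*} [CommRing A] [CommRing B] [IsDedekindDomain B]
    [Algebra A B] [Module.Finite A B] [FaithfulSMul A B] (P : Ideal B) [hP : P.IsMaximal]
    [Finite (B ⧸ P)]
    (hP0 : P ≠ ⊥) (hA : P.under A ≠ ⊥) :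
    ∃ α : B, ¬ conductor A α ≤ P := by
  have hI : (P.under A).map (algebraMap A B) ≠ ⊥ := by
    rwa [Ne, Ideal.map_eq_bot_iff_of_injective (FaithfulSMul.algebraMap_injective A B)]
  obtain ⟨α, N, hαP, hαQ, hgen, hg, hg2⟩ := exists_residue_generator hP0 hI
  refine ⟨α, ?_⟩
  set C := Algebra.adjoin A {α} with hC
  have hαC : α ∈ C := Algebra.self_mem_adjoin_singleton A α
  set m : Ideal C := P.comap (algebraMap C B) with hm
  have hxint : Algebra.IsIntegral A B := inferInstance
  have : Algebra.IsIntegral C B := ⟨fun b => (hxint.isIntegral b).tower_top⟩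
  have : Module.Finite C B := Module.Finite.of_restrictScalars_finite A C B
  have hmmax : m.IsMaximal := Ideal.isMaximal_comap_of_isIntegral_of_isMaximal P
  have hmP : m.map (algebraMap C B) = P := by
    refine Ideal.mul_eq_self_of_forall_isMaximal hP0 Ideal.map_comap_le (fun h => hg2 ?_) ?_
    · apply h
      exact Ideal.mem_map_of_mem (algebraMap C B)
        (show (⟨α, hαC⟩ ^ N - ⟨α, hαC⟩ : C) ∈ m from hg)
    · intro Q hQ hle
      by_contra hne
      have h1 : (P.under A).map (algebraMap A B) ≤ Q := by
        refine le_trans ?_ hle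
        rw [Ideal.map_le_iff_le_comap]
        intro a ha
        exact Ideal.mem_map_of_mem (algebraMap C B) (show algebraMap A C a ∈ m from ha)
      have h2 := hαQ Q hQ h1 hne
      have h3 : m ≤ Q.comap (algebraMap C B) := Ideal.map_le_iff_le_comap.mp hle
      have h4 : Q.comap (algebraMap C B) ≠ ⊤ := Ideal.comap_ne_top _ hQ.ne_top
      have h5 := hmmax.eq_of_le h4 h3
      have h6 : (⟨α, hαC⟩ : C) ∈ Q.comap (algebraMap C B) := h2
      rw [← h5] at h6
      exact hαP h6
  let R : Submodule C B := LinearMap.range (Algebra.linearMap C B)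
  have hR : ∀ x : B, x ∈ R ↔ x ∈ C := fun x =>
    ⟨fun ⟨c, hc⟩ => hc ▸ c.2, fun h => ⟨⟨x, h⟩, rfl⟩⟩
  have hsmul : (m • (⊤ : Submodule C B) : Submodule C B) = P.restrictScalars C := by
    rw [Ideal.smul_top_eq_map, hmP]
  have htop : (⊤ : Submodule C (B ⧸ R)) ≤ m • (⊤ : Submodule C (B ⧸ R)) := by
    rintro x -
    obtain ⟨b, rfl⟩ := R.mkQ_surjective x
    have hmap : m • (⊤ : Submodule C (B ⧸ R)) = (m • (⊤ : Submodule C B)).map R.mkQ := by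
      rw [Submodule.map_smul'', Submodule.map_top, Submodule.range_mkQ]
    rw [hmap, hsmul]
    by_cases hb : b ∈ P
    · exact ⟨b, hb, rfl⟩
    · obtain ⟨n, hn⟩ := hgen b hb
      refine ⟨b - α ^ n, hn, ?_⟩
      rw [map_sub, sub_eq_self, Submodule.mkQ_apply, Submodule.Quotient.mk_eq_zero, hR]
      exact pow_mem hαC n
  obtain ⟨u, hu1, hu⟩ := Submodule.exists_sub_one_mem_and_smul_eq_zero_of_fg_of_le_smul m
    (⊤ : Submodule C (B ⧸ R)) Module.Finite.fg_top htop
  intro hle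
  have huP : (u : B) ∈ P := hle <| by
    rw [mem_conductor_iff]
    intro b
    have := hu (R.mkQ b) trivial
    rw [← map_smul, Submodule.mkQ_apply, Submodule.Quotient.mk_eq_zero, hR] at this
    exact this
  have h1 : (1 : C) ∈ m := by
    have := m.sub_mem (show u ∈ m from huP) hu1
    simpa using this
  exact hmmax.ne_top ((Ideal.eq_top_iff_one _).mpr h1)

theorem IsGaloisGroup.smul_injective_of_adjoin_eq_top {E L H : Type*} [Field E] [Field L]
    [Algebra E L] [Group H] [MulSemiringAction H L] [IsGaloisGroup H E L] {x : L}
    (hx : Algebra.adjoin E {x} = ⊤) : Function.Injective fun σ : H => σ • x := by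
  intro σ τ h
  have : (MulSemiringAction.toAlgHom E L σ) = MulSemiringAction.toAlgHom E L τ :=
    AlgHom.ext_of_adjoin_eq_top hx (by rintro _ rfl; exact h)
  have : FaithfulSMul H L := IsGaloisGroup.faithful E
  exact eq_of_smul_eq_smul (α := L) fun a => AlgHom.congr_fun ‹_› a

theorem IsGaloisGroup.map_minpoly_eq_prod {E L H : Type*} [Field E] [Field L]
    [Algebra E L] [Group H] [Fintype H] [MulSemiringAction H L] [IsGaloisGroup H E L] {x : L}
    (hx : Algebra.adjoin E {x} = ⊤) :
    (minpoly E x).map (algebraMap E L) = ∏ σ : H, (Polynomial.X - Polynomial.C (σ • x)) := by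
  have := IsGaloisGroup.finiteDimensional H E L
  have hxint : IsIntegral E x := Algebra.IsIntegral.isIntegral x
  have hadj : IntermediateField.adjoin E {x} = ⊤ := by
    rw [← IntermediateField.toSubalgebra_inj,
      IntermediateField.adjoin_simple_toSubalgebra_of_isAlgebraic hxint.isAlgebraic, hx,
      IntermediateField.top_toSubalgebra]
  have hmon : (∏ σ : H, (Polynomial.X - Polynomial.C (σ • x))).Monic :=
    Polynomial.monic_prod_of_monic _ _ fun σ _ => Polynomial.monic_X_sub_C _
  refine (Polynomial.eq_of_monic_of_dvd_of_natDegree_le hmon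
    ((minpoly.monic hxint).map _) ?_ ?_)
  · refine Finset.prod_dvd_of_coprime (fun σ _ τ _ hστ => ?_) fun σ _ => ?_
    · exact Polynomial.isCoprime_X_sub_C_of_isUnit_sub
        (sub_ne_zero.mpr fun h => hστ (smul_injective_of_adjoin_eq_top hx h)).isUnit
    · rw [Polynomial.dvd_iff_isRoot, Polynomial.IsRoot, Polynomial.eval_map_algebraMap]
      have := Polynomial.aeval_algHom_apply (MulSemiringAction.toAlgHom E L σ) x (minpoly E x)
      rw [minpoly.aeval, map_zero] at this
      exact this
  · rw [Polynomial.natDegree_prod_of_monic _ _ fun σ _ => Polynomial.monic_X_sub_C _]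
    simp only [Polynomial.natDegree_X_sub_C, Finset.sum_const, smul_eq_mul, mul_one,
      Finset.card_univ, Polynomial.natDegree_map]
    rw [← IntermediateField.adjoin.finrank hxint, hadj, IntermediateField.finrank_top',
      ← IsGaloisGroup.card_eq_finrank H, Nat.card_eq_fintype_card]

theorem IsGaloisGroup.aeval_derivative_minpoly {E L H : Type*} [Field E] [Field L]
    [Algebra E L] [Group H] [Fintype H] [DecidableEq H] [MulSemiringAction H L]
    [IsGaloisGroup H E L] {x : L} (hx : Algebra.adjoin E {x} = ⊤) :
    Polynomial.aeval x (Polynomial.derivative (minpoly E x)) =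
      ∏ σ ∈ Finset.univ.erase (1 : H), (x - σ • x) := by
  rw [← Polynomial.eval_map_algebraMap, ← Polynomial.derivative_map, map_minpoly_eq_prod (H := H)
    hx,
    ← Finset.mul_prod_erase _ _ (Finset.mem_univ 1), Polynomial.derivative_mul]
  simp [Polynomial.eval_prod]

theorem adjoin_eq_top_of_conductor_ne_bot {A B E L : Type*} [CommRing A] [CommRing B] [Field E]
    [Field L] [Algebra A B] [Algebra A E] [Algebra A L] [Algebra B L] [Algebra E L]
    [IsScalarTower A B L] [IsScalarTower A E L] [IsFractionRing B L] [Algebra.IsAlgebraic E L]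
    [IsDomain B]
    {α : B} (h : conductor A α ≠ ⊥) : Algebra.adjoin E {algebraMap B L α} = ⊤ := by
  obtain ⟨u, hu, hu0⟩ := Submodule.exists_mem_ne_zero_of_ne_bot h
  have hinj := IsFractionRing.injective B L
  have hC : ∀ c ∈ Algebra.adjoin A {α},
      algebraMap B L c ∈ Algebra.adjoin E {algebraMap B L α} := by
    intro c hc
    have : IsScalarTower.toAlgHom A B L c ∈ Algebra.adjoin A {algebraMap B L α} := by
      have := AlgHom.map_adjoin_singleton (IsScalarTower.toAlgHom A B L) α
      exact (SetLike.ext_iff.mp this _).mp (Subalgebra.mem_map.mpr ⟨c, hc, rfl⟩)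
    refine Algebra.adjoin_induction (fun x hx => Algebra.subset_adjoin hx) (fun r => ?_)
      (fun _ _ _ _ h1 h2 => add_mem h1 h2) (fun _ _ _ _ h1 h2 => mul_mem h1 h2) this
    rw [IsScalarTower.algebraMap_apply A E L]
    exact Subalgebra.algebraMap_mem _ _
  have halg : IsAlgebraic E (algebraMap B L α) := Algebra.IsAlgebraic.isAlgebraic _
  rw [← IntermediateField.adjoin_simple_toSubalgebra_of_isAlgebraic halg] at hC ⊢
  rw [← IntermediateField.top_toSubalgebra, IntermediateField.toSubalgebra_inj, eq_top_iff]
  have hB : ∀ b : B, algebraMap B L b ∈ IntermediateField.adjoin E {algebraMap B L α} := by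
    intro b
    have h1 := hC _ (mem_conductor_iff.mp hu b)
    have h2 := hC _ (conductor_subset_adjoin hu)
    have h3 : algebraMap B L u ≠ 0 := by simpa using hu0
    have := div_mem (S := IntermediateField E L) h1 h2
    rwa [map_mul, mul_div_cancel_left₀ _ h3] at this
  rintro x -
  obtain ⟨a, b, -, rfl⟩ := IsFractionRing.div_surjective (A := B) x
  exact div_mem (hB a) (hB b)

theorem Ideal.le_of_forall_isMaximal {B : Type*} [CommRing B] {I J : Ideal B}
    (h : ∀ P : Ideal B, P.IsMaximal → ∃ u, u ∉ P ∧ ∀ x ∈ I, u * x ∈ J) : I ≤ J := by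
  intro x hx
  by_contra hxJ
  have htop : J.colon {x} ≠ ⊤ := fun ht => hxJ (by
    have : (1 : B) ∈ J.colon {x} := ht ▸ Submodule.mem_top
    rw [Submodule.mem_colon_singleton] at this
    simpa using this)
  obtain ⟨P, hP, hle⟩ := Ideal.exists_le_maximal _ htop
  obtain ⟨u, hu, hux⟩ := h P hP
  exact hu (hle (Submodule.mem_colon_singleton.mpr (hux x hx)))

/-- The ideal generated by the elements `σ • x - x`. -/
def smulSubIdeal {H : Type*} (B : Type*) [CommRing B] [SMul H B] (σ : H) : Ideal B :=
  Ideal.span (Set.range fun x : B => σ • x - x)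

theorem smul_sub_self_mem_smulSubIdeal {H B : Type*} [CommRing B] [SMul H B] (σ : H) (x : B) :
    σ • x - x ∈ smulSubIdeal B σ :=
  Ideal.subset_span ⟨x, rfl⟩

theorem span_singleton_mul_smulSubIdeal_le {A B H : Type*} [CommRing A] [CommRing B] [Algebra A B]
    [Group H] [MulSemiringAction H B] [SMulCommClass H A B] {α u : B} (hu : u ∈ conductor A α)
    (σ : H) : Ideal.span {u} * smulSubIdeal B σ ≤ Ideal.span {α - σ • α} := by
  have hC : ∀ c ∈ Algebra.adjoin A {α}, σ • c - c ∈ Ideal.span {α - σ • α} := by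
    intro c hc
    rw [Algebra.adjoin_singleton_eq_range_aeval] at hc
    obtain ⟨g, rfl⟩ := hc
    have h1 : σ • Polynomial.aeval α g = Polynomial.aeval (σ • α) g :=
      (Polynomial.aeval_algHom_apply (MulSemiringAction.toAlgHom A B σ) α g).symm
    change σ • Polynomial.aeval α g - Polynomial.aeval α g ∈ _
    rw [h1, Ideal.mem_span_singleton, ← neg_sub (σ • α), neg_dvd, Polynomial.aeval_def,
      Polynomial.aeval_def, Polynomial.eval₂_eq_eval_map, Polynomial.eval₂_eq_eval_map]
    exact Polynomial.sub_dvd_eval_sub _ _ _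
  rw [smulSubIdeal, Ideal.span_mul_span', Ideal.span_le]
  rintro _ ⟨v, hv, _, ⟨x, rfl⟩, rfl⟩
  rw [Set.mem_singleton_iff.mp hv]
  have h1 := hC _ (mem_conductor_iff.mp hu x)
  have h2 := hC _ (conductor_subset_adjoin hu)
  have h3 := Ideal.sub_mem _ h1 (Ideal.mul_mem_right (σ • x) _ h2)
  have h4 : σ • (u * x) - u * x - (σ • u - u) * σ • x = u * (σ • x - x) := by
    rw [smul_mul']
    ring
  rw [h4] at h3
  exact h3

/-- Hilbert's formula for the different. -/
theorem differentIdeal_eq_prod_smulSubIdeal (E L H : Type*) [Field E] [NumberField E] [Field L]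
    [NumberField L] [Algebra E L] [Group H] [Fintype H] [DecidableEq H] [MulSemiringAction H L]
    [IsGaloisGroup H E L] :
    differentIdeal (𝓞 E) (𝓞 L) = ∏ σ ∈ Finset.univ.erase (1 : H), smulSubIdeal (𝓞 L) σ := by
  have key : ∀ P : Ideal (𝓞 L), P.IsMaximal → ∃ (α u : 𝓞 L), u ∉ P ∧ u ∈ conductor (𝓞 E) α ∧
      conductor (𝓞 E) α * differentIdeal (𝓞 E) (𝓞 L) =
        ∏ σ ∈ Finset.univ.erase (1 : H), Ideal.span {α - σ • α} := by
    intro P hP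
    have hP0 : P ≠ ⊥ := Ring.ne_bot_of_isMaximal_of_not_isField hP
      (RingOfIntegers.not_isField L)
    have : Finite (𝓞 L ⧸ P) := Ideal.finiteQuotientOfFreeOfNeBot P hP0
    have hA : P.under (𝓞 E) ≠ ⊥ := Ideal.under_ne_bot (𝓞 E) hP0
    obtain ⟨α, hα⟩ := exists_not_conductor_le (A := 𝓞 E) P hP0 hA
    obtain ⟨u, hu, huP⟩ := SetLike.not_le_iff_exists.mp hα
    have hcond : conductor (𝓞 E) α ≠ ⊥ := fun h => hα (h ▸ bot_le)
    have htop : Algebra.adjoin E {algebraMap (𝓞 L) L α} = ⊤ :=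
      adjoin_eq_top_of_conductor_ne_bot hcond
    refine ⟨α, u, huP, hu, ?_⟩
    have := IsGaloisGroup.isGalois H E L
    rw [conductor_mul_differentIdeal (𝓞 E) E L α htop]
    have hxint : IsIntegral (𝓞 E) α := Algebra.IsIntegral.isIntegral α
    have hder := IsGaloisGroup.aeval_derivative_minpoly (H := H) htop
    have hmin := minpoly.isIntegrallyClosed_eq_field_fractions E L hxint
    rw [hmin, Polynomial.derivative_map, Polynomial.aeval_map_algebraMap,
      Polynomial.aeval_algebraMap_apply] at hder
    rw [Ideal.prod_span_singleton]
    congr 2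
    apply RingOfIntegers.coe_injective
    rw [hder, map_prod]
    rfl
  apply le_antisymm
  · refine Ideal.le_of_forall_isMaximal fun P hP => ?_
    obtain ⟨α, u, huP, hu, h⟩ := key P hP
    refine ⟨u, huP, fun x hx => ?_⟩
    have h1 := Ideal.mul_mem_mul hu hx
    rw [h] at h1
    have h2 : ∏ σ ∈ Finset.univ.erase (1 : H), Ideal.span {α - σ • α} ≤
        ∏ σ ∈ Finset.univ.erase (1 : H), smulSubIdeal (𝓞 L) σ :=
      Finset.prod_le_prod' fun σ _ => by
        rw [Ideal.span_singleton_le_iff_mem, ← neg_sub]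
        exact neg_mem (smul_sub_self_mem_smulSubIdeal σ α)
    exact h2 h1
  · refine Ideal.le_of_forall_isMaximal fun P hP => ?_
    obtain ⟨α, u, huP, hu, h⟩ := key P hP
    refine ⟨u ^ (Finset.univ.erase (1 : H)).card, fun h' => huP (hP.isPrime.mem_of_pow_mem _ h'),
      fun x hx => ?_⟩
    have h1 : ∏ σ ∈ Finset.univ.erase (1 : H), (Ideal.span {u} * smulSubIdeal (𝓞 L) σ) ≤
        ∏ σ ∈ Finset.univ.erase (1 : H), Ideal.span {α - σ • α} :=
      Finset.prod_le_prod' fun σ _ => span_singleton_mul_smulSubIdeal_le hu σ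
    rw [← h, Finset.prod_mul_distrib, Finset.prod_const, Ideal.span_singleton_pow] at h1
    exact Ideal.mul_le_right (h1 (Ideal.mul_mem_mul (Ideal.mem_span_singleton_self _) hx))

theorem absNorm_smulSubIdeal_conj (L H : Type*) [Field L] [NumberField L] [Group H]
    [MulSemiringAction H L] (σ τ : H) :
    Ideal.absNorm (smulSubIdeal (𝓞 L) (τ * σ * τ⁻¹)) = Ideal.absNorm (smulSubIdeal (𝓞 L) σ) := by
  let f : 𝓞 L ≃+* 𝓞 L := MulSemiringAction.toRingEquiv H (𝓞 L) τ
  have h : smulSubIdeal (𝓞 L) (τ * σ * τ⁻¹) = (smulSubIdeal (𝓞 L) σ).map f := by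
    rw [smulSubIdeal, smulSubIdeal, Ideal.map_span]
    congr 1
    ext y
    constructor
    · rintro ⟨x, rfl⟩
      refine ⟨_, ⟨τ⁻¹ • x, rfl⟩, ?_⟩
      change τ • (σ • τ⁻¹ • x - τ⁻¹ • x) = _
      simp [smul_sub, mul_smul]
    · rintro ⟨_, ⟨x, rfl⟩, rfl⟩
      refine ⟨τ • x, ?_⟩
      change _ = τ • (σ • x - x)
      simp [smul_sub, mul_smul]
  rw [h, Ideal.absNorm_apply, Ideal.absNorm_apply, Submodule.cardQuot_apply,
    Submodule.cardQuot_apply]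
  exact Nat.card_congr (Ideal.quotientEquiv _ _ f rfl).toEquiv.symm

theorem smulSubIdeal_ne_bot (E L H : Type*) [Field E] [NumberField E] [Field L]
    [NumberField L] [Algebra E L] [Group H] [Finite H] [MulSemiringAction H L] [IsGaloisGroup H E L]
    {σ : H} (hσ : σ ≠ 1) :
    smulSubIdeal (𝓞 L) σ ≠ ⊥ := by
  intro h
  have : FaithfulSMul H (𝓞 L) := IsGaloisGroup.faithful (𝓞 E)
  refine hσ (eq_of_smul_eq_smul (α := 𝓞 L) fun x => ?_)
  have := smul_sub_self_mem_smulSubIdeal σ x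
  rw [h, Ideal.mem_bot, sub_eq_zero] at this
  rw [this, one_smul]

theorem natAbs_discr_pos (E : Type*) [Field E] [NumberField E] :
    (0 : ℝ) < (discr E).natAbs :=
  Nat.cast_pos.mpr (Int.natAbs_pos.mpr (discr_ne_zero E))

theorem card_mul_log_discr (E L H : Type*) [Field E] [NumberField E] [Field L]
    [NumberField L] [Algebra E L] [Group H] [Finite H] [MulSemiringAction H L]
    [IsGaloisGroup H E L] [DecidableEq H] :
    Nat.card H • Real.log (discr E).natAbs = ∑ᶠ σ : H,
      if σ = 1 then Real.log (discr L).natAbs else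
        - Real.log (Ideal.absNorm (smulSubIdeal (𝓞 L) σ)) := by
  have := Fintype.ofFinite H
  have hne : ∀ σ ∈ Finset.univ.erase (1 : H),
      ((Ideal.absNorm (smulSubIdeal (𝓞 L) σ) : ℕ) : ℝ) ≠ 0 := fun σ hσ => by
    rw [Nat.cast_ne_zero, Ne, Ideal.absNorm_eq_zero_iff]
    exact smulSubIdeal_ne_bot E L H (Finset.ne_of_mem_erase hσ)
  have h := natAbs_discr_eq_absNorm_differentIdeal_mul_natAbs_discr_pow E (𝓞 E) L (𝓞 L)
  rw [differentIdeal_eq_prod_smulSubIdeal E L H, map_prod, ← IsGaloisGroup.card_eq_finrank H] at h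
  rw [finsum_eq_sum_of_fintype, ← Finset.add_sum_erase _ _ (Finset.mem_univ 1), if_pos rfl,
    Finset.sum_congr rfl fun σ hσ => if_neg (Finset.ne_of_mem_erase hσ), h, Nat.cast_mul,
    Nat.cast_prod, Nat.cast_pow, Real.log_mul (Finset.prod_ne_zero_iff.mpr hne) (pow_pos
      (natAbs_discr_pos E) _).ne',
    Real.log_prod hne, Real.log_pow, Finset.sum_neg_distrib, nsmul_eq_mul]
  ring

theorem IsDihedralTower.discr_relation {q : ℕ} [NeZero q]
    {k L : Type*} [Field k] [Field L] [NumberField k] [NumberField L]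
    [Algebra k L] [IsGalois k L] {e : (L ≃ₐ[k] L) ≃* DihedralGroup q} {F K : IntermediateField k L}
    (h : IsDihedralTower q e F K) :
    (discr L).natAbs * (discr k).natAbs ^ 2 = (discr F).natAbs * (discr K).natAbs ^ 2 := by
  have := isGaloisGroup_of_eq_fixedField h.eqF
  have := isGaloisGroup_of_eq_fixedField h.eqK
  have : Finite (L ≃ₐ[k] L) := Finite.of_equiv _ e.symm.toEquiv
  classical
  have key := average_relation_of_mulEquiv_dihedralGroup h.odd e
    (fun σ : L ≃ₐ[k] L => if σ = 1 then Real.log (discr L).natAbs else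
        - Real.log (Ideal.absNorm (smulSubIdeal (𝓞 L) σ))) (fun σ τ => ?_) (if_pos rfl).symm
    (card_mul_log_discr k L _) (g := Real.log (discr F).natAbs) (s := Real.log (discr K).natAbs)
    ?_ ?_
  · have hk := natAbs_discr_pos k
    have hL := natAbs_discr_pos L
    have hF := natAbs_discr_pos F
    have hK := natAbs_discr_pos K
    rw [← Nat.cast_inj (R := ℝ), Nat.cast_mul, Nat.cast_mul, Nat.cast_pow, Nat.cast_pow]
    apply Real.log_injOn_pos (mul_pos hL (pow_pos hk 2)) (mul_pos hF (pow_pos hK 2))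
    rw [Real.log_mul hL.ne' (pow_pos hk 2).ne', Real.log_mul hF.ne' (pow_pos hK 2).ne',
      Real.log_pow, Real.log_pow]
    simpa using key
  · simp only [conj_eq_one_iff, absNorm_smulSubIdeal_conj]
  · exact (card_mul_log_discr F L _).trans (finsum_congr fun σ => by
      simp only [OneMemClass.coe_eq_one]
      rfl)
  · exact (card_mul_log_discr K L _).trans (finsum_congr fun σ => by
      simp only [OneMemClass.coe_eq_one]
      rfl)

section Places

variable (E L H : Type*) [Field E] [Field L] [NumberField E] [NumberField L] [Algebra E L]
  [Group H] [Finite H]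
  [MulSemiringAction H L] [IsGaloisGroup H E L] [MulAction H (InfinitePlace L)]

theorem comap_algebraMap_eq_iff_exists_smul
    (hsm : ∀ (h : H) (w : InfinitePlace L) (x : L), (h • w) x = w (h⁻¹ • x))
    (w w' : InfinitePlace L) :
    w.comap (algebraMap E L) = w'.comap (algebraMap E L) ↔ ∃ h : H, h • w' = w := by
  have := IsGaloisGroup.isGalois H E L
  constructor
  · intro h
    obtain ⟨σ, hσ⟩ := InfinitePlace.exists_smul_eq_of_comap_eq h.symm
    refine ⟨(IsGaloisGroup.mulEquivAlgEquiv H E L).symm σ, ?_⟩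
    rw [← hσ]
    ext x
    rw [hsm, InfinitePlace.smul_apply, ← map_inv, ← AlgEquiv.aut_inv]
    congr 1
    exact DFunLike.congr_fun ((IsGaloisGroup.mulEquivAlgEquiv H E L).apply_symm_apply σ⁻¹) x
  · rintro ⟨h, rfl⟩
    ext x
    rw [InfinitePlace.comap_apply, InfinitePlace.comap_apply, hsm, smul_algebraMap]

theorem card_mul_card_infinitePlace
    (hsm : ∀ (h : H) (w : InfinitePlace L) (x : L), (h • w) x = w (h⁻¹ • x)) :
    Nat.card H * Nat.card (InfinitePlace E) =
      ∑ᶠ h : H, Nat.card {w : InfinitePlace L // h • w = w} := by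
  have := IsGaloisGroup.isGalois H E L
  have key := MulAction.card_mul_card_fixed_quotient (H := H)
    (π := fun w : InfinitePlace L => w.comap (algebraMap E L)) InfinitePlace.comap_surjective
    (comap_algebraMap_eq_iff_exists_smul E L H hsm) id id (fun _ => rfl)
  rw [← Nat.card_congr (Equiv.subtypeUnivEquiv (p := fun w : InfinitePlace E => id w = w)
    fun _ => rfl)]
  simpa [eq_comm] using key

end Places

theorem IsDihedralTower.card_infinitePlace_relation {q : ℕ} [NeZero q]
    {k L : Type*} [Field k] [Field L] [NumberField k] [NumberField L]
    [Algebra k L] [IsGalois k L] {e : (L ≃ₐ[k] L) ≃* DihedralGroup q} {F K : IntermediateField k L}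
    (h : IsDihedralTower q e F K) :
    Nat.card (InfinitePlace L) + 2 * Nat.card (InfinitePlace k) =
      Nat.card (InfinitePlace F) + 2 * Nat.card (InfinitePlace K) := by
  have := isGaloisGroup_of_eq_fixedField h.eqF
  have := isGaloisGroup_of_eq_fixedField h.eqK
  have : Finite (L ≃ₐ[k] L) := Finite.of_equiv _ e.symm.toEquiv
  refine average_relation_of_mulEquiv_dihedralGroup h.odd e
    (fun σ => Nat.card {w : InfinitePlace L // σ • w = w}) (fun σ τ => ?_) ?_
    (card_mul_card_infinitePlace k L _ fun _ _ _ => rfl)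
    (card_mul_card_infinitePlace F L _ fun _ _ _ => rfl)
    (card_mul_card_infinitePlace K L _ fun _ _ _ => rfl)
  · refine Nat.card_congr ((MulAction.toPerm τ).symm.subtypeEquiv fun w => ?_)
    change _ ↔ σ • τ⁻¹ • w = τ⁻¹ • w
    rw [eq_inv_smul_iff, mul_smul, mul_smul]
  · exact (Nat.card_congr (Equiv.subtypeUnivEquiv fun w => one_smul _ w)).symm

theorem Subgroup.card_comap_mulEquiv {G D : Type*} [Group G] [Group D] (e : G ≃* D)
    (S : Subgroup D) : Nat.card (S.comap e.toMonoidHom) = Nat.card S :=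
  Nat.card_congr (e.toEquiv.subtypeEquiv fun _ => Iff.rfl)

namespace IsDihedralTower

variable {q : ℕ} {k L : Type*} [Field k] [Field L] [NumberField k] [NumberField L]
    [Algebra k L] [IsGalois k L] {e : (L ≃ₐ[k] L) ≃* DihedralGroup q} {F K : IntermediateField k L}

theorem finrank_eq_mul (_ : IsDihedralTower q e F K) :
    Module.finrank ℚ L = 2 * q * Module.finrank ℚ k := by
  rw [mul_comm, ← Module.finrank_mul_finrank ℚ k L, ← IsGalois.card_aut_eq_finrank k L,
    Nat.card_congr e.toEquiv, DihedralGroup.nat_card]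

theorem finrank_eq_mul_left (h : IsDihedralTower q e F K) :
    Module.finrank ℚ L = q * Module.finrank ℚ F := by
  have := isGaloisGroup_of_eq_fixedField h.eqF
  rw [mul_comm, ← Module.finrank_mul_finrank ℚ F L, ← IsGaloisGroup.card_eq_finrank
    ((Subgroup.closure {(r 1 : DihedralGroup q)}).comap e.toMonoidHom) F L,
    Subgroup.card_comap_mulEquiv, ← Subgroup.zpowers_eq_closure, Nat.card_zpowers, orderOf_r_one]

theorem finrank_eq_mul_right (h : IsDihedralTower q e F K) :
    Module.finrank ℚ L = 2 * Module.finrank ℚ K := by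
  have := isGaloisGroup_of_eq_fixedField h.eqK
  rw [mul_comm, ← Module.finrank_mul_finrank ℚ K L, ← IsGaloisGroup.card_eq_finrank
    ((Subgroup.closure {(sr 0 : DihedralGroup q)}).comap e.toMonoidHom) K L,
    Subgroup.card_comap_mulEquiv, ← Subgroup.zpowers_eq_closure, Nat.card_zpowers, orderOf_sr]

theorem finrank_base [NeZero q] (h : IsDihedralTower q e F K) :
    Module.finrank ℚ F = 2 * Module.finrank ℚ k := by
  apply Nat.eq_of_mul_eq_mul_left (NeZero.pos q)
  rw [← h.finrank_eq_mul_left, h.finrank_eq_mul]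
  ring

theorem finrank_base' (h : IsDihedralTower q e F K) :
    Module.finrank ℚ K = q * Module.finrank ℚ k := by
  apply Nat.eq_of_mul_eq_mul_left two_pos
  rw [← h.finrank_eq_mul_right, h.finrank_eq_mul]
  ring

theorem nrRealPlaces_nrComplexPlaces_relation [NeZero q]
    (h : IsDihedralTower q e F K) :
    InfinitePlace.nrRealPlaces L + 2 * InfinitePlace.nrRealPlaces k =
      InfinitePlace.nrRealPlaces F + 2 * InfinitePlace.nrRealPlaces K ∧
    InfinitePlace.nrComplexPlaces L + 2 * InfinitePlace.nrComplexPlaces k =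
      InfinitePlace.nrComplexPlaces F + 2 * InfinitePlace.nrComplexPlaces K := by
  have h1 := h.card_infinitePlace_relation
  have h2 := h.finrank_eq_mul_left
  have h3 := h.finrank_base
  have h4 := h.finrank_base'
  simp only [Nat.card_eq_fintype_card, InfinitePlace.card_eq_nrRealPlaces_add_nrComplexPlaces] at h1
  have h5 : Module.finrank ℚ L + 2 * Module.finrank ℚ k =
      Module.finrank ℚ F + 2 * Module.finrank ℚ K := by rw [h2, h3, h4]; ring
  simp only [← InfinitePlace.card_add_two_mul_card_eq_rank] at h5
  omega

end IsDihedralTower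

section IntegralSpan

variable {ι N : Type*} [Fintype ι] [AddCommGroup N]

/-- Integral linear combinations of a finite family. -/
def zcomb (c : ι → N) : (ι → ℤ) →+ N where
  toFun f := ∑ i, f i • c i
  map_zero' := by simp
  map_add' f g := by simp [add_smul, Finset.sum_add_distrib]

theorem zcomb_apply (c : ι → N) (f : ι → ℤ) : zcomb c f = ∑ i, f i • c i := rfl

theorem zcomb_single [DecidableEq ι] (c : ι → N) (i : ι) : zcomb c (Pi.single i 1) = c i := by
  rw [zcomb_apply, Finset.sum_eq_single i] <;> simp +contextual

theorem zcomb_injective_of_det_ne_zero [DecidableEq ι] {c : ι → N} {ℓ : ι → N →+ ℝ}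
    (h : (Matrix.of fun v z => ℓ v (c z)).det ≠ 0) : Function.Injective (zcomb c) := by
  rw [injective_iff_map_eq_zero]
  intro f hf
  have h0 : (Matrix.of fun v z => ℓ v (c z)).mulVec (fun i => (f i : ℝ)) = 0 := by
    ext v
    have := congrArg (ℓ v) hf
    rw [zcomb_apply, map_sum, map_zero] at this
    simpa [Matrix.mulVec, dotProduct, mul_comm] using this
  have := Matrix.eq_zero_of_mulVec_eq_zero h h0
  ext i
  simpa using congrFun this i

theorem LinearMap.index_range_eq_natAbs_det [DecidableEq ι] (f : (ι → ℤ) →ₗ[ℤ] (ι → ℤ))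
    (hf : Function.Injective f) :
    (f : (ι → ℤ) →+ (ι → ℤ)).range.index = (LinearMap.det f).natAbs := by
  have := Submodule.natAbs_det_equiv (LinearMap.range f) (LinearEquiv.ofInjective f hf)
  refine Eq.trans ?_ (this.symm.trans ?_)
  · rfl
  · congr 2

theorem relIndex_range_zcomb_matrix [DecidableEq ι] {c : ι → N}
    (hc : Function.Injective (zcomb c)) {P : Matrix ι ι ℤ} (hP : P.det ≠ 0) :
    (zcomb (fun z => ∑ y, P z y • c y)).range.relIndex (zcomb c).range = P.det.natAbs := by
  have hcomp : zcomb (fun z => ∑ y, P z y • c y) =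
      (zcomb c).comp (Matrix.toLin' P.transpose : (ι → ℤ) →+ (ι → ℤ)) := by
    refine DFunLike.ext _ _ fun f => ?_
    change _ = zcomb c (Matrix.toLin' P.transpose f)
    simp only [zcomb_apply, Finset.smul_sum, Matrix.toLin'_apply, Matrix.mulVec, dotProduct,
      Matrix.transpose_apply, Finset.sum_smul]
    rw [Finset.sum_comm]
    simp only [smul_smul, mul_comm]
  have hinj : Function.Injective (Matrix.toLin' P.transpose) := by
    rw [← LinearMap.ker_eq_bot, LinearMap.ker_eq_bot']
    intro f hf
    exact Matrix.eq_zero_of_mulVec_eq_zero (by rwa [Matrix.det_transpose]) (by simpa using hf)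
  rw [hcomp, AddMonoidHom.range_comp, AddMonoidHom.range_eq_map (zcomb c),
    AddSubgroup.relIndex_map_map_of_injective _ _ hc, AddSubgroup.relIndex_top_right,
    LinearMap.index_range_eq_natAbs_det _ hinj, LinearMap.det_toLin', Matrix.det_transpose]

/-- The quotient of the determinant by the index does not depend on the family. -/
theorem abs_det_mul_index_comm [DecidableEq ι] {c c' : ι → N} {ℓ : ι → N →+ ℝ}
    (hc : (Matrix.of fun v z => ℓ v (c z)).det ≠ 0) (hc' : (zcomb c').range.index ≠ 0) :
    |(Matrix.of fun v z => ℓ v (c z)).det| * (zcomb c').range.index =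
      |(Matrix.of fun v z => ℓ v (c' z)).det| * (zcomb c).range.index := by
  set n := (zcomb c').range.index
  have hmem : ∀ z, ∃ f : ι → ℤ, zcomb c' f = n • c z := fun z =>
    (zcomb c').range.nsmul_index_mem (c z)
  choose P hP using hmem
  have hn : ((n : ℤ) • (1 : Matrix ι ι ℤ)).det = n ^ Fintype.card ι := by
    rw [Matrix.det_smul, Matrix.det_one, mul_one]
  have hn0 : ((n : ℤ) • (1 : Matrix ι ι ℤ)).det ≠ 0 := by
    rw [hn]; exact pow_ne_zero _ (by exact_mod_cast hc')
  have h1 : (fun z => ∑ y, Matrix.of P z y • c' y) =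
      (fun z => ∑ y, ((n : ℤ) • (1 : Matrix ι ι ℤ)) z y • c y) := by
    ext z
    refine (hP z).trans ?_
    simp [Matrix.one_apply]
  have hdet : (Matrix.of fun v z => ℓ v (c' z)).det * ((Matrix.of P).det : ℝ) =
      (Matrix.of fun v z => ℓ v (c z)).det * n ^ Fintype.card ι := by
    have h2 : ((Matrix.of P).det : ℝ) = (Matrix.of fun y z => (P z y : ℝ)).det := by
      rw [← Matrix.det_transpose]
      exact RingHom.map_det (Int.castRingHom ℝ) _
    have h3 : (Matrix.of fun v z => ℓ v (c' z)) * (Matrix.of fun y z => (P z y : ℝ)) =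
        (n : ℝ) • (Matrix.of fun v z => ℓ v (c z)) := by
      ext v z
      have := congrArg (ℓ v) (hP z)
      rw [zcomb_apply, map_sum] at this
      simpa [Matrix.mul_apply, mul_comm] using this
    rw [h2, ← Matrix.det_mul, h3, Matrix.det_smul, mul_comm]
  have hne : (Matrix.of fun v z => ℓ v (c' z)).det * ((Matrix.of P).det : ℝ) ≠ 0 := by
    rw [hdet]
    exact mul_ne_zero hc (pow_ne_zero _ (by exact_mod_cast hc'))
  have hPdet : (Matrix.of P).det ≠ 0 := by exact_mod_cast right_ne_zero_of_mul hne
  have hi := relIndex_range_zcomb_matrix (zcomb_injective_of_det_ne_zero (left_ne_zero_of_mul hne))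
    hPdet
  have hi' := relIndex_range_zcomb_matrix (zcomb_injective_of_det_ne_zero hc) hn0
  have hle : ∀ (d : ι → N) (Q : Matrix ι ι ℤ),
      (zcomb (fun z => ∑ y, Q z y • d y)).range ≤ (zcomb d).range := by
    rintro d Q _ ⟨f, rfl⟩
    refine AddSubgroup.sum_mem _ fun z _ => AddSubgroup.zsmul_mem _ (AddSubgroup.sum_mem _
      fun y _ =>
      AddSubgroup.zsmul_mem _ ?_ _) _
    classical
    exact ⟨Pi.single y 1, zcomb_single d y⟩
  have hm := AddSubgroup.relIndex_mul_index (hle c' (Matrix.of P))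
  have hm' := AddSubgroup.relIndex_mul_index (hle c ((n : ℤ) • (1 : Matrix ι ι ℤ)))
  rw [hi] at hm
  rw [hi', ← h1, ← hm, hn, Int.natAbs_pow, Int.natAbs_natCast] at hm'
  have hm'' : (n : ℝ) ^ Fintype.card ι * (zcomb c).range.index = |((Matrix.of P).det : ℝ)| * n := by
    rw [← Int.cast_abs, ← Nat.cast_natAbs (Matrix.of P).det]
    exact_mod_cast hm'
  have hn1 : (n : ℝ) ^ Fintype.card ι ≠ 0 := pow_ne_zero _ (by exact_mod_cast hc')
  apply mul_right_cancel₀ hn1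
  have habs := congrArg abs hdet
  rw [abs_mul, abs_mul, abs_of_nonneg (by positivity : (0 : ℝ) ≤ n ^ Fintype.card ι)] at habs
  linear_combination (-(n : ℝ)) * habs - |(Matrix.of fun v z => ℓ v (c' z)).det| * hm''

end IntegralSpan

section UnitFamilies

open NumberField.Units

variable (E : Type*) [Field E] [NumberField E]

/-- The additive map `(n, u) ↦ n + log |u|_v`. -/
noncomputable def placeLog {E : Type*} [Field E] [NumberField E] (v : InfinitePlace E) :
    ℤ × Additive (𝓞 E)ˣ →+ ℝ where
  toFun a := a.1 + Real.log (v ((a.2.toMul : (𝓞 E)ˣ) : E))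
  map_zero' := by simp
  map_add' a b := by
    have h : ∀ u : (𝓞 E)ˣ, v (u : E) ≠ 0 := fun u => by simp
    rw [Prod.fst_add, Prod.snd_add, toMul_add, Units.val_mul, map_mul, map_mul,
      Real.log_mul (h _) (h _)]
    push_cast
    ring

theorem placeLog_apply {E : Type*} [Field E] [NumberField E] (v : InfinitePlace E)
    (a : ℤ × Additive (𝓞 E)ˣ) :
    placeLog v a = a.1 + Real.log (v ((a.2.toMul : (𝓞 E)ˣ) : E)) := rfl

theorem prod_mult_infinitePlace :
    ∏ v : InfinitePlace E, (v.mult : ℝ) = 2 ^ InfinitePlace.nrComplexPlaces E := by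
  classical
  have h : ∀ v : InfinitePlace E, (v.mult : ℝ) = if v.IsComplex then 2 else 1 := fun v => by
    rw [InfinitePlace.mult]
    by_cases h : v.IsReal
    · rw [if_pos h, if_neg (InfinitePlace.not_isComplex_iff_isReal.mpr h), Nat.cast_one]
    · rw [if_neg h, if_pos (InfinitePlace.not_isReal_iff_isComplex.mp h), Nat.cast_ofNat]
  simp only [h, Finset.prod_ite, Finset.prod_const, one_pow, mul_one]
  rw [InfinitePlace.nrComplexPlaces, Fintype.card_subtype]

open scoped Classical in
/-- A maximal independent family in `ℤ × 𝓞ˣ` built from a fundamental system of units. -/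
noncomputable def fundFamily (w : InfinitePlace E) (e : {v // v ≠ w} ≃ Fin (rank E))
    (i : InfinitePlace E) : ℤ × Additive (𝓞 E)ˣ :=
  if h : i = w then (1, 0) else (0, Additive.ofMul (fundSystem E (e ⟨i, h⟩)))

theorem abs_det_fundFamily [DecidableEq (InfinitePlace E)] (w : InfinitePlace E)
    (e : {v // v ≠ w} ≃ Fin (rank E)) :
    |(Matrix.of fun v z => placeLog v (fundFamily E w e z)).det| *
      2 ^ InfinitePlace.nrComplexPlaces E = Module.finrank ℚ E * regulator E := by
  rw [finrank_mul_regulator_eq_det E w e, ← prod_mult_infinitePlace,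
    ← abs_of_nonneg (a := ∏ v : InfinitePlace E, (v.mult : ℝ))
    (by positivity), ← abs_mul, mul_comm, ← Matrix.det_mul_column, ← Matrix.det_transpose]
  congr 2
  ext i v
  simp only [Matrix.transpose_apply, Matrix.of_apply, fundFamily]
  split_ifs <;> simp [placeLog_apply]

theorem zcomb_fundFamily (w : InfinitePlace E) (e : {v // v ≠ w} ≃ Fin (rank E))
    (f : InfinitePlace E → ℤ) :
    zcomb (fundFamily E w e) f =
      (f w, Additive.ofMul (∏ i, fundSystem E i ^ f (e.symm i))) := by
  classical
  rw [zcomb_apply, ← Finset.add_sum_erase _ _ (Finset.mem_univ w)]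
  have h : ∑ i ∈ Finset.univ.erase w, f i • fundFamily E w e i =
      ∑ i : Fin (rank E), f (e.symm i) • ((0 : ℤ), Additive.ofMul (fundSystem E i)) := by
    rw [← Equiv.sum_comp e]
    simp only [Equiv.symm_apply_apply]
    rw [Finset.sum_subtype (Finset.univ.erase w) (p := fun v => v ≠ w) (by simp)]
    refine Finset.sum_congr rfl fun i _ => ?_
    rw [fundFamily, dif_neg i.2]
  rw [h, fundFamily, dif_pos rfl]
  ext
  · simp [Prod.fst_sum]
  · simp [Prod.snd_sum, ofMul_prod, ofMul_zpow]

theorem index_range_zcomb_fundFamily (w : InfinitePlace E) (e : {v // v ≠ w} ≃ Fin (rank E)) :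
    (zcomb (fundFamily E w e)).range.index = torsionOrder E := by
  classical
  let g : torsion E → (ℤ × Additive (𝓞 E)ˣ) ⧸ (zcomb (fundFamily E w e)).range :=
    fun ζ => QuotientAddGroup.mk (0, Additive.ofMul ζ.1)
  have hg : Function.Bijective g := by
    constructor
    · intro ζ ζ' h
      obtain ⟨f, hf⟩ := QuotientAddGroup.eq.mp h
      rw [zcomb_fundFamily, Prod.ext_iff] at hf
      have h2 : ∏ i, fundSystem E i ^ f (e.symm i) = ζ.1⁻¹ * ζ'.1 := hf.2
      have := (exist_unique_eq_mul_prod E ζ'.1).unique (y₁ := (ζ', 0))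
        (y₂ := (ζ, fun i => f (e.symm i))) (by simp) (by simp [h2])
      exact (congrArg Prod.fst this).symm
    · intro x
      obtain ⟨⟨n, u⟩, rfl⟩ := QuotientAddGroup.mk_surjective x
      obtain ⟨⟨ζ, f⟩, hu, -⟩ := exist_unique_eq_mul_prod E u.toMul
      refine ⟨ζ, QuotientAddGroup.eq.mpr
        ⟨fun i => if h : i = w then n else f (e ⟨i, h⟩), ?_⟩⟩
      rw [zcomb_fundFamily]
      ext1
      · simp
      · have : u = Additive.ofMul (ζ.1 * ∏ i, fundSystem E i ^ f i) := hu
        have hne : ∀ i, (e.symm i : InfinitePlace E) ≠ w := fun i => (e.symm i).2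
        rw [this]
        simp [hne]
  rw [AddSubgroup.index, ← Nat.card_congr (Equiv.ofBijective g hg), torsionOrder]

/-- The determinant of the logarithms of a family of elements of `ℤ × 𝓞ˣ` in terms of its index. -/
theorem abs_det_placeLog [DecidableEq (InfinitePlace E)] {c : InfinitePlace E → ℤ × Additive (𝓞 E)ˣ}
    (hc : (Matrix.of fun v z => placeLog v (c z)).det ≠ 0) :
    |(Matrix.of fun v z => placeLog v (c z)).det| *
      (2 ^ InfinitePlace.nrComplexPlaces E * torsionOrder E) =
      Module.finrank ℚ E * regulator E * (zcomb c).range.index := by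
  let w : InfinitePlace E := dirichletUnitTheorem.w₀
  let e := (equivFinRank E).symm
  have h := abs_det_mul_index_comm (c' := fundFamily E w e) hc (by
    rw [index_range_zcomb_fundFamily]
    exact torsionOrder_ne_zero E)
  rw [index_range_zcomb_fundFamily] at h
  rw [← abs_det_fundFamily E w e]
  linear_combination 2 ^ InfinitePlace.nrComplexPlaces E * h

theorem index_range_zcomb_ne_zero [DecidableEq (InfinitePlace E)]
    {c : InfinitePlace E → ℤ × Additive (𝓞 E)ˣ}
    (hc : (Matrix.of fun v z => placeLog v (c z)).det ≠ 0) : (zcomb c).range.index ≠ 0 := by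
  intro h
  have := abs_det_placeLog E hc
  rw [h, Nat.cast_zero, mul_zero] at this
  have h2 : (torsionOrder E : ℝ) ≠ 0 := Nat.cast_ne_zero.mpr (torsionOrder_ne_zero E)
  exact mul_ne_zero (abs_ne_zero.mpr hc) (mul_ne_zero (by positivity) h2) this

end UnitFamilies

/-- A variant of the determinant criterion for diagonally dominant matrices. -/
theorem Matrix.det_one_add_ne_zero {X : Type*} [Fintype X] [DecidableEq X] [Nonempty X]
    {m : X → ℝ} (hm : ∀ v, 0 < m v) {a : X → X → ℝ} (hneg : ∀ v x, v ≠ x → a v x < 0)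
    (hsum : ∀ x, ∑ v, m v * a v x = 0) : (Matrix.of fun v x => 1 + a v x).det ≠ 0 := by
  intro hdet
  obtain ⟨z, hz0, hz⟩ := Matrix.exists_vecMul_eq_zero_iff.mpr hdet
  set t : X → ℝ := fun v => z v / m v
  have hzt : ∀ v, z v = t v * m v := fun v => (div_mul_cancel₀ _ (hm v).ne').symm
  set T := ∑ v, t v * m v
  have key : ∀ x, ∑ v, (t v - t x) * (m v * a v x) = - T := by
    intro x
    have h := congrFun hz x
    simp only [Matrix.vecMul, dotProduct, Matrix.of_apply, hzt, Pi.zero_apply, mul_add,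
      Finset.sum_add_distrib, mul_one] at h
    simp only [sub_mul, Finset.sum_sub_distrib, ← Finset.mul_sum, hsum, mul_zero, sub_zero]
    rw [← add_eq_zero_iff_eq_neg, ← h, add_comm]
    simp only [mul_assoc, T]
  obtain ⟨x, hx⟩ := Finite.exists_max t
  obtain ⟨y, hy⟩ := Finite.exists_min t
  have hterm : ∀ v, 0 ≤ (t v - t x) * (m v * a v x) := fun v => by
    rcases eq_or_ne v x with rfl | h
    · simp
    · exact mul_nonneg_of_nonpos_of_nonpos (by linarith [hx v])
        (mul_nonpos_of_nonneg_of_nonpos (hm v).le (hneg v x h).le)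
  have h1 : T ≤ 0 := by
    have : 0 ≤ -T := by rw [← key x]; exact Finset.sum_nonneg fun v _ => hterm v
    linarith
  have h2 : 0 ≤ T := by
    have : -T ≤ 0 := by
      rw [← key y]
      refine Finset.sum_nonpos fun v _ => ?_
      rcases eq_or_ne v y with rfl | h
      · simp
      · exact mul_nonpos_of_nonneg_of_nonpos (by linarith [hy v])
          (mul_nonpos_of_nonneg_of_nonpos (hm v).le (hneg v y h).le)
    linarith
  have hT : T = 0 := le_antisymm h1 h2
  have hconst : ∀ v, t v = t x := by
    intro v
    rcases eq_or_ne v x with rfl | h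
    · rfl
    have h3 := key x
    rw [hT, neg_zero, Finset.sum_eq_zero_iff_of_nonneg fun v _ => hterm v] at h3
    rcases mul_eq_zero.mp (h3 v (Finset.mem_univ v)) with h4 | h4
    · linarith
    · exact absurd h4 (mul_ne_zero (hm v).ne' (hneg v x h).ne)
  have hx0 : t x = 0 := by
    have : T = t x * ∑ v, m v := by
      rw [Finset.mul_sum]
      exact Finset.sum_congr rfl fun v _ => by rw [hconst]
    rw [hT] at this
    rcases mul_eq_zero.mp this.symm with h | h
    · exact h
    · exact absurd h (Finset.sum_pos (fun v _ => hm v) Finset.univ_nonempty).ne'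
  refine hz0 (funext fun v => ?_)
  rw [hzt, hconst, hx0, zero_mul, Pi.zero_apply]

theorem Additive.unitsInt_ext {E : Type*} [Field E] {u u' : Additive (𝓞 E)ˣ}
    (h : ((u.toMul : (𝓞 E)ˣ) : E) = ((u'.toMul : (𝓞 E)ˣ) : E)) : u = u' :=
  Additive.toMul.injective (Units.ext (RingOfIntegers.ext h))

section UnitAct

variable {k L : Type*} [Field k] [Field L] [NumberField k] [NumberField L] [Algebra k L]
  [IsGalois k L]

/-- The Galois action on units, written additively. -/
noncomputable def unitAut (g : L ≃ₐ[k] L) : Additive (𝓞 L)ˣ →+ Additive (𝓞 L)ˣ :=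
  MonoidHom.toAdditive
    (Units.map (galRestrict (𝓞 k) k L (𝓞 L) g).toAlgHom.toRingHom.toMonoidHom)

theorem coe_unitAut (g : L ≃ₐ[k] L) (u : Additive (𝓞 L)ˣ) :
    (((unitAut g u).toMul : (𝓞 L)ˣ) : L) = g ((u.toMul : (𝓞 L)ˣ) : L) :=
  algebraMap_galRestrict_apply (𝓞 k) g _

theorem unitAut_one : unitAut (1 : L ≃ₐ[k] L) = AddMonoidHom.id _ := by
  refine DFunLike.ext _ _ fun u => Additive.unitsInt_ext ?_
  rw [coe_unitAut]
  rfl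

theorem unitAut_mul (g h : L ≃ₐ[k] L) : unitAut (g * h) = (unitAut g).comp (unitAut h) := by
  refine DFunLike.ext _ _ fun u => Additive.unitsInt_ext ?_
  rw [coe_unitAut, AddMonoidHom.comp_apply, coe_unitAut, coe_unitAut]
  rfl

variable (k L) in
/-- The Galois action on `ℤ × 𝓞ˣ`, trivial on the first factor. -/
noncomputable def extUnitRep : (L ≃ₐ[k] L) →* Module.End ℤ (ℤ × Additive (𝓞 L)ˣ) where
  toFun g := ((AddMonoidHom.id ℤ).prodMap (unitAut g)).toIntLinearMap
  map_one' := by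
    rw [unitAut_one]
    rfl
  map_mul' g h := by
    rw [unitAut_mul]
    rfl

theorem extUnitRep_apply (g : L ≃ₐ[k] L) (a : ℤ × Additive (𝓞 L)ˣ) :
    extUnitRep k L g a = (a.1, unitAut g a.2) := rfl

theorem placeLog_extUnitRep (g : L ≃ₐ[k] L) (w : InfinitePlace L) (a : ℤ × Additive (𝓞 L)ˣ) :
    placeLog (g • w) (extUnitRep k L g a) = placeLog w a := by
  rw [placeLog_apply, placeLog_apply, extUnitRep_apply, coe_unitAut, InfinitePlace.smul_apply,
    AlgEquiv.symm_apply_apply]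

variable (k L) in
/-- There is a Galois equivariant family of elements of `ℤ × 𝓞ˣ` indexed by the infinite places
whose logarithms are linearly independent. -/
theorem exists_equivariant_family [DecidableEq (InfinitePlace L)] :
    ∃ ε : InfinitePlace L → ℤ × Additive (𝓞 L)ˣ,
      (∀ (g : L ≃ₐ[k] L) x, extUnitRep k L g (ε x) = ε (g • x)) ∧
      (Matrix.of fun w x => placeLog w (ε x)).det ≠ 0 := by
  choose u hu using fun x : InfinitePlace L => Units.dirichletUnitTheorem.exists_unit L x
  let η : InfinitePlace L → ℤ × Additive (𝓞 L)ˣ := fun x => (0, Additive.ofMul (u x))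
  have hη : ∀ w x, w ≠ x → placeLog w (η x) < 0 := fun w x h => by
    rw [placeLog_apply]
    simpa [η] using hu x w h
  let v : InfinitePlace L → ℤ × Additive (𝓞 L)ˣ := fun x =>
    ∑ g : L ≃ₐ[k] L, extUnitRep k L g (η (g⁻¹ • x))
  have hv : ∀ (g : L ≃ₐ[k] L) x, extUnitRep k L g (v x) = v (g • x) := fun g x => by
    simp only [v]
    rw [map_sum, ← Equiv.sum_comp (Equiv.mulLeft g) fun h => extUnitRep k L h (η (h⁻¹ • g • x))]
    refine Finset.sum_congr rfl fun h _ => ?_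
    rw [Equiv.coe_mulLeft, map_mul, mul_inv_rev, mul_smul, inv_smul_smul, Module.End.mul_apply]
  have hv1 : ∀ x, (v x).1 = 0 := fun x => by
    simp [v, Prod.fst_sum, extUnitRep_apply, η]
  have hneg : ∀ w x, w ≠ x → placeLog w (v x) < 0 := fun w x h => by
    simp only [v, map_sum]
    refine Finset.sum_neg (fun g _ => ?_) Finset.univ_nonempty
    have := placeLog_extUnitRep g (g⁻¹ • w) (η (g⁻¹ • x))
    rw [smul_inv_smul] at this
    rw [this]
    exact hη _ _ fun h' => h ((MulAction.injective g⁻¹) h')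
  have hsum : ∀ x, ∑ w : InfinitePlace L, (w.mult : ℝ) * placeLog w (v x) = 0 := fun x => by
    simp only [placeLog_apply, hv1, Int.cast_zero, zero_add]
    exact Units.sum_mult_mul_log _
  refine ⟨fun x => (1, 0) + v x, fun g x => ?_, ?_⟩
  · rw [map_add, hv, extUnitRep_apply, map_zero]
  · convert Matrix.det_one_add_ne_zero (m := fun w : InfinitePlace L => (w.mult : ℝ))
      (fun w => Nat.cast_pos.mpr w.mult_pos) hneg hsum using 4 with w
    ext x
    rw [map_add, placeLog_apply]
    simp

end UnitAct

/-- Two elements of a ring satisfying the relations of a dihedral group of order `2 * q`,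
`q` odd. -/
structure IsDihedralPair {R : Type*} [Ring R] (q : ℕ) (ρ σ : R) : Prop where
  odd : Odd q
  pow_eq_one : ρ ^ q = 1
  mul_self : σ * σ = 1
  conj : ρ * σ * ρ = σ

namespace IsDihedralPair

variable {R : Type*} [Ring R] {q : ℕ} {ρ σ : R}

theorem pow_mul_mul_pow (h : IsDihedralPair q ρ σ) (i : ℕ) : ρ ^ i * σ * ρ ^ i = σ := by
  induction i with
  | zero => simp
  | succ i ih =>
    calc ρ ^ (i + 1) * σ * ρ ^ (i + 1) = ρ ^ i * (ρ * σ * ρ) * ρ ^ i := by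
          nth_rw 1 [pow_succ]
          rw [pow_succ']
          simp only [mul_assoc]
      _ = σ := by rw [h.conj, ih]

theorem pow_mul {i j : ℕ} (h : IsDihedralPair q ρ σ) (hij : i + j = q) :
    ρ ^ i * σ = σ * ρ ^ j := by
  calc ρ ^ i * σ = ρ ^ i * σ * (ρ ^ i * ρ ^ j) := by rw [← pow_add, hij, h.pow_eq_one, mul_one]
    _ = σ * ρ ^ j := by rw [← mul_assoc, h.pow_mul_mul_pow]

theorem mul_sum (h : IsDihedralPair q ρ σ) :
    ρ * ∑ i ∈ Finset.range q, ρ ^ i = ∑ i ∈ Finset.range q, ρ ^ i := by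
  have := mul_geom_sum ρ q
  rw [h.pow_eq_one, sub_self, sub_mul, one_mul] at this
  exact sub_eq_zero.mp this

theorem sum_mul (h : IsDihedralPair q ρ σ) :
    (∑ i ∈ Finset.range q, ρ ^ i) * ρ = ∑ i ∈ Finset.range q, ρ ^ i := by
  have := geom_sum_mul ρ q
  rw [h.pow_eq_one, sub_self, mul_sub, mul_one] at this
  exact sub_eq_zero.mp this

theorem sum_mul_pow (h : IsDihedralPair q ρ σ) (j : ℕ) :
    (∑ i ∈ Finset.range q, ρ ^ i) * ρ ^ j = ∑ i ∈ Finset.range q, ρ ^ i := by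
  induction j with
  | zero => simp
  | succ j ih => rw [pow_succ, ← mul_assoc, ih, h.sum_mul]

theorem commute_sum (h : IsDihedralPair q ρ σ) :
    Commute σ (∑ i ∈ Finset.range q, ρ ^ i) := by
  have h1 := Finset.sum_range_reflect (fun i => ρ ^ i) q
  have h2 : (∑ i ∈ Finset.range q, ρ ^ i) * σ =
      σ * (ρ * ∑ i ∈ Finset.range q, ρ ^ (q - 1 - i)) := by
    rw [Finset.sum_mul, Finset.mul_sum, Finset.mul_sum]
    refine Finset.sum_congr rfl fun i hi => ?_
    rw [← pow_succ']
    exact h.pow_mul (by have := Finset.mem_range.mp hi; omega)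
  rw [h1, h.mul_sum] at h2
  exact h2.symm

end IsDihedralPair

section Determinant

variable {𝕜 W W₁ W₂ W₃ : Type*} [Field 𝕜] [CharZero 𝕜] [AddCommGroup W] [AddCommGroup W₁]
  [AddCommGroup W₂] [AddCommGroup W₃] [Module 𝕜 W] [Module 𝕜 W₁] [Module 𝕜 W₂] [Module 𝕜 W₃]
  [FiniteDimensional 𝕜 W] [FiniteDimensional 𝕜 W₁] [FiniteDimensional 𝕜 W₂]
  [FiniteDimensional 𝕜 W₃]

theorem IsDihedralPair.det_relation {q : ℕ} {ρ σ : Module.End 𝕜 W} (h : IsDihedralPair q ρ σ)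
    (i₁ : W₁ →ₗ[𝕜] W) (i₂ : W₂ →ₗ[𝕜] W) (i₃ : W₃ →ₗ[𝕜] W) (hi₁ : Function.Injective i₁)
    (hi₂ : Function.Injective i₂) (hi₃ : Function.Injective i₃)
    (h₁ : ∀ g, ρ (i₁ g) = i₁ g) (h₂ : ∀ a, σ (i₂ a) = i₂ a)
    (h₃ : ∀ w, ρ w = w → σ w = w → ∃ d, i₃ d = w)
    (hdim : Module.finrank 𝕜 W + 2 * Module.finrank 𝕜 W₃ =
      Module.finrank 𝕜 W₁ + 2 * Module.finrank 𝕜 W₂)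
    {A : Module.End 𝕜 W} {A₁ : Module.End 𝕜 W₁} {A₂ : Module.End 𝕜 W₂} {A₃ : Module.End 𝕜 W₃}
    (hρ : Commute ρ A)
    (hA₁ : ∀ g, A (i₁ g) = i₁ (A₁ g)) (hA₂ : ∀ g, A (i₂ g) = i₂ (A₂ g))
    (hA₃ : ∀ g, A (i₃ g) = i₃ (A₃ g)) :
    LinearMap.det A * LinearMap.det A₃ ^ 2 = LinearMap.det A₁ * LinearMap.det A₂ ^ 2 := by
  set N : Module.End 𝕜 W := ∑ i ∈ Finset.range q, ρ ^ i with hN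
  have hq0 : (q : 𝕜) ≠ 0 := Nat.cast_ne_zero.mpr h.odd.pos.ne'
  have hNρ : ∀ w, ρ w = w → N w = q • w := fun w hw => by
    rw [hN, LinearMap.sum_apply, Finset.sum_congr rfl (g := fun _ => w)]
    · simp
    · intro i hi
      clear hi
      induction i with
      | zero => rfl
      | succ i ih => rw [pow_succ, Module.End.mul_apply, hw, ih]
  have hNA : Commute N A := Commute.sum_left _ _ _ fun i _ => hρ.pow_left i
  have hr : ∀ a, ∃ d, i₃ d = N (i₂ a) := fun a => h₃ _
    (by rw [← Module.End.mul_apply, h.mul_sum])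
    (by rw [← Module.End.mul_apply, h.commute_sum.eq, Module.End.mul_apply, h₂])
  obtain ⟨ν, hν⟩ : ∃ ν : W₂ →ₗ[𝕜] W₃, ∀ a, i₃ (ν a) = N (i₂ a) := by
    choose f hf using hr
    exact ⟨{ toFun := f
             map_add' := fun x y => hi₃ (by rw [hf, map_add, map_add, map_add, hf, hf])
             map_smul' := fun c x => hi₃ (by
               rw [hf, map_smul, map_smul, map_smul, hf, RingHom.id_apply]) }, hf⟩
  obtain ⟨m, hm⟩ := h.odd
  set τ := ρ ^ m with hτ
  -- `τ` maps vectors fixed by `σ` to vectors fixed by `σ * ρ`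
  have hτσ : σ * ρ * τ = τ * σ := by
    rw [hτ, mul_assoc, ← pow_succ', h.pow_mul (by omega : m + (m + 1) = q)]
  have hNτ : N * τ = N := h.sum_mul_pow m
  have hτA : Commute τ A := hρ.pow_left m
  let Φ : W₁ × W₂ × W₂ →ₗ[𝕜] W × W₃ × W₃ :=
    (i₁.coprod (i₂.coprod (τ ∘ₗ i₂))).prod ((ν.prodMap ν) ∘ₗ LinearMap.snd _ _ _)
  have hΦ : ∀ g a b, Φ (g, a, b) = (i₁ g + (i₂ a + τ (i₂ b)), ν a, ν b) := fun _ _ _ => rfl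
  have hinj : Function.Injective Φ := by
    rw [injective_iff_map_eq_zero]
    rintro ⟨g, a, b⟩ h0
    rw [hΦ, Prod.mk_eq_zero, Prod.mk_eq_zero] at h0
    obtain ⟨h0, ha, hb⟩ := h0
    have ha' : N (i₂ a) = 0 := by rw [← hν, ha, map_zero]
    have hb' : N (τ (i₂ b)) = 0 := by
      rw [← Module.End.mul_apply, hNτ, ← hν, hb, map_zero]
    have hg : g = 0 := by
      have := congrArg N h0
      rw [map_add, map_add, ha', hb', hNρ _ (h₁ g), map_zero, add_zero, add_zero,
        ← Nat.cast_smul_eq_nsmul 𝕜, smul_eq_zero] at this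
      exact hi₁ ((this.resolve_left hq0).trans (map_zero _).symm)
    rw [hg, map_zero, zero_add] at h0
    have hfix : (σ * ρ) (τ (i₂ b)) = τ (i₂ b) := by
      rw [← Module.End.mul_apply, hτσ, Module.End.mul_apply, h₂]
    have hy : τ (i₂ b) = - i₂ a := (neg_eq_of_add_eq_zero_right h0).symm
    rw [hy, map_neg, neg_inj] at hfix
    have hfix' : ρ (i₂ a) = i₂ a := by
      have := congrArg σ hfix
      rwa [← Module.End.mul_apply, ← mul_assoc, h.mul_self, one_mul, h₂] at this
    have hia : i₂ a = 0 := by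
      rw [hNρ _ hfix', ← Nat.cast_smul_eq_nsmul 𝕜, smul_eq_zero] at ha'
      exact ha'.resolve_left hq0
    rw [hia, neg_zero] at hy
    have hib : i₂ b = 0 := by
      have := congrArg (ρ ^ (m + 1)) hy
      rwa [hτ, ← Module.End.mul_apply, ← pow_add, (by omega : m + 1 + m = q), h.pow_eq_one,
        map_zero, Module.End.one_apply] at this
    rw [hg, hi₂ (hia.trans (map_zero _).symm), hi₂ (hib.trans (map_zero _).symm)]
    rfl
  let Ψ := LinearEquiv.ofInjectiveOfFinrankEq Φ hinj (by
    simp only [Module.finrank_prod]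
    omega)
  have hΨ : ∀ x, Ψ x = Φ x := fun _ => rfl
  have hconj : (Ψ : W₁ × W₂ × W₂ →ₗ[𝕜] W × W₃ × W₃) ∘ₗ
      (A₁.prodMap (A₂.prodMap A₂)) ∘ₗ (Ψ.symm : W × W₃ × W₃ →ₗ[𝕜] W₁ × W₂ × W₂) =
      A.prodMap (A₃.prodMap A₃) := by
    refine LinearMap.ext fun y => ?_
    obtain ⟨⟨g, a, b⟩, rfl⟩ := Ψ.surjective y
    have hνA : ∀ a, ν (A₂ a) = A₃ (ν a) := fun a => hi₃ (by
      rw [hν, ← hA₃, hν, ← hA₂, ← Module.End.mul_apply, ← Module.End.mul_apply, hNA.eq])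
    have hτA' : τ (i₂ (A₂ b)) = A (τ (i₂ b)) := by
      rw [← hA₂, ← Module.End.mul_apply, hτA.eq, Module.End.mul_apply]
    simp only [LinearMap.comp_apply, LinearEquiv.coe_coe, LinearEquiv.symm_apply_apply]
    simp only [hΨ, LinearMap.prodMap_apply, hΦ, hνA, map_add, hA₁, hA₂, hτA']
  have := congrArg LinearMap.det hconj
  rw [LinearMap.det_conj, LinearMap.det_prodMap, LinearMap.det_prodMap, LinearMap.det_prodMap,
    LinearMap.det_prodMap] at this
  rw [pow_two, pow_two]
  exact this.symm

end Determinant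

section UnitBase

variable (E L : Type*) [Field E] [Field L] [Algebra E L]

/-- The inclusion of `ℤ × 𝓞_Eˣ` in `ℤ × 𝓞_Lˣ`. -/
noncomputable def extUnitBase : ℤ × Additive (𝓞 E)ˣ →+ ℤ × Additive (𝓞 L)ˣ :=
  (AddMonoidHom.id ℤ).prodMap
    (MonoidHom.toAdditive (Units.map (algebraMap (𝓞 E) (𝓞 L)).toMonoidHom))

variable {E L}

theorem coe_extUnitBase (a : ℤ × Additive (𝓞 E)ˣ) :
    (((extUnitBase E L a).2.toMul : (𝓞 L)ˣ) : L) = algebraMap E L ((a.2.toMul : (𝓞 E)ˣ) : E) :=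
  rfl

theorem extUnitBase_injective : Function.Injective (extUnitBase E L) := by
  intro a b h
  refine Prod.ext (congrArg (fun c : ℤ × Additive (𝓞 L)ˣ => c.1) h) (Additive.unitsInt_ext ?_)
  apply (algebraMap E L).injective
  rw [← coe_extUnitBase, ← coe_extUnitBase, h]

theorem placeLog_extUnitBase [NumberField E] [NumberField L] (w : InfinitePlace L)
    (a : ℤ × Additive (𝓞 E)ˣ) :
    placeLog w (extUnitBase E L a) = placeLog (w.comap (algebraMap E L)) a := by
  rw [placeLog_apply, placeLog_apply, coe_extUnitBase]
  rfl

end UnitBase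

section FixedUnits

variable {k L : Type*} [Field k] [Field L] [NumberField k] [NumberField L] [Algebra k L]
  [IsGalois k L] (T : Subgroup (L ≃ₐ[k] L)) (E : Type*) [Field E] [NumberField E] [Algebra E L]
  [IsGaloisGroup T E L]

theorem exists_extUnitBase_eq_iff (a : ℤ × Additive (𝓞 L)ˣ) :
    (∃ b, extUnitBase E L b = a) ↔ ∀ g ∈ T, extUnitRep k L g a = a := by
  constructor
  · rintro ⟨b, rfl⟩ g hg
    refine Prod.ext rfl (Additive.unitsInt_ext ?_)
    rw [extUnitRep_apply, coe_unitAut, coe_extUnitBase]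
    exact smul_algebraMap (⟨g, hg⟩ : T) (((b.2.toMul : (𝓞 E)ˣ) : 𝓞 E) : E)
  · intro h
    have hmem : ∀ u : (𝓞 L)ˣ, (∀ g ∈ T, g (u : L) = u) →
        ∃ y : 𝓞 E, algebraMap E L (y : E) = u := fun u hu => by
      obtain ⟨y, hy⟩ := Algebra.IsInvariant.isInvariant (A := E) (G := T) (u : L)
        fun g => hu g.1 g.2
      have : IsIntegral ℤ (algebraMap E L y) := by
        rw [hy]
        exact RingOfIntegers.isIntegral_coe _
      exact ⟨⟨y, (isIntegral_algebraMap_iff (algebraMap E L).injective).mp this⟩, hy⟩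
    have hfix : ∀ g ∈ T, g ((a.2.toMul : (𝓞 L)ˣ) : L) = ((a.2.toMul : (𝓞 L)ˣ) : L) :=
      fun g hg => by
        rw [← coe_unitAut]
        exact congrArg (fun b : ℤ × Additive (𝓞 L)ˣ => ((b.2.toMul : (𝓞 L)ˣ) : L)) (h g hg)
    obtain ⟨y, hy⟩ := hmem a.2.toMul hfix
    have hinv : ∀ u : (𝓞 L)ˣ, ((u⁻¹ : (𝓞 L)ˣ) : L) = (u : L)⁻¹ := fun u => by
      refine eq_inv_of_mul_eq_one_left ?_
      rw [← map_mul, Units.inv_mul, map_one]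
    obtain ⟨y', hy'⟩ := hmem (a.2.toMul)⁻¹ fun g hg => by rw [hinv, map_inv₀, hfix g hg]
    have hyy : y * y' = 1 := by
      apply RingOfIntegers.ext
      apply (algebraMap E L).injective
      change algebraMap E L ((y : E) * y') = algebraMap E L 1
      rw [map_mul, hy, hy', hinv, map_one]
      exact mul_inv_cancel₀ (by simp)
    exact ⟨(a.1, Additive.ofMul (Units.mk y y' hyy (by rw [mul_comm, hyy]))),
      Prod.ext rfl (Additive.unitsInt_ext hy)⟩

/-- The regulator of a fixed field `E = L^T` is computed by the `T`-invariants of the span of an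
equivariant family. -/
theorem exists_end_placeLog [DecidableEq (InfinitePlace L)]
    {ε : InfinitePlace L → ℤ × Additive (𝓞 L)ˣ}
    (hε : ∀ (g : L ≃ₐ[k] L) x, extUnitRep k L g (ε x) = ε (g • x))
    (hdet : (Matrix.of fun w x => placeLog w (ε x)).det ≠ 0)
    {Λ : AddSubgroup (ℤ × Additive (𝓞 L)ˣ)}
    (hΛ : ∀ a, a ∈ Λ ↔ ∀ g ∈ T, extUnitRep k L g a = a) :
    ∃ A : Module.End ℝ (InfinitePlace E → ℝ),
      (∀ (f : InfinitePlace E → ℝ) w, Matrix.toLin' (Matrix.of fun w x => placeLog w (ε x))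
        (fun x => f (x.comap (algebraMap E L))) w = A f (w.comap (algebraMap E L))) ∧
      |LinearMap.det A| * (2 ^ InfinitePlace.nrComplexPlaces E * Units.torsionOrder E) =
        Module.finrank ℚ E * Units.regulator E * ((zcomb ε).range.relIndex Λ) ∧
      (zcomb ε).range.relIndex Λ ≠ 0 := by
  classical
  have := IsGaloisGroup.isGalois T E L
  let π : InfinitePlace L → InfinitePlace E := fun w => w.comap (algebraMap E L)
  have hπs : Function.Surjective π := InfinitePlace.comap_surjective
  have hπ : ∀ w w', π w = π w' ↔ ∃ h : T, h • w' = w :=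
    comap_algebraMap_eq_iff_exists_smul E L T fun _ _ _ => rfl
  have hπg : ∀ g ∈ T, ∀ w, π (g • w) = π w := fun g hg w => (hπ _ _).mpr ⟨⟨g, hg⟩, rfl⟩
  have hc : ∀ z, ∃ b, extUnitBase E L b = ∑ x with π x = z, ε x := fun z => by
    rw [exists_extUnitBase_eq_iff T E]
    intro g hg
    rw [map_sum]
    simp only [hε]
    refine Finset.sum_equiv (MulAction.toPerm g) (fun x => ?_) fun _ _ => rfl
    simp [hπg g hg]
  choose c hc using hc
  have hcomb : ∀ f : InfinitePlace E → ℤ, extUnitBase E L (zcomb c f) = zcomb ε (f ∘ π) :=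
    fun f => by
      rw [zcomb_apply, zcomb_apply, map_sum, ← Finset.sum_fiberwise _ π]
      refine Finset.sum_congr rfl fun z _ => ?_
      rw [map_zsmul, hc, ← Finset.sum_zsmul]
      refine Finset.sum_congr rfl fun x hx => ?_
      rw [Function.comp_apply, (Finset.mem_filter.mp hx).2]
  have hA : ∀ (f : InfinitePlace E → ℝ) w,
      Matrix.toLin' (Matrix.of fun w x => placeLog w (ε x)) (fun x => f (π x)) w =
        Matrix.toLin' (Matrix.of fun v z => placeLog v (c z)) f (π w) := fun f w => by
    rw [Matrix.toLin'_apply, Matrix.toLin'_apply]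
    simp only [Matrix.mulVec, dotProduct, Matrix.of_apply]
    rw [← Finset.sum_fiberwise _ π]
    refine Finset.sum_congr rfl fun z _ => ?_
    rw [← placeLog_extUnitBase, hc, map_sum, Finset.sum_mul]
    refine Finset.sum_congr rfl fun x hx => ?_
    rw [(Finset.mem_filter.mp hx).2]
  have hdetE : (Matrix.of fun v z => placeLog v (c z)).det ≠ 0 := by
    intro h0
    obtain ⟨f, hf0, hf⟩ := Matrix.exists_mulVec_eq_zero_iff.mpr h0
    refine hf0 (funext fun z => ?_)
    obtain ⟨w, rfl⟩ := hπs z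
    refine congrFun (Matrix.eq_zero_of_mulVec_eq_zero (v := fun x => f (π x)) hdet
      (funext fun w => ?_)) w
    rw [← Matrix.toLin'_apply, hA, Matrix.toLin'_apply, hf]
    rfl
  have hinj := zcomb_injective_of_det_ne_zero hdet
  have hmap : (zcomb c).range.map (extUnitBase E L) = (zcomb ε).range ⊓ Λ := by
    ext a
    rw [AddSubgroup.mem_inf, hΛ, ← exists_extUnitBase_eq_iff T E]
    constructor
    · rintro ⟨_, ⟨f, rfl⟩, rfl⟩
      exact ⟨⟨_, (hcomb f).symm⟩, ⟨_, rfl⟩⟩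
    · rintro ⟨⟨f, rfl⟩, hfix⟩
      rw [exists_extUnitBase_eq_iff T E] at hfix
      have hf : ∀ g ∈ T, ∀ x, f (g • x) = f x := fun g hg x => by
        have h1 : extUnitRep k L g (zcomb ε f) = zcomb ε fun x => f (g⁻¹ • x) := by
          rw [zcomb_apply, zcomb_apply, map_sum,
            ← Equiv.sum_comp (MulAction.toPerm g) fun x => f (g⁻¹ • x) • ε x]
          refine Finset.sum_congr rfl fun x _ => ?_
          rw [map_zsmul, hε, MulAction.toPerm_apply, inv_smul_smul]
        have := congrFun (hinj (h1.symm.trans (hfix g hg))) (g • x)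
        rw [← this, inv_smul_smul]
      refine ⟨_, ⟨fun z => f (Function.surjInv hπs z), rfl⟩, ?_⟩
      rw [hcomb]
      congr 1
      ext x
      obtain ⟨h, hh⟩ := (hπ _ _).mp (Function.surjInv_eq hπs (π x))
      rw [Function.comp_apply, ← hh]
      exact hf h.1 h.2 x
  have hindex : (zcomb c).range.index = (zcomb ε).range.relIndex Λ := by
    have hΛ' : Λ = AddSubgroup.map (extUnitBase E L) ⊤ := by
      ext a
      rw [hΛ, ← exists_extUnitBase_eq_iff T E]
      simp
    rw [← AddSubgroup.inf_relIndex_right, ← hmap, hΛ',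
      AddSubgroup.relIndex_map_map_of_injective _ _ extUnitBase_injective,
      AddSubgroup.relIndex_top_right]
  refine ⟨Matrix.toLin' (Matrix.of fun v z => placeLog v (c z)), hA, ?_, ?_⟩
  · rw [LinearMap.det_toLin', ← hindex]
    exact abs_det_placeLog E hdetE
  · rw [← hindex]
    exact index_range_zcomb_ne_zero E hdetE

end FixedUnits

theorem AddSubgroup.relIndex_eq_mul_relIndex_map {M M' : Type*} [AddCommGroup M] [AddCommGroup M']
    (f : M →+ M') (S P : AddSubgroup M) :
    S.relIndex P = S.relIndex (P ⊓ f.ker) * ((P ⊓ S).map f).relIndex (P.map f) := by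
  have h1 : ((P ⊓ S).map f).relIndex (P.map f) = (P ⊓ S ⊔ P ⊓ f.ker).relIndex P := by
    have h3 : P ⊔ f.ker = P ⊔ (P ⊓ S ⊔ f.ker) := by
      rw [← sup_assoc, sup_eq_left.mpr (inf_le_left : P ⊓ S ≤ P)]
    rw [relIndex_map_map, h3, relIndex_sup_right, ← inf_relIndex_right,
      sup_inf_assoc_of_le _ inf_le_left, inf_comm f.ker]
  have h2 : S.relIndex (P ⊓ f.ker) = (P ⊓ S).relIndex (P ⊓ S ⊔ P ⊓ f.ker) := by
    rw [relIndex_sup_left, ← inf_relIndex_right, ← inf_relIndex_right (P ⊓ S)]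
    congr 1
    ext x
    simp only [mem_inf]
    tauto
  rw [h1, h2, relIndex_mul_relIndex _ _ _ le_sup_left (sup_le inf_le_left inf_le_left),
    inf_comm, inf_relIndex_right]

section Lattice

variable {M : Type*} [AddCommGroup M]

/-- The fixed points of an endomorphism. -/
def Module.End.fixed (φ : Module.End ℤ M) : AddSubgroup M where
  carrier := {x | φ x = x}
  zero_mem' := map_zero φ
  add_mem' := by
    intro a b (ha : φ a = a) (hb : φ b = b)
    change φ (a + b) = a + b
    rw [map_add, ha, hb]
  neg_mem' := by
    intro a (ha : φ a = a)
    change φ (-a) = -a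
    rw [map_neg, ha]

theorem Module.End.mem_fixed {φ : Module.End ℤ M} {x : M} : x ∈ fixed φ ↔ φ x = x := Iff.rfl

variable (q : ℕ) (ρ σ : Module.End ℤ M)

/-- The norm of a cyclic group of order `q` generated by `ρ`. -/
def cycNorm : Module.End ℤ M := ∑ i ∈ Finset.range q, ρ ^ i

/-- The kernel of the norm on the fixed points of `σ`. -/
def normKer : AddSubgroup M := Module.End.fixed σ ⊓ (cycNorm q ρ : M →+ M).ker

/-- The fixed points of `σ` of the form `x - ρ x`. -/
def twistBoundary : AddSubgroup M := Module.End.fixed σ ⊓ ((1 - ρ : Module.End ℤ M) : M →+ M).range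

/-- The norms of the fixed points of `σ`. -/
def normImage : AddSubgroup M := (Module.End.fixed σ).map (cycNorm q ρ : M →+ M)

variable {q ρ σ}

theorem IsDihedralPair.relIndex_relation (h : IsDihedralPair q ρ σ) (S : AddSubgroup M)
    (hρ : ∀ x ∈ S, ρ x ∈ S) (hσ : ∀ x ∈ S, σ x ∈ S)
    (hC : ∀ x ∈ S, σ x = x → cycNorm q ρ x = 0 → ∃ y ∈ S, y - ρ y = x)
    (hD : ∀ x ∈ S, ρ x = x → σ x = x → ∃ y ∈ S, σ y = y ∧ cycNorm q ρ y = x) :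
    S.index * S.relIndex (Module.End.fixed ρ ⊓ Module.End.fixed σ) ^ 2 *
        (twistBoundary ρ σ).relIndex (normKer q ρ σ) =
      S.relIndex (Module.End.fixed ρ) * S.relIndex (Module.End.fixed σ) ^ 2 *
        (normImage q ρ σ).relIndex (Module.End.fixed ρ ⊓ Module.End.fixed σ) := by
  open Module.End in
  have hρρ : ∀ x ∈ S, ∀ i, (ρ ^ i) x ∈ S := fun x hx i => by
    induction i with
    | zero => exact hx
    | succ i ih =>
      rw [pow_succ', mul_apply]
      exact hρ _ ih
  have hNS : ∀ x ∈ S, cycNorm q ρ x ∈ S := fun x hx => by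
    rw [cycNorm, LinearMap.sum_apply]
    exact S.sum_mem fun i _ => hρρ x hx i
  have hρN : ∀ x, ρ (cycNorm q ρ x) = cycNorm q ρ x := fun x => by
    rw [← mul_apply, cycNorm, h.mul_sum]
  have hNρ : ∀ x, cycNorm q ρ (ρ x) = cycNorm q ρ x := fun x => by
    rw [← mul_apply, cycNorm, h.sum_mul]
  have hσN : ∀ x, σ (cycNorm q ρ x) = cycNorm q ρ (σ x) := fun x => by
    rw [← mul_apply, ← mul_apply, cycNorm, h.commute_sum.eq]
  have hσσ : ∀ x, σ (σ x) = x := fun x => by rw [← mul_apply, h.mul_self, one_apply]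
  have hρσρ : ∀ x, ρ (σ (ρ x)) = σ x := fun x => by
    rw [← mul_apply, ← mul_apply, h.conj]
  set D := fixed ρ ⊓ fixed σ with hDdef
  -- the elements `z` such that `z + σ (ρ z)` is invariant
  let Z : AddSubgroup M := D.comap ((1 + σ * ρ : Module.End ℤ M) : M →+ M)
  have hZ : ∀ z, z ∈ Z ↔ z + σ (ρ z) ∈ D := fun z => Iff.rfl
  have hZ' : ∀ z, z ∈ Z ↔ σ (z - ρ z) = z - ρ z := fun z => by
    rw [hZ, hDdef, AddSubgroup.mem_inf, mem_fixed, mem_fixed]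
    simp only [map_add, map_sub, hσσ, hρσρ]
    grind
  have e1 : S.index * S.relIndex D = S.relIndex Z * S.relIndex (fixed (σ * ρ)) := by
    let f : M × D →+ M := ((1 + σ * ρ : Module.End ℤ M) : M →+ M).coprod D.subtype
    have hf : ∀ x d, f (x, d) = x + σ (ρ x) + d := fun _ _ => rfl
    let S' := S.prod (S.addSubgroupOf D)
    have hker : S'.relIndex f.ker = S.relIndex Z := by
      rw [AddSubgroup.relIndex_eq_mul_relIndex_map (AddMonoidHom.fst M D) S' f.ker]
      have hbot : f.ker ⊓ (AddMonoidHom.fst M D).ker = ⊥ := by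
        rw [eq_bot_iff]
        rintro ⟨x, d⟩ ⟨h1, h2⟩
        obtain rfl : x = 0 := h2
        have h3 : f (0, d) = 0 := h1
        rw [hf, map_zero, map_zero, add_zero, zero_add] at h3
        exact Prod.ext rfl (Subtype.ext h3)
      have hmem : ∀ x d, (x, d) ∈ f.ker ↔ x + σ (ρ x) = -d := fun x d => by
        rw [AddMonoidHom.mem_ker, hf, add_eq_zero_iff_eq_neg]
      have hZmap : f.ker.map (AddMonoidHom.fst M D) = Z := by
        ext x
        rw [hZ]
        constructor
        · rintro ⟨⟨y, d⟩, h1, rfl⟩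
          replace h1 := (hmem y d).mp h1
          change y + σ (ρ y) ∈ D
          rw [h1]
          exact D.neg_mem d.2
        · intro hx
          exact ⟨(x, -⟨_, hx⟩), (hmem _ _).mpr (by simp), rfl⟩
      have hZSmap : (f.ker ⊓ S').map (AddMonoidHom.fst M D) = Z ⊓ S := by
        ext x
        rw [AddSubgroup.mem_inf, hZ]
        constructor
        · rintro ⟨⟨y, d⟩, ⟨h1, h2⟩, rfl⟩
          replace h1 := (hmem y d).mp h1
          change y + σ (ρ y) ∈ D ∧ y ∈ S
          rw [h1]
          exact ⟨D.neg_mem d.2, h2.1⟩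
        · rintro ⟨hx, hxS⟩
          exact ⟨(x, -⟨_, hx⟩), ⟨(hmem _ _).mpr (by simp), hxS,
            S.neg_mem (S.add_mem hxS (hσ _ (hρ _ hxS)))⟩, rfl⟩
      rw [hbot, hZmap, hZSmap, inf_comm, AddSubgroup.inf_relIndex_right,
        AddSubgroup.relIndex_bot_right, one_mul]
    obtain ⟨m, hm⟩ := h.odd
    let P : Module.End ℤ M := ∑ i ∈ Finset.range m, ρ ^ (i + 1)
    have hN : ∀ y, σ (ρ y) = y → cycNorm q ρ y = y + P y + σ (ρ (P y)) := fun y hy => by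
      have h1 : cycNorm q ρ = 1 + P + ∑ i ∈ Finset.range m, ρ ^ (q - (i + 1)) := by
        rw [cycNorm]
        conv_lhs => rw [hm]
        rw [Finset.sum_range_succ', two_mul, Finset.sum_range_add, pow_zero,
          ← Finset.sum_range_reflect (fun i => ρ ^ (m + i + 1)), add_comm, add_assoc]
        congr 2
        refine Finset.sum_congr rfl fun i hi => ?_
        congr 1
        have := Finset.mem_range.mp hi
        omega
      have h2 : σ (ρ (P y)) = (∑ i ∈ Finset.range m, ρ ^ (q - (i + 1))) y := by
        simp only [P, LinearMap.sum_apply, map_sum]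
        refine Finset.sum_congr rfl fun i hi => ?_
        have h3 : q - (i + 1) + (i + 1) = q := by
          have := Finset.mem_range.mp hi
          omega
        have h4 : σ y = ρ y := by rw [← hσσ (ρ y), hy]
        have := LinearMap.congr_fun (h.pow_mul h3) (σ y)
        rw [mul_apply, mul_apply, hσσ, h4] at this
        rw [this, ← mul_apply ρ, ← mul_apply (ρ ^ (i + 1)), pow_mul_comm']
      rw [h1, h2]
      rfl
    have hND : ∀ y, σ (ρ y) = y → cycNorm q ρ y ∈ D := fun y hy => by
      refine ⟨hρN y, ?_⟩
      change σ _ = _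
      rw [hσN, ← hNρ y, ← hσσ (ρ y), hy]
    have hrange : AddSubgroup.map f ⊤ = fixed (σ * ρ) := by
      ext y
      constructor
      · rintro ⟨⟨x, d⟩, -, rfl⟩
        have h1 : ρ (d : M) = d := d.2.1
        have h2 : σ (d : M) = d := d.2.2
        rw [mem_fixed, hf, mul_apply]
        simp only [map_add, hρσρ, hσσ, h1, h2]
        abel
      · intro hy
        refine ⟨(-P y, ⟨_, hND y hy⟩), trivial, ?_⟩
        rw [hf]
        change _ + cycNorm q ρ y = y
        rw [hN y hy, map_neg, map_neg]
        abel
    have hrangeS : AddSubgroup.map f (⊤ ⊓ S') = fixed (σ * ρ) ⊓ S := by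
      ext y
      constructor
      · rintro ⟨⟨x, d⟩, ⟨-, hx, hd⟩, rfl⟩
        refine ⟨hrange ▸ ⟨_, trivial, rfl⟩, ?_⟩
        exact S.add_mem (S.add_mem hx (hσ _ (hρ _ hx))) hd
      · rintro ⟨hy, hyS⟩
        refine ⟨(-P y, ⟨_, hND y hy⟩), ⟨trivial, S.neg_mem ?_, hNS y hyS⟩, ?_⟩
        · simp only [P, LinearMap.sum_apply]
          exact S.sum_mem fun i _ => hρρ y hyS _
        rw [hf]
        change _ + cycNorm q ρ y = y
        rw [hN y hy, map_neg, map_neg]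
        abel
    have := AddSubgroup.relIndex_eq_mul_relIndex_map f S' ⊤
    rwa [AddSubgroup.relIndex_top_right, AddSubgroup.index_prod, top_inf_eq, hker, hrange, hrangeS,
      inf_comm, AddSubgroup.inf_relIndex_right] at this
  have e2 : S.relIndex (fixed (σ * ρ)) = S.relIndex (fixed σ) := by
    obtain ⟨m, hm⟩ := h.odd
    have h1 : ∀ x, (ρ ^ (m + 1)) ((ρ ^ m) x) = x := fun x => by
      rw [← mul_apply, ← pow_add, (by omega : m + 1 + m = q), h.pow_eq_one, one_apply]
    have h2 : ∀ x, (ρ ^ m) ((ρ ^ (m + 1)) x) = x := fun x => by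
      rw [← mul_apply, ← pow_add, (by omega : m + (m + 1) = q), h.pow_eq_one, one_apply]
    have h3 : ∀ x, (ρ ^ m) (σ x) = σ (ρ ((ρ ^ m) x)) := fun x => by
      rw [← mul_apply, h.pow_mul (by omega : m + (m + 1) = q), pow_succ', mul_apply, mul_apply]
    have hinj : Function.Injective ((ρ ^ m : Module.End ℤ M) : M →+ M) :=
      Function.LeftInverse.injective h1
    rw [← AddSubgroup.relIndex_map_map_of_injective S (fixed σ) hinj]
    congr 1
    · ext x
      exact ⟨fun hx => ⟨_, hρρ x hx (m + 1), h2 x⟩, by rintro ⟨y, hy, rfl⟩; exact hρρ y hy m⟩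
    · ext x
      constructor
      · intro hx
        refine ⟨_, ?_, h2 x⟩
        change σ _ = _
        rw [← h1 (σ _), h3, h2]
        exact congrArg _ hx
      · rintro ⟨y, hy, rfl⟩
        change σ (ρ ((ρ ^ m) y)) = (ρ ^ m) y
        rw [← h3]
        exact congrArg _ hy
  have hB : twistBoundary ρ σ ≤ normKer q ρ σ := by
    rintro x ⟨h1, ⟨y, rfl⟩⟩
    refine ⟨h1, ?_⟩
    change cycNorm q ρ (y - ρ y) = 0
    rw [map_sub, hNρ, sub_self]
  have e3 : S.relIndex Z = S.relIndex (fixed ρ) *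
      (normKer q ρ σ ⊓ S).relIndex (twistBoundary ρ σ) := by
    rw [AddSubgroup.relIndex_eq_mul_relIndex_map ((1 - ρ : Module.End ℤ M) : M →+ M) S Z]
    congr 2
    · ext z
      have h1 : z ∈ ((1 - ρ : Module.End ℤ M) : M →+ M).ker ↔ ρ z = z :=
        sub_eq_zero.trans eq_comm
      rw [AddSubgroup.mem_inf, hZ', h1, mem_fixed, and_iff_right_iff_imp]
      intro hz
      rw [hz, sub_self, map_zero]
    · ext y
      constructor
      · rintro ⟨z, ⟨hz, hzS⟩, rfl⟩
        exact ⟨hB ⟨(hZ' z).mp hz, z, rfl⟩, S.sub_mem hzS (hρ z hzS)⟩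
      · rintro ⟨⟨h1, h2⟩, h3⟩
        obtain ⟨z, hz, rfl⟩ := hC y h3 h1 h2
        exact ⟨z, ⟨(hZ' z).mpr h1, hz⟩, rfl⟩
    · ext y
      constructor
      · rintro ⟨z, hz, rfl⟩
        exact ⟨(hZ' z).mp hz, z, rfl⟩
      · rintro ⟨h1, ⟨z, rfl⟩⟩
        exact ⟨z, (hZ' z).mpr h1, rfl⟩
  have e4 : (normKer q ρ σ ⊓ S).relIndex (twistBoundary ρ σ) *
      (twistBoundary ρ σ).relIndex (normKer q ρ σ) = S.relIndex (normKer q ρ σ) := by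
    rw [AddSubgroup.relIndex_mul_relIndex _ _ _ _ hB, inf_comm, AddSubgroup.inf_relIndex_right]
    rintro y ⟨⟨h1, h2⟩, h3⟩
    obtain ⟨z, hz, rfl⟩ := hC y h3 h1 h2
    exact ⟨h1, z, rfl⟩
  have e5 : S.relIndex (fixed σ) = S.relIndex (normKer q ρ σ) *
      ((fixed σ ⊓ S).map (cycNorm q ρ : M →+ M)).relIndex (normImage q ρ σ) :=
    AddSubgroup.relIndex_eq_mul_relIndex_map _ _ _
  have hND' : normImage q ρ σ ≤ D := by
    rintro _ ⟨y, hy, rfl⟩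
    refine ⟨hρN y, ?_⟩
    change σ (cycNorm q ρ y) = cycNorm q ρ y
    rw [hσN]
    exact congrArg _ hy
  have e6 : ((fixed σ ⊓ S).map (cycNorm q ρ : M →+ M)).relIndex (normImage q ρ σ) *
      (normImage q ρ σ).relIndex D = S.relIndex D := by
    have hle : (fixed σ ⊓ S).map (cycNorm q ρ : M →+ M) ≤ normImage q ρ σ :=
      AddSubgroup.map_mono inf_le_left
    rw [AddSubgroup.relIndex_mul_relIndex _ _ _ hle hND',
      ← AddSubgroup.inf_relIndex_right S]
    congr 1
    ext x
    constructor
    · rintro ⟨y, ⟨hy, hyS⟩, rfl⟩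
      exact ⟨hNS y hyS, hND' ⟨y, hy, rfl⟩⟩
    · rintro ⟨hxS, h1, h2⟩
      obtain ⟨y, hy, h3, rfl⟩ := hD x hxS h1 h2
      exact ⟨y, ⟨h3, hy⟩, rfl⟩
  rw [e2, e3] at e1
  rw [← e4] at e5
  generalize (normKer q ρ σ ⊓ S).relIndex (twistBoundary ρ σ) = b at *
  generalize (twistBoundary ρ σ).relIndex (normKer q ρ σ) = t at *
  generalize ((fixed σ ⊓ S).map (cycNorm q ρ : M →+ M)).relIndex (normImage q ρ σ) = n at *
  calc S.index * S.relIndex D ^ 2 * t = (S.index * S.relIndex D) * S.relIndex D * t := by ring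
    _ = S.relIndex (fixed ρ) * S.relIndex (fixed σ) * (b * t * n) *
          (normImage q ρ σ).relIndex D := by
        rw [e1, ← e6]
        ring
    _ = _ := by
        rw [← e5]
        ring

end Lattice

theorem isDihedralPair_of_monoidHom {q : ℕ} (hq : Odd q) {R : Type*} [Ring R]
    (φ : DihedralGroup q →* R) : IsDihedralPair q (φ (r 1)) (φ (sr 0)) where
  odd := hq
  pow_eq_one := by rw [← map_pow, r_one_pow_n, map_one]
  mul_self := by rw [← map_mul, sr_mul_self, map_one]
  conj := by rw [← map_mul, ← map_mul, r_mul_sr, sr_mul_r, zero_sub, neg_add_cancel]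

section FreeAction

variable {G X : Type*} [Group G] [MulAction G X]

theorem exists_sum_pow_smul_eq_one {g : G} {q : ℕ} (hg : g ^ q = 1) (hq : 0 < q)
    (hfree : ∀ (x : X), ∀ i < q, g ^ i • x = x → i = 0) :
    ∃ χ : X → ℤ, ∀ x, ∑ i ∈ Finset.range q, χ ((g ^ i)⁻¹ • x) = 1 := by
  classical
  let rep : X → X := fun x =>
    (Quotient.mk (MulAction.orbitRel (Subgroup.zpowers g) X) x).out
  have hrep : ∀ (i : ℕ) x, rep ((g ^ i)⁻¹ • x) = rep x := fun i x => by
    have : (Quotient.mk (MulAction.orbitRel (Subgroup.zpowers g) X) ((g ^ i)⁻¹ • x)) =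
        Quotient.mk _ x :=
      Quotient.sound ⟨⟨(g ^ i)⁻¹, inv_mem (pow_mem (Subgroup.mem_zpowers g) i)⟩, rfl⟩
    simp only [rep, this]
  have hex : ∀ x, ∃ i < q, (g ^ i)⁻¹ • x = rep x := fun x => by
    obtain ⟨⟨_, j, rfl⟩, hj⟩ := Quotient.mk_out (s := MulAction.orbitRel (Subgroup.zpowers g) X) x
    have hq' : (q : ℤ) ≠ 0 := by exact_mod_cast hq.ne'
    refine ⟨((-j) % q).toNat, ?_, ?_⟩
    · have := Int.emod_lt_of_pos (-j) (by exact_mod_cast hq : (0 : ℤ) < q)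
      omega
    · rw [← zpow_natCast, Int.toNat_of_nonneg (Int.emod_nonneg _ hq'), ← zpow_neg]
      refine Eq.trans ?_ hj
      change _ = g ^ j • x
      congr 1
      have : j = -((-j) % q) - q * (-j / q) := by
        have := Int.emod_add_mul_ediv (-j) q
        linarith
      conv_rhs => rw [this, zpow_sub, zpow_mul, zpow_natCast, hg, one_zpow, inv_one, mul_one]
  refine ⟨fun x => if x = rep x then 1 else 0, fun x => ?_⟩
  have hle : ∀ i < q, ∀ d, i + d < q → (g ^ i)⁻¹ • x = (g ^ (i + d))⁻¹ • x → d = 0 := by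
    intro i hi d hd h
    refine hfree x d (by omega) ?_
    rw [← smul_left_cancel_iff (g ^ (i + d)), smul_inv_smul, pow_add, pow_mul_comm, mul_smul,
      smul_inv_smul] at h
    exact h
  obtain ⟨i, hi, hix⟩ := hex x
  simp only [hrep]
  rw [Finset.sum_eq_single i]
  · rw [if_pos hix]
  · intro j hj hji
    rw [if_neg]
    intro hjx
    rw [Finset.mem_range] at hj
    rw [← hix] at hjx
    rcases le_total i j with h | h
    · obtain ⟨d, rfl⟩ := Nat.exists_eq_add_of_le h
      exact hji (by rw [hle i hi d hj hjx.symm, add_zero])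
    · obtain ⟨d, rfl⟩ := Nat.exists_eq_add_of_le h
      exact hji (by rw [hle j hj d hi hjx, add_zero])
  · intro h
    exact absurd (Finset.mem_range.mpr hi) h

theorem sum_pow_smul_eq (g : G) (q : ℕ) (χ : X → ℤ) (x : X) :
    ∃ x', ∑ i ∈ Finset.range q, χ (g ^ i • x) = ∑ i ∈ Finset.range q, χ ((g ^ i)⁻¹ • x') := by
  refine ⟨g ^ (q - 1) • x, ?_⟩
  rw [← Finset.sum_range_reflect]
  refine Finset.sum_congr rfl fun i hi => ?_
  rw [Finset.mem_range] at hi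
  have : q - 1 = i + (q - 1 - i) := by omega
  conv_rhs => rw [this, pow_add, mul_smul, inv_smul_smul]

section Lattice

variable {M : Type*} [AddCommGroup M] [Fintype X] {φ : G →* Module.End ℤ M} {ε : X → M}

theorem map_zcomb_of_equivariant (hε : ∀ g x, φ g (ε x) = ε (g • x)) (g : G) (f : X → ℤ) :
    φ g (zcomb ε f) = zcomb ε fun x => f (g⁻¹ • x) := by
  rw [zcomb_apply, zcomb_apply, map_sum, ← Equiv.sum_comp (MulAction.toPerm g)
    fun x => f (g⁻¹ • x) • ε x]
  refine Finset.sum_congr rfl fun x _ => ?_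
  rw [map_zsmul, hε, MulAction.toPerm_apply, inv_smul_smul]

theorem cycNorm_zcomb (hε : ∀ g x, φ g (ε x) = ε (g • x)) (g : G) (q : ℕ) (f : X → ℤ) :
    cycNorm q (φ g) (zcomb ε f) =
      zcomb ε fun x => ∑ i ∈ Finset.range q, f ((g ^ i)⁻¹ • x) := by
  simp only [cycNorm, LinearMap.sum_apply, ← map_pow, map_zcomb_of_equivariant hε]
  rw [← map_sum]
  congr 1
  ext x
  simp

theorem exists_sub_eq_of_cycNorm_eq_zero {g : G} {q : ℕ}
    {χ : X → ℤ} (hχ : ∀ x, ∑ i ∈ Finset.range q, χ ((g ^ i)⁻¹ • x) = 1)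
    (hε : ∀ g x, φ g (ε x) = ε (g • x)) (hinj : Function.Injective (zcomb ε))
    {a : M} (ha : a ∈ (zcomb ε).range) (hN : cycNorm q (φ g) a = 0) :
    ∃ b ∈ (zcomb ε).range, b - φ g b = a := by
  have hS : ∀ b ∈ (zcomb ε).range, φ g b ∈ (zcomb ε).range := by
    rintro _ ⟨f, rfl⟩
    exact ⟨_, (map_zcomb_of_equivariant hε g f).symm⟩
  have hstep : ∀ (i : ℕ), ∀ b ∈ (zcomb ε).range, ∃ c ∈ (zcomb ε).range,
      c - φ g c = φ (g ^ i) b - b := fun i b hb => by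
    induction i with
    | zero => exact ⟨0, zero_mem _, by simp⟩
    | succ i ih =>
      obtain ⟨c, hc, h⟩ := ih
      have hgb : φ (g ^ i) b ∈ (zcomb ε).range := by
        obtain ⟨f, rfl⟩ := hb
        exact ⟨_, (map_zcomb_of_equivariant hε _ f).symm⟩
      refine ⟨c - φ (g ^ i) b, sub_mem hc hgb, ?_⟩
      rw [pow_succ', map_mul, Module.End.mul_apply, map_sub]
      grind
  obtain ⟨f, rfl⟩ := ha
  rw [cycNorm_zcomb hε] at hN
  have hf : ∀ x, ∑ i ∈ Finset.range q, f ((g ^ i)⁻¹ • x) = 0 := fun x =>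
    congrFun (hinj (hN.trans (map_zero _).symm)) x
  have hf' : ∀ x, ∑ i ∈ Finset.range q, f (g ^ i • x) = 0 := fun x => by
    obtain ⟨x', hx'⟩ := sum_pow_smul_eq g q f x
    rw [hx', hf]
  let u : ℕ → X → ℤ := fun i x => χ x * f (g ^ i • x)
  choose c hc h using fun i => hstep i (zcomb ε (u i)) ⟨_, rfl⟩
  refine ⟨∑ i ∈ Finset.range q, c i, sum_mem fun i _ => hc i, ?_⟩
  rw [map_sum, ← Finset.sum_sub_distrib, Finset.sum_congr rfl fun i _ => h i]
  simp only [map_zcomb_of_equivariant hε]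
  rw [Finset.sum_sub_distrib, ← map_sum, ← map_sum, ← map_sub]
  congr 1
  ext x
  simp only [Pi.sub_apply, Finset.sum_apply, u, smul_inv_smul]
  rw [← Finset.sum_mul, ← Finset.mul_sum, hχ, hf']
  ring

theorem exists_cycNorm_eq {g s : G} {q : ℕ} (hq : Odd q) (hs : s * s = 1)
    (hgs : g * s * g = s) {χ : X → ℤ} (hχ : ∀ x, ∑ i ∈ Finset.range q, χ ((g ^ i)⁻¹ • x) = 1)
    (hε : ∀ g x, φ g (ε x) = ε (g • x)) (hinj : Function.Injective (zcomb ε))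
    {a : M} (ha : a ∈ (zcomb ε).range) (hga : φ g a = a) (hsa : φ s a = a) :
    ∃ b ∈ (zcomb ε).range, φ s b = b ∧ cycNorm q (φ g) b = a := by
  obtain ⟨m, hm⟩ := hq
  obtain ⟨f, rfl⟩ := ha
  rw [map_zcomb_of_equivariant hε] at hga hsa
  have hfg : ∀ x, f (g⁻¹ • x) = f x := congrFun (hinj hga)
  have hfs : ∀ x, f (s⁻¹ • x) = f x := congrFun (hinj hsa)
  have hfi : ∀ (i : ℕ) x, f ((g ^ i)⁻¹ • x) = f x := fun i x => by
    induction i with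
    | zero => simp
    | succ i ih => rw [pow_succ, mul_inv_rev, mul_smul, hfg, ih]
  have hconj : ∀ i : ℕ, s⁻¹ * (g ^ i)⁻¹ = g ^ i * s⁻¹ := fun i => by
    have : s * g ^ i * s⁻¹ = (g ^ i)⁻¹ := by
      rw [← conj_pow, ← inv_pow]
      congr 1
      rw [mul_inv_eq_iff_eq_mul, eq_inv_mul_iff_mul_eq, ← mul_assoc, hgs]
    rw [← this]
    group
  have hsχ : ∀ x, ∑ i ∈ Finset.range q, χ (s⁻¹ • (g ^ i)⁻¹ • x) = 1 := fun x => by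
    simp only [← mul_smul, hconj]
    simp only [mul_smul]
    obtain ⟨x', hx'⟩ := sum_pow_smul_eq g q χ (s⁻¹ • x)
    rw [hx', hχ]
  refine ⟨zcomb ε fun x => f x - m * (f x * χ x + f x * χ (s⁻¹ • x)), ⟨_, rfl⟩, ?_, ?_⟩
  · rw [map_zcomb_of_equivariant hε]
    congr 1
    ext x
    simp only [hfs, ← mul_smul, ← mul_inv_rev, hs, inv_one, one_smul]
    ring
  · rw [cycNorm_zcomb hε]
    congr 1
    ext x
    simp only [hfi, Finset.sum_sub_distrib, ← Finset.mul_sum, Finset.sum_add_distrib, hχ, hsχ,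
      Finset.sum_const, Finset.card_range, nsmul_eq_mul]
    rw [hm]
    push_cast
    ring

end Lattice

end FreeAction

theorem DihedralGroup.forall_map_eq_iff {q : ℕ} [NeZero q] {G R M : Type*} [Group G] [Semiring R]
    [AddCommMonoid M] [Module R M] (e : G ≃* DihedralGroup q) (φ : G →* Module.End R M) (a : M) :
    (∀ g, φ g a = a) ↔ φ (e.symm (r 1)) a = a ∧ φ (e.symm (sr 0)) a = a := by
  refine ⟨fun h => ⟨h _, h _⟩, fun ⟨h1, h2⟩ g => ?_⟩
  have hr : ∀ i : ZMod q, φ (e.symm (r i)) a = a := fun i => by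
    rw [← ZMod.natCast_zmod_val i, ← r_one_pow, map_pow, map_pow]
    induction i.val with
    | zero => rfl
    | succ n ih => rw [pow_succ, Module.End.mul_apply, h1, ih]
  obtain ⟨d, rfl⟩ := e.symm.surjective g
  cases d with
  | r i => exact hr i
  | sr i => rw [← zero_add i, ← sr_mul_r, map_mul, map_mul, Module.End.mul_apply, hr, h2]

theorem forall_mem_comap_closure_singleton_iff {G D R M : Type*} [Group G] [Group D] [Semiring R]
    [AddCommMonoid M] [Module R M] (e : G ≃* D) (φ : G →* Module.End R M) (d : D) (a : M) :
    (∀ g ∈ (Subgroup.closure {d}).comap e.toMonoidHom, φ g a = a) ↔ φ (e.symm d) a = a := by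
  let _ : MulAction G M := MulAction.compHom M φ
  have h : (Subgroup.closure {d}).comap e.toMonoidHom = Subgroup.closure {e.symm d} := by
    have := Subgroup.comap_equiv_eq_map_symm' e (Subgroup.closure {d})
    refine this.trans ?_
    rw [MonoidHom.map_closure, Set.image_singleton]
    rfl
  rw [h]
  change (Subgroup.closure {e.symm d} ≤ MulAction.stabilizer G a) ↔ _
  rw [Subgroup.closure_le, Set.singleton_subset_iff]
  rfl

/-- The permutation representation on functions. -/
def permRep (G X : Type*) [Group G] [MulAction G X] : G →* Module.End ℝ (X → ℝ) where
  toFun g := LinearMap.funLeft ℝ ℝ (g⁻¹ • · : X → X)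
  map_one' := by
    ext f x
    simp
  map_mul' g h := by
    refine LinearMap.ext fun f => funext fun x => ?_
    simp [LinearMap.funLeft_apply, mul_smul]

theorem permRep_apply {G X : Type*} [Group G] [MulAction G X] (g : G) (f : X → ℝ) (x : X) :
    permRep G X g f x = f (g⁻¹ • x) := rfl

theorem eq_zero_of_rotation_pow_smul_infinitePlace_eq {q : ℕ} {k L : Type*} [Field k]
    [Field L] [Algebra k L] (e : (L ≃ₐ[k] L) ≃* DihedralGroup q) (hq : Odd q)
    (x : InfinitePlace L) {i : ℕ} (hi : i < q)
    (h : e.symm (r 1) ^ i • x = x) : i = 0 := by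
  have h2 : orderOf (e.symm (r 1) ^ i) ∣ 2 := by
    have h3 := Subgroup.orderOf_dvd_natCard (MulAction.stabilizer (L ≃ₐ[k] L) x) h
    rcases InfinitePlace.nat_card_stabilizer_eq_one_or_two k x with h4 | h4 <;> rw [h4] at h3
    · exact h3.trans (one_dvd 2)
    · exact h3
  have hq' : orderOf (e.symm (r 1) ^ i) ∣ q := by
    rw [orderOf_dvd_iff_pow_eq_one, ← pow_mul, mul_comm, pow_mul, ← map_pow, r_one_pow_n, map_one,
      one_pow]
  have h1 := Nat.eq_one_of_dvd_coprimes (Nat.coprime_two_left.mpr hq) h2 hq'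
  rw [orderOf_eq_one_iff, ← orderOf_dvd_iff_pow_eq_one, MulEquiv.orderOf_eq, orderOf_r_one] at h1
  exact Nat.eq_zero_of_dvd_of_lt h1 hi

section Tower

variable {k L : Type*} [Field k] [Field L] [NumberField k] [NumberField L] [Algebra k L]

theorem permRep_comap_eq (E : Type*) [Field E] [NumberField E] [Algebra E L]
    (T : Subgroup (L ≃ₐ[k] L)) [IsGaloisGroup T E L] {g : L ≃ₐ[k] L}
    (hg : g ∈ T) (f : InfinitePlace E → ℝ) :
    permRep (L ≃ₐ[k] L) (InfinitePlace L) g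
      (LinearMap.funLeft ℝ ℝ (fun w : InfinitePlace L => w.comap (algebraMap E L)) f) =
      LinearMap.funLeft ℝ ℝ (fun w : InfinitePlace L => w.comap (algebraMap E L)) f := by
  have := IsGaloisGroup.isGalois T E L
  ext w
  rw [permRep_apply, LinearMap.funLeft_apply, LinearMap.funLeft_apply]
  congr 1
  exact (comap_algebraMap_eq_iff_exists_smul E L T (fun _ _ _ => rfl) _ _).mpr
    ⟨⟨g⁻¹, inv_mem hg⟩, rfl⟩

theorem exists_comap_eq_of_permRep_eq [IsGalois k L] (f : InfinitePlace L → ℝ)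
    (hf : ∀ g, permRep (L ≃ₐ[k] L) (InfinitePlace L) g f = f) :
    ∃ f', LinearMap.funLeft ℝ ℝ (fun w : InfinitePlace L => w.comap (algebraMap k L)) f' = f := by
  have hs : Function.Surjective fun w : InfinitePlace L => w.comap (algebraMap k L) :=
    InfinitePlace.comap_surjective
  refine ⟨fun v => f (Function.surjInv hs v), funext fun w => ?_⟩
  rw [LinearMap.funLeft_apply]
  obtain ⟨g, hg⟩ := (comap_algebraMap_eq_iff_exists_smul k L (L ≃ₐ[k] L) (fun _ _ _ => rfl) _ _).mp
    (Function.surjInv_eq hs (w.comap (algebraMap k L)))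
  rw [← hg]
  have := congrFun (hf g⁻¹) w
  rwa [permRep_apply, inv_inv] at this

end Tower

theorem IsDihedralTower.regulator_relation {q : ℕ} [NeZero q]
    {k L : Type*} [Field k] [Field L] [NumberField k] [NumberField L]
    [Algebra k L] [IsGalois k L] {e : (L ≃ₐ[k] L) ≃* DihedralGroup q} {F K : IntermediateField k L}
    (h : IsDihedralTower q e F K) {ρ σ : Module.End ℤ (ℤ × Additive (𝓞 L)ˣ)}
    (hρ : ρ = extUnitRep k L (e.symm (r 1))) (hσ : σ = extUnitRep k L (e.symm (sr 0))) :
    (Units.regulator L / Units.torsionOrder L) * (Units.regulator k / Units.torsionOrder k) ^ 2 *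
        (normImage q ρ σ).relIndex (Module.End.fixed ρ ⊓ Module.End.fixed σ) =
      q * ((Units.regulator F / Units.torsionOrder F) *
        (Units.regulator K / Units.torsionOrder K) ^ 2 *
          (twistBoundary ρ σ).relIndex (normKer q ρ σ)) := by
  classical
  have := isGaloisGroup_of_eq_fixedField h.eqF
  have := isGaloisGroup_of_eq_fixedField h.eqK
  obtain ⟨ε, hε, hdet⟩ := exists_equivariant_family k L
  have hinj := zcomb_injective_of_det_ne_zero hdet
  have hgq : e.symm (r 1) ^ q = 1 := by rw [← map_pow, r_one_pow_n, map_one]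
  have hs : e.symm (sr 0) * e.symm (sr 0) = 1 := by rw [← map_mul, sr_mul_self, map_one]
  have hgs : e.symm (r 1) * e.symm (sr 0) * e.symm (r 1) = e.symm (sr 0) := by
    rw [← map_mul, ← map_mul, r_mul_sr, sr_mul_r, zero_sub, neg_add_cancel]
  have hpair : IsDihedralPair q ρ σ := by
    rw [hρ, hσ]
    exact isDihedralPair_of_monoidHom h.odd ((extUnitRep k L).comp e.symm.toMonoidHom)
  have hpairW := isDihedralPair_of_monoidHom h.odd
    ((permRep (L ≃ₐ[k] L) (InfinitePlace L)).comp e.symm.toMonoidHom)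
  obtain ⟨χ, hχ⟩ := exists_sum_pow_smul_eq_one hgq h.odd.pos
    fun x _ hi hx => eq_zero_of_rotation_pow_smul_infinitePlace_eq (L := L) e h.odd x hi hx
  have hmem : ∀ g, ∀ x ∈ (zcomb ε).range, extUnitRep k L g x ∈ (zcomb ε).range := by
    rintro g _ ⟨f, rfl⟩
    exact ⟨_, (map_zcomb_of_equivariant hε g f).symm⟩
  have hrel := hpair.relIndex_relation (zcomb ε).range (hρ ▸ hmem _) (hσ ▸ hmem _)
    (fun x hx _ hN => by
      rw [hρ] at hN ⊢
      exact exists_sub_eq_of_cycNorm_eq_zero hχ hε hinj hx hN)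
    (fun x hx h1 h2 => by
      rw [hρ] at h1 ⊢
      rw [hσ] at h2 ⊢
      exact exists_cycNorm_eq h.odd hs hgs hχ hε hinj hx h1 h2)
  obtain ⟨AF, hAF, hvolF, hF0⟩ := exists_end_placeLog (k := k)
    ((Subgroup.closure {(r 1 : DihedralGroup q)}).comap e.toMonoidHom) F hε hdet
    (Λ := Module.End.fixed ρ) fun a => by
      rw [forall_mem_comap_closure_singleton_iff, hρ, Module.End.mem_fixed]
  obtain ⟨AK, hAK, hvolK, hK0⟩ := exists_end_placeLog (k := k)
    ((Subgroup.closure {(sr 0 : DihedralGroup q)}).comap e.toMonoidHom) K hε hdet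
    (Λ := Module.End.fixed σ) fun a => by
      rw [forall_mem_comap_closure_singleton_iff, hσ, Module.End.mem_fixed]
  obtain ⟨Ak, hAk, hvolk, hk0⟩ := exists_end_placeLog (k := k) (⊤ : Subgroup (L ≃ₐ[k] L)) k hε hdet
    (Λ := Module.End.fixed ρ ⊓ Module.End.fixed σ) fun a => by
      simp only [Subgroup.mem_top, true_imp_iff]
      rw [DihedralGroup.forall_map_eq_iff e, ← hρ, ← hσ]
      rfl
  have hvolL := abs_det_placeLog L hdet
  have hmemT : ∀ d, e.symm d ∈ (Subgroup.closure {d}).comap e.toMonoidHom := fun d => by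
    rw [Subgroup.mem_comap]
    exact Subgroup.subset_closure (e.apply_symm_apply d)
  have hdetrel := hpairW.det_relation
    (LinearMap.funLeft ℝ ℝ (fun w : InfinitePlace L => w.comap (algebraMap F L)))
    (LinearMap.funLeft ℝ ℝ (fun w : InfinitePlace L => w.comap (algebraMap K L)))
    (LinearMap.funLeft ℝ ℝ (fun w : InfinitePlace L => w.comap (algebraMap k L)))
    (LinearMap.funLeft_injective_of_surjective _ _ _ InfinitePlace.comap_surjective)
    (LinearMap.funLeft_injective_of_surjective _ _ _ InfinitePlace.comap_surjective)
    (LinearMap.funLeft_injective_of_surjective _ _ _ InfinitePlace.comap_surjective)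
    (permRep_comap_eq F _ (hmemT (r 1)))
    (permRep_comap_eq K _ (hmemT (sr 0)))
    (fun w h1 h2 => exists_comap_eq_of_permRep_eq w
      ((DihedralGroup.forall_map_eq_iff e _ _).mpr ⟨h1, h2⟩))
    (by simpa using h.card_infinitePlace_relation)
    (A := Matrix.toLin' (Matrix.of fun w x => placeLog w (ε x)))
    (by
      refine LinearMap.ext fun f => funext fun w => ?_
      rw [Module.End.mul_apply, Module.End.mul_apply]
      change permRep _ (InfinitePlace L) (e.symm (r 1)) _ _ = _
      rw [permRep_apply, Matrix.toLin'_apply, Matrix.toLin'_apply]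
      simp only [Matrix.mulVec, dotProduct, Matrix.of_apply]
      rw [← Equiv.sum_comp (MulAction.toPerm (e.symm (r 1))) fun x => placeLog w (ε x) * _]
      refine Finset.sum_congr rfl fun x _ => ?_
      change _ = _ * permRep _ (InfinitePlace L) (e.symm (r 1)) f _
      rw [permRep_apply, MulAction.toPerm_apply, inv_smul_smul, ← hε,
        ← placeLog_extUnitRep (e.symm (r 1)) ((e.symm (r 1))⁻¹ • w), smul_inv_smul])
    (fun f => funext (hAF f)) (fun f => funext (hAK f)) (fun f => funext (hAk f))
  rw [LinearMap.det_toLin'] at hdetrel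
  have hr2 : (2 : ℝ) ^ InfinitePlace.nrComplexPlaces L * (2 ^ InfinitePlace.nrComplexPlaces k) ^ 2 =
      2 ^ InfinitePlace.nrComplexPlaces F * (2 ^ InfinitePlace.nrComplexPlaces K) ^ 2 := by
    rw [← pow_mul, ← pow_mul, ← pow_add, ← pow_add]
    congr 1
    linarith [h.nrRealPlaces_nrComplexPlaces_relation.2]
  have hw : ∀ {d c w n R i : ℝ}, w ≠ 0 → d * (c * w) = n * R * i → d * c = n * (R / w) * i :=
    fun hw h => by
      field_simp
      linarith
  replace hvolL := hw (Nat.cast_ne_zero.mpr (Units.torsionOrder_ne_zero L)) hvolL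
  replace hvolk := hw (Nat.cast_ne_zero.mpr (Units.torsionOrder_ne_zero k)) hvolk
  replace hvolF := hw (Nat.cast_ne_zero.mpr (Units.torsionOrder_ne_zero F)) hvolF
  replace hvolK := hw (Nat.cast_ne_zero.mpr (Units.torsionOrder_ne_zero K)) hvolK
  rw [h.finrank_eq_mul] at hvolL
  rw [h.finrank_base] at hvolF
  rw [h.finrank_base'] at hvolK
  have hn : (Module.finrank ℚ k : ℝ) ≠ 0 := Nat.cast_ne_zero.mpr Module.finrank_pos.ne'
  have hq0 : (q : ℝ) ≠ 0 := NeZero.ne _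
  replace hdetrel := congrArg abs hdetrel
  rw [abs_mul, abs_mul, abs_pow, abs_pow] at hdetrel
  replace hrel := congrArg (Nat.cast (R := ℝ)) hrel
  push_cast at hrel hvolL hvolF hvolK
  have hF0' := Nat.cast_ne_zero (R := ℝ).mpr hF0
  have hK0' := Nat.cast_ne_zero (R := ℝ).mpr hK0
  generalize Module.finrank ℚ k = n at *
  generalize (2 : ℝ) ^ InfinitePlace.nrComplexPlaces L = cL at *
  generalize (2 : ℝ) ^ InfinitePlace.nrComplexPlaces k = ck at *
  generalize (2 : ℝ) ^ InfinitePlace.nrComplexPlaces F = cF at *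
  generalize (2 : ℝ) ^ InfinitePlace.nrComplexPlaces K = cK at *
  generalize Units.regulator L / Units.torsionOrder L = xL at *
  generalize Units.regulator k / Units.torsionOrder k = xk at *
  generalize Units.regulator F / Units.torsionOrder F = xF at *
  generalize Units.regulator K / Units.torsionOrder K = xK at *
  generalize ((zcomb ε).range.index : ℝ) = iL at *
  generalize ((zcomb ε).range.relIndex (Module.End.fixed ρ ⊓ Module.End.fixed σ) : ℝ) = ik at *
  generalize ((zcomb ε).range.relIndex (Module.End.fixed ρ) : ℝ) = iF at *
  generalize ((zcomb ε).range.relIndex (Module.End.fixed σ) : ℝ) = iK at *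
  generalize |(Matrix.of fun w x => placeLog w (ε x)).det| = dL at *
  generalize |LinearMap.det Ak| = dk at *
  generalize |LinearMap.det AF| = dF at *
  generalize |LinearMap.det AK| = dK at *
  generalize ((twistBoundary ρ σ).relIndex (normKer q ρ σ) : ℝ) = t at *
  generalize ((normImage q ρ σ).relIndex (Module.End.fixed ρ ⊓ Module.End.fixed σ) : ℝ) = u at *
  clear * - hvolL hvolk hvolF hvolK hdetrel hrel hr2 hn hq0 hF0' hK0'
  have h1 : xL * xk ^ 2 * (iL * ik ^ 2) = q * (xF * xK ^ 2) * (iF * iK ^ 2) := by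
    have : (dL * cL) * (dk * ck) ^ 2 = (dF * cF) * (dK * cK) ^ 2 := by
      linear_combination (cL * ck ^ 2) * hdetrel + (dF * dK ^ 2) * hr2
    rw [hvolL, hvolk, hvolF, hvolK] at this
    apply mul_left_cancel₀ (mul_ne_zero (mul_ne_zero two_ne_zero hq0) (pow_ne_zero 3 hn))
    linear_combination this
  apply mul_right_cancel₀ (mul_ne_zero hF0' (pow_ne_zero 2 hK0'))
  linear_combination t * h1 - xL * xk ^ 2 * hrel

section Tate

variable {q : ℕ} [NeZero q] {G M : Type*} [Group G] [AddCommGroup M]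
  (e : G ≃* DihedralGroup q) {φ : G →* Module.End ℤ M} {ρ σ : Module.End ℤ M}

theorem fixedPts_eq (hρ : ρ = φ (e.symm (r 1))) (hσ : σ = φ (e.symm (sr 0))) :
    fixedPts (fun g => (φ g : M →+ M)) = Module.End.fixed ρ ⊓ Module.End.fixed σ := by
  ext x
  refine (DihedralGroup.forall_map_eq_iff e φ x).trans ?_
  rw [hρ, hσ]
  rfl

theorem sub_pow_apply_mem_range (ρ : Module.End ℤ M) (x : M) (i : ℕ) :
    x - (ρ ^ i) x ∈ ((1 - ρ : Module.End ℤ M) : M →+ M).range := by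
  induction i with
  | zero => simp
  | succ i ih =>
    have : (ρ ^ i) x - (ρ ^ (i + 1)) x ∈ ((1 - ρ : Module.End ℤ M) : M →+ M).range :=
      ⟨(ρ ^ i) x, by simp [pow_succ']⟩
    simpa using add_mem ih this

variable [Fintype G]

theorem normOf_eq_cycNorm (hρ : ρ = φ (e.symm (r 1))) (hσ : σ = φ (e.symm (sr 0))) (x : M) :
    normOf (fun g => (φ g : M →+ M)) x = cycNorm q ρ (x + σ x) := by
  have hr : ∀ c : DihedralGroup q → M,
      ∑ i : ZMod q, c (r i) = ∑ i ∈ Finset.range q, c (r 1 ^ i) := fun c => by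
    refine Finset.sum_nbij' (fun i => i.val) (fun i => (i : ZMod q)) ?_ ?_ ?_ ?_ ?_
    · simp [ZMod.val_lt]
    · simp
    · simp
    · intro i hi
      exact ZMod.val_cast_of_lt (Finset.mem_range.mp hi)
    · simp
  have hsr : ∑ i : ZMod q, φ (e.symm (sr i)) x =
      ∑ i : ZMod q, φ (e.symm (r i)) (φ (e.symm (sr 0)) x) := by
    rw [← Equiv.sum_comp (Equiv.neg (ZMod q))]
    refine Finset.sum_congr rfl fun i _ => ?_
    rw [← Module.End.mul_apply, ← map_mul, ← map_mul, r_mul_sr, zero_sub, Equiv.neg_apply]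
  rw [normOf, AddMonoidHom.finsetSum_apply, ← Equiv.sum_comp e.symm.toEquiv]
  refine (DihedralGroup.sum_eq fun d => φ (e.symm d) x).trans ?_
  rw [hsr, hr fun d => φ (e.symm d) x, hr fun d => φ (e.symm d) _, map_add, cycNorm,
    LinearMap.sum_apply, LinearMap.sum_apply]
  simp only [map_pow, hρ, hσ]

theorem card_tateH0Of (hq : Odd q) (h2 : Function.Bijective fun x : M => x + x)
    (hρ : ρ = φ (e.symm (r 1))) (hσ : σ = φ (e.symm (sr 0))) :
    Nat.card (tateH0Of fun g => (φ g : M →+ M)) =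
      (normImage q ρ σ).relIndex (Module.End.fixed ρ ⊓ Module.End.fixed σ) := by
  have hpair : IsDihedralPair q ρ σ := by
    rw [hρ, hσ]
    exact isDihedralPair_of_monoidHom hq (φ.comp e.symm.toMonoidHom)
  have hσσ : ∀ x, σ (σ x) = x := fun x => by
    rw [← Module.End.mul_apply, hpair.mul_self, Module.End.one_apply]
  have : (normOf fun g => (φ g : M →+ M)).range = normImage q ρ σ := by
    ext x
    constructor
    · rintro ⟨y, rfl⟩
      rw [normOf_eq_cycNorm e hρ hσ]
      refine ⟨_, ?_, rfl⟩
      change σ (y + σ y) = _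
      rw [map_add, hσσ, add_comm]
    · rintro ⟨y, hy : σ y = y, rfl⟩
      obtain ⟨z, rfl⟩ := h2.2 y
      have hz : σ z = z := h2.1 (by simpa using hy)
      refine ⟨z, ?_⟩
      rw [normOf_eq_cycNorm e hρ hσ, hz]
      rfl
  rw [← fixedPts_eq e hρ hσ, ← this]
  rfl

theorem card_tateHneg1Of (hq : Odd q) (h2 : Function.Bijective fun x : M => x + x)
    (hρ : ρ = φ (e.symm (r 1))) (hσ : σ = φ (e.symm (sr 0))) :
    Nat.card (tateHneg1Of fun g => (φ g : M →+ M)) =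
      (twistBoundary ρ σ).relIndex (normKer q ρ σ) := by
  have hpair : IsDihedralPair q ρ σ := by
    rw [hρ, hσ]
    exact isDihedralPair_of_monoidHom hq (φ.comp e.symm.toMonoidHom)
  have hσσ : ∀ x, σ (σ x) = x := fun x => by
    rw [← Module.End.mul_apply, hpair.mul_self, Module.End.one_apply]
  set T : G → M →+ M := fun g => φ g
  set f : M →+ M := ((1 + σ : Module.End ℤ M) : M →+ M)
  have hf : ∀ x, f x = x + σ x := fun x => rfl
  have hker : (normOf T).ker.map f = normKer q ρ σ := by
    ext x
    constructor
    · rintro ⟨y, hy, rfl⟩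
      refine ⟨?_, ?_⟩
      · change σ (f y) = f y
        rw [hf, map_add, hσσ, add_comm]
      · exact (normOf_eq_cycNorm e hρ hσ y).symm.trans hy
    · rintro ⟨hx : σ x = x, hN : cycNorm q ρ x = 0⟩
      obtain ⟨z, rfl⟩ := h2.2 x
      have hz : σ z = z := h2.1 (by simpa using hx)
      have hfz : f z = z + z := by rw [hf, hz]
      refine ⟨z, ?_, hfz⟩
      rw [SetLike.mem_coe, AddMonoidHom.mem_ker, normOf_eq_cycNorm e hρ hσ, hz]
      exact hN
  have hhalf : ∀ y, y + y ∈ augOf T → y ∈ augOf T := by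
    have : ∀ x ∈ augOf T, ∃ y ∈ augOf T, y + y = x := fun x hx => by
      induction hx using AddSubgroup.closure_induction with
      | mem x hx =>
        obtain ⟨g, y, rfl⟩ := hx
        obtain ⟨z, rfl⟩ := h2.2 y
        refine ⟨z - T g z, AddSubgroup.subset_closure ⟨g, z, rfl⟩, ?_⟩
        simp only [map_add]
        abel
      | zero => exact ⟨0, zero_mem _, add_zero 0⟩
      | add x y _ _ hx hy =>
        obtain ⟨a, ha, rfl⟩ := hx
        obtain ⟨b, hb, rfl⟩ := hy
        exact ⟨a + b, add_mem ha hb, by abel⟩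
      | neg x _ hx =>
        obtain ⟨a, ha, rfl⟩ := hx
        exact ⟨-a, neg_mem ha, by abel⟩
    intro y hy
    obtain ⟨z, hz, hzy⟩ := this _ hy
    rwa [← h2.1 hzy]
  have haug : augOf T = (twistBoundary ρ σ).comap f := by
    apply le_antisymm
    · rw [augOf, AddSubgroup.closure_le]
      rintro _ ⟨g, y, rfl⟩
      have hpow : ∀ y (i : ZMod q), y - φ (e.symm (r i)) y ∈
          ((1 - ρ : Module.End ℤ M) : M →+ M).range := fun y i => by
        have := sub_pow_apply_mem_range (φ (e.symm (r 1))) y i.val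
        rw [← map_pow, ← map_pow, r_one_pow, ZMod.natCast_zmod_val] at this
        rwa [hρ]
      refine ⟨?_, ?_⟩
      · change σ (f _) = f _
        rw [hf, map_add, hσσ, add_comm]
      · have hmul : ∀ d d' z, φ (e.symm d) (φ (e.symm d') z) = φ (e.symm (d * d')) z :=
          fun d d' z => by rw [map_mul, map_mul, Module.End.mul_apply]
        obtain ⟨d, rfl⟩ := e.symm.surjective g
        have hfd : f (y - T (e.symm d) y) = y + σ y - (φ (e.symm d) y + σ (φ (e.symm d) y)) := by
          rw [hf, map_sub]
          change y - φ (e.symm d) y + (σ y - σ (φ (e.symm d) y)) = _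
          abel
        rw [hfd]
        change _ ∈ ((1 - ρ : Module.End ℤ M) : M →+ M).range
        cases d with
        | r i =>
          have : σ (φ (e.symm (r i)) y) = φ (e.symm (r (-i))) (σ y) := by
            rw [hσ, hmul, hmul, sr_mul_r, r_mul_sr, zero_add, zero_sub, neg_neg]
          rw [this]
          have := add_mem (hpow y i) (hpow (σ y) (-i))
          convert this using 1
          abel
        | sr i =>
          have h1 : σ (φ (e.symm (sr i)) y) = φ (e.symm (r i)) y := by
            rw [hσ, hmul, sr_mul_sr, sub_zero]
          have h3 : φ (e.symm (sr i)) y = φ (e.symm (r (-i))) (σ y) := by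
            rw [hσ, hmul, r_mul_sr, zero_sub, neg_neg]
          rw [h1, h3]
          have := add_mem (hpow y i) (hpow (σ y) (-i))
          convert this using 1
          abel
    · rintro x ⟨-, y, hy⟩
      apply hhalf
      have h3 : y - T (e.symm (r 1)) y = f x := by
        rw [← hy, hρ]
        rfl
      have h4 : x + x = (y - T (e.symm (r 1)) y) + (x - T (e.symm (sr 0)) x) := by
        rw [h3, hf, hσ]
        change _ = x + φ (e.symm (sr 0)) x + (x - φ (e.symm (sr 0)) x)
        abel
      rw [h4]
      exact add_mem
        (AddSubgroup.subset_closure ⟨_, _, rfl⟩) (AddSubgroup.subset_closure ⟨_, _, rfl⟩)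
  rw [← hker, ← AddSubgroup.relIndex_comap, ← haug]
  rfl

end Tate

section Localization

variable {M M' : Type*} [AddCommGroup M] [AddCommGroup M']

theorem AddSubgroup.mem_of_isCoprime {B : AddSubgroup M} {a b : ℤ} (h : IsCoprime a b) {x : M}
    (ha : a • x ∈ B) (hb : b • x ∈ B) : x ∈ B := by
  obtain ⟨u, v, huv⟩ := h
  have : x = u • a • x + v • b • x := by rw [smul_smul, smul_smul, ← add_smul, huv, one_smul]
  rw [this]
  exact add_mem (zsmul_mem ha _) (zsmul_mem hb _)

/-- Localizing away from the exponent does not change the index of a subgroup. -/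
theorem AddSubgroup.relIndex_eq_of_localization {S : Submonoid ℤ} {q : ℤ}
    (hS : ∀ c ∈ S, IsCoprime c q) (f : M →+ M') {B C : AddSubgroup M} {B' C' : AddSubgroup M'}
    (hC : ∀ x ∈ C, f x ∈ C') (hB : ∀ x ∈ B, f x ∈ B')
    (hqC : ∀ x ∈ C, q • x ∈ B) (hqC' : ∀ x ∈ C', q • x ∈ B')
    (hsurj : ∀ x' ∈ C', ∃ c ∈ S, ∃ x ∈ C, f x = c • x')
    (hinj : ∀ x ∈ C, f x ∈ B' → ∃ c ∈ S, c • x ∈ B) :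
    B.relIndex C = B'.relIndex C' := by
  have h1 : C.map f ⊔ B' = C' ⊔ B' := by
    apply le_antisymm
    · refine sup_le_sup_right ?_ _
      rintro _ ⟨x, hx, rfl⟩
      exact hC x hx
    · refine sup_le (fun x' hx' => ?_) le_sup_right
      obtain ⟨c, hc, x, hx, hfx⟩ := hsurj x' hx'
      refine mem_of_isCoprime (hS c hc) ?_ (mem_sup_right (hqC' x' hx'))
      rw [← hfx]
      exact mem_sup_left (mem_map_of_mem f hx)
  have h2 : B ⊓ C = B'.comap f ⊓ C := by
    ext x
    refine ⟨fun ⟨h, h'⟩ => ⟨hB x h, h'⟩, fun ⟨h, h'⟩ => ⟨?_, h'⟩⟩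
    obtain ⟨c, hc, hx⟩ := hinj x h' h
    exact mem_of_isCoprime (hS c hc) hx (hqC x h')
  rw [← inf_relIndex_right, h2, inf_relIndex_right, relIndex_comap, ← relIndex_sup_right, h1,
    relIndex_sup_right]

theorem cycNorm_apply_of_fixed {ρ : Module.End ℤ M} (q : ℕ) {x : M} (hx : ρ x = x) :
    cycNorm q ρ x = (q : ℤ) • x := by
  have : ∀ i, (ρ ^ i) x = x := fun i => by
    induction i with
    | zero => rfl
    | succ i ih => rw [pow_succ, Module.End.mul_apply, hx, ih]
  rw [cycNorm, LinearMap.sum_apply]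
  simp [this]

theorem zsmul_mem_normImage {q : ℕ} {ρ σ : Module.End ℤ M} {x : M}
    (hx : x ∈ Module.End.fixed ρ ⊓ Module.End.fixed σ) : (q : ℤ) • x ∈ normImage q ρ σ :=
  ⟨x, hx.2, cycNorm_apply_of_fixed q hx.1⟩

theorem zsmul_mem_twistBoundary {q : ℕ} {ρ σ : Module.End ℤ M} {x : M}
    (hx : x ∈ normKer q ρ σ) : (q : ℤ) • x ∈ twistBoundary ρ σ := by
  refine ⟨zsmul_mem (show x ∈ Module.End.fixed σ from hx.1) _, ?_⟩
  have hN : cycNorm q ρ x = 0 := hx.2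
  have : (q : ℤ) • x = ∑ i ∈ Finset.range q, (x - (ρ ^ i) x) := by
    rw [Finset.sum_sub_distrib, ← LinearMap.sum_apply]
    change _ = _ - cycNorm q ρ x
    simp [hN]
  rw [SetLike.mem_coe, this]
  exact sum_mem fun i _ => sub_pow_apply_mem_range ρ x i

variable {q : ℕ} {S : Submonoid ℤ} (f : M →ₗ[ℤ] M') [IsLocalizedModule S f]
  {ρ σ : Module.End ℤ M} {ρ' σ' : Module.End ℤ M'}

theorem IsLocalizedModule.exists_zsmul_eq_zero {x : M} (hx : f x = 0) : ∃ c ∈ S, c • x = 0 := by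
  obtain ⟨c, hc⟩ := IsLocalizedModule.exists_of_eq (S := S) (f := f) (x₁ := x) (x₂ := 0)
    (by rw [hx, map_zero])
  exact ⟨c, c.2, by simpa [Submonoid.smul_def] using hc⟩

theorem cycNorm_comm (hfρ : ∀ x, f (ρ x) = ρ' (f x)) (x : M) :
    f (cycNorm q ρ x) = cycNorm q ρ' (f x) := by
  have : ∀ i, f ((ρ ^ i) x) = (ρ' ^ i) (f x) := fun i => by
    induction i with
    | zero => rfl
    | succ i ih => rw [pow_succ', pow_succ', Module.End.mul_apply, Module.End.mul_apply, hfρ, ih]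
  rw [cycNorm, cycNorm, LinearMap.sum_apply, LinearMap.sum_apply, map_sum]
  simp only [this]

theorem relIndex_normImage_eq_of_localization (hS : ∀ c ∈ S, IsCoprime c (q : ℤ))
    (hfρ : ∀ x, f (ρ x) = ρ' (f x)) (hfσ : ∀ x, f (σ x) = σ' (f x)) :
    (normImage q ρ σ).relIndex (Module.End.fixed ρ ⊓ Module.End.fixed σ) =
      (normImage q ρ' σ').relIndex (Module.End.fixed ρ' ⊓ Module.End.fixed σ') := by
  refine AddSubgroup.relIndex_eq_of_localization hS (f : M →+ M') ?_ ?_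
    (fun _ => zsmul_mem_normImage) (fun _ => zsmul_mem_normImage) ?_ ?_
  · rintro x ⟨h1 : ρ x = x, h2 : σ x = x⟩
    exact ⟨by change ρ' (f x) = f x; rw [← hfρ, h1], by change σ' (f x) = f x; rw [← hfσ, h2]⟩
  · rintro _ ⟨x, h : σ x = x, rfl⟩
    exact ⟨f x, by change σ' (f x) = f x; rw [← hfσ, h], (cycNorm_comm f hfρ x).symm⟩
  · rintro x' ⟨h1 : ρ' x' = x', h2 : σ' x' = x'⟩
    obtain ⟨⟨x, c⟩, hx : (c : ℤ) • x' = f x⟩ := IsLocalizedModule.surj S f x'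
    obtain ⟨a, ha, hax⟩ := IsLocalizedModule.exists_zsmul_eq_zero (S := S) f (x := ρ x - x)
      (by rw [map_sub, hfρ, ← hx, map_zsmul, h1, sub_self])
    obtain ⟨b, hb, hbx⟩ := IsLocalizedModule.exists_zsmul_eq_zero (S := S) f (x := σ x - x)
      (by rw [map_sub, hfσ, ← hx, map_zsmul, h2, sub_self])
    refine ⟨a * b * c, mul_mem (mul_mem ha hb) c.2, (a * b) • x, ⟨?_, ?_⟩, ?_⟩
    · change ρ ((a * b) • x) = _
      rw [map_zsmul, ← sub_eq_zero, ← smul_sub, mul_comm, mul_smul, hax, smul_zero]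
    · change σ ((a * b) • x) = _
      rw [map_zsmul, ← sub_eq_zero, ← smul_sub, mul_smul, hbx, smul_zero]
    · change f _ = _
      rw [map_zsmul, ← hx, mul_smul _ (c : ℤ)]
  · rintro x - ⟨y', h : σ' y' = y', hy' : cycNorm q ρ' y' = f x⟩
    obtain ⟨⟨y, c⟩, hy : (c : ℤ) • y' = f y⟩ := IsLocalizedModule.surj S f y'
    obtain ⟨a, ha, hay⟩ := IsLocalizedModule.exists_zsmul_eq_zero (S := S) f (x := σ y - y)
      (by rw [map_sub, hfσ, ← hy, map_zsmul, h, sub_self])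
    obtain ⟨b, hb, hbx⟩ := IsLocalizedModule.exists_zsmul_eq_zero (S := S) f
      (x := cycNorm q ρ y - (c : ℤ) • x)
      (by rw [map_sub, cycNorm_comm f hfρ, ← hy, map_zsmul, map_zsmul, hy', sub_self])
    refine ⟨a * b * c, mul_mem (mul_mem ha hb) c.2, (a * b) • y, ?_, ?_⟩
    · change σ ((a * b) • y) = _
      rw [map_zsmul, ← sub_eq_zero, ← smul_sub, mul_comm, mul_smul, hay, smul_zero]
    · change cycNorm q ρ _ = _
      rw [map_zsmul, mul_smul _ (c : ℤ), ← sub_eq_zero, ← smul_sub, mul_smul, hbx, smul_zero]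

theorem relIndex_twistBoundary_eq_of_localization (hS : ∀ c ∈ S, IsCoprime c (q : ℤ))
    (hfρ : ∀ x, f (ρ x) = ρ' (f x)) (hfσ : ∀ x, f (σ x) = σ' (f x)) :
    (twistBoundary ρ σ).relIndex (normKer q ρ σ) =
      (twistBoundary ρ' σ').relIndex (normKer q ρ' σ') := by
  refine AddSubgroup.relIndex_eq_of_localization hS (f : M →+ M') ?_ ?_
    (fun _ => zsmul_mem_twistBoundary) (fun _ => zsmul_mem_twistBoundary) ?_ ?_
  · rintro x ⟨h1 : σ x = x, h2 : cycNorm q ρ x = 0⟩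
    refine ⟨by change σ' (f x) = f x; rw [← hfσ, h1], ?_⟩
    change cycNorm q ρ' (f x) = 0
    rw [← cycNorm_comm f hfρ, h2, map_zero]
  · rintro x ⟨h1 : σ x = x, y, h2 : y - ρ y = x⟩
    refine ⟨by change σ' (f x) = f x; rw [← hfσ, h1], f y, ?_⟩
    change f y - ρ' (f y) = f x
    rw [← h2, map_sub, hfρ]
  · rintro x' ⟨h1 : σ' x' = x', h2 : cycNorm q ρ' x' = 0⟩
    obtain ⟨⟨x, c⟩, hx : (c : ℤ) • x' = f x⟩ := IsLocalizedModule.surj S f x'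
    obtain ⟨a, ha, hax⟩ := IsLocalizedModule.exists_zsmul_eq_zero (S := S) f (x := σ x - x)
      (by rw [map_sub, hfσ, ← hx, map_zsmul, h1, sub_self])
    obtain ⟨b, hb, hbx⟩ := IsLocalizedModule.exists_zsmul_eq_zero (S := S) f (x := cycNorm q ρ x)
      (by rw [cycNorm_comm f hfρ, ← hx, map_zsmul, h2, smul_zero])
    refine ⟨a * b * c, mul_mem (mul_mem ha hb) c.2, (a * b) • x, ⟨?_, ?_⟩, ?_⟩
    · change σ ((a * b) • x) = _
      rw [map_zsmul, ← sub_eq_zero, ← smul_sub, mul_comm, mul_smul, hax, smul_zero]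
    · change cycNorm q ρ ((a * b) • x) = 0
      rw [map_zsmul, mul_smul, hbx, smul_zero]
    · change f _ = _
      rw [map_zsmul, ← hx, mul_smul _ (c : ℤ)]
  · rintro x ⟨h : σ x = x, -⟩ ⟨-, y', hy' : y' - ρ' y' = f x⟩
    obtain ⟨⟨y, c⟩, hy : (c : ℤ) • y' = f y⟩ := IsLocalizedModule.surj S f y'
    obtain ⟨a, ha, hay⟩ := IsLocalizedModule.exists_zsmul_eq_zero (S := S) f
      (x := y - ρ y - (c : ℤ) • x)
      (by rw [map_sub, map_sub, hfρ, ← hy, map_zsmul, map_zsmul, ← hy', smul_sub, sub_self])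
    refine ⟨a * c, mul_mem ha c.2, ?_, a • y, ?_⟩
    · change σ ((a * (c : ℤ)) • x) = _
      rw [map_zsmul, h]
    · change a • y - ρ (a • y) = _
      rw [map_zsmul, ← smul_sub, mul_smul, ← sub_eq_zero, ← smul_sub, hay]

end Localization

theorem AddSubgroup.relIndex_prod {A B : Type*} [AddCommGroup A] [AddCommGroup B]
    (H H' : AddSubgroup A) (J J' : AddSubgroup B) :
    (H.prod J).relIndex (H'.prod J') = H.relIndex H' * J.relIndex J' := by
  have h1 : H'.prod J' ⊓ (AddMonoidHom.fst A B).ker = J'.map (AddMonoidHom.inr A B) := by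
    ext ⟨a, b⟩
    constructor
    · rintro ⟨h, h' : a = 0⟩
      exact ⟨b, h.2, by rw [h']; rfl⟩
    · rintro ⟨c, hc, h⟩
      rw [← h]
      exact ⟨⟨zero_mem _, hc⟩, rfl⟩
  have h2 : (H.prod J).comap (AddMonoidHom.inr A B) = J := by
    ext b
    exact ⟨fun h => h.2, fun h => ⟨zero_mem _, h⟩⟩
  have h3 : (H'.prod J' ⊓ H.prod J).map (AddMonoidHom.fst A B) = H ⊓ H' := by
    ext a
    constructor
    · rintro ⟨x, ⟨h, h'⟩, rfl⟩
      exact ⟨h'.1, h.1⟩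
    · rintro ⟨h, h'⟩
      exact ⟨(a, 0), ⟨⟨h', zero_mem _⟩, ⟨h, zero_mem _⟩⟩, rfl⟩
  have h4 : (H'.prod J').map (AddMonoidHom.fst A B) = H' := by
    ext a
    constructor
    · rintro ⟨x, h, rfl⟩
      exact h.1
    · exact fun h => ⟨(a, 0), ⟨h, zero_mem _⟩, rfl⟩
  rw [relIndex_eq_mul_relIndex_map (AddMonoidHom.fst A B), h1, h3, h4, ← relIndex_comap, h2,
    inf_relIndex_right, mul_comm]

section Product

variable {M : Type*} [AddCommGroup M] {q : ℕ} {ρ σ : Module.End ℤ M}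

theorem cycNorm_id_prodMap (x : ℤ × M) :
    cycNorm q (LinearMap.id.prodMap ρ) x = (q * x.1, cycNorm q ρ x.2) := by
  have : ∀ i, ((LinearMap.id.prodMap ρ : Module.End ℤ (ℤ × M)) ^ i) x = (x.1, (ρ ^ i) x.2) :=
    fun i => by
      induction i with
      | zero => rfl
      | succ i ih => rw [pow_succ', pow_succ', Module.End.mul_apply, ih]; rfl
  rw [cycNorm, cycNorm, LinearMap.sum_apply, LinearMap.sum_apply]
  simp only [this]
  ext
  · simp [Prod.fst_sum]
  · simp [Prod.snd_sum]

theorem relIndex_normImage_id_prodMap :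
    (normImage q (LinearMap.id.prodMap ρ) (LinearMap.id.prodMap σ)).relIndex
      (Module.End.fixed (LinearMap.id.prodMap ρ : Module.End ℤ (ℤ × M)) ⊓
        Module.End.fixed (LinearMap.id.prodMap σ)) =
      q * (normImage q ρ σ).relIndex (Module.End.fixed ρ ⊓ Module.End.fixed σ) := by
  have h1 : normImage q (LinearMap.id.prodMap ρ) (LinearMap.id.prodMap σ) =
      (AddSubgroup.zmultiples (q : ℤ)).prod (normImage q ρ σ) := by
    ext ⟨a, x⟩
    constructor
    · rintro ⟨⟨b, y⟩, hy, h⟩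
      have h' : cycNorm q (LinearMap.id.prodMap ρ) (b, y) = (a, x) := h
      rw [cycNorm_id_prodMap, Prod.mk.injEq] at h'
      exact ⟨⟨b, by simpa [mul_comm] using h'.1⟩, y, congrArg Prod.snd hy, h'.2⟩
    · rintro ⟨⟨b, hb : b • (q : ℤ) = a⟩, y, hy : σ y = y, h : cycNorm q ρ y = x⟩
      refine ⟨(b, y), Prod.ext rfl hy, ?_⟩
      change cycNorm q (LinearMap.id.prodMap ρ) (b, y) = (a, x)
      rw [cycNorm_id_prodMap, ← hb, ← h, smul_eq_mul, mul_comm]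
  have h2 : Module.End.fixed (LinearMap.id.prodMap ρ : Module.End ℤ (ℤ × M)) ⊓
      Module.End.fixed (LinearMap.id.prodMap σ) =
      (⊤ : AddSubgroup ℤ).prod (Module.End.fixed ρ ⊓ Module.End.fixed σ) := by
    ext ⟨a, x⟩
    exact ⟨fun ⟨h, h'⟩ => ⟨trivial, congrArg Prod.snd h, congrArg Prod.snd h'⟩,
      fun ⟨_, h, h'⟩ => ⟨Prod.ext rfl h, Prod.ext rfl h'⟩⟩
  rw [h1, h2, AddSubgroup.relIndex_prod, AddSubgroup.relIndex_top_right, Int.index_zmultiples,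
    Int.natAbs_natCast]

theorem relIndex_twistBoundary_id_prodMap [NeZero q] :
    (twistBoundary (LinearMap.id.prodMap ρ) (LinearMap.id.prodMap σ)).relIndex
      (normKer q (LinearMap.id.prodMap ρ : Module.End ℤ (ℤ × M)) (LinearMap.id.prodMap σ)) =
      (twistBoundary ρ σ).relIndex (normKer q ρ σ) := by
  have h1 : normKer q (LinearMap.id.prodMap ρ : Module.End ℤ (ℤ × M)) (LinearMap.id.prodMap σ) =
      (normKer q ρ σ).map (AddMonoidHom.inr ℤ M) := by
    ext ⟨a, x⟩
    constructor
    · rintro ⟨h, h'⟩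
      have h' : cycNorm q (LinearMap.id.prodMap ρ) ((a, x) : ℤ × M) = 0 := h'
      rw [cycNorm_id_prodMap, Prod.mk_eq_zero] at h'
      have ha : a = 0 := by simpa [NeZero.ne q] using h'.1
      exact ⟨x, ⟨congrArg Prod.snd h, h'.2⟩, by rw [ha]; rfl⟩
    · rintro ⟨y, ⟨h, h' : cycNorm q ρ y = 0⟩, hy⟩
      rw [← hy]
      refine ⟨Prod.ext rfl h, ?_⟩
      change cycNorm q (LinearMap.id.prodMap ρ) ((0, y) : ℤ × M) = 0
      rw [cycNorm_id_prodMap, h', mul_zero]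
      rfl
  have h2 : (twistBoundary (LinearMap.id.prodMap ρ) (LinearMap.id.prodMap σ)).comap
      (AddMonoidHom.inr ℤ M) = twistBoundary ρ σ := by
    ext x
    constructor
    · rintro ⟨h, y, hy⟩
      exact ⟨congrArg Prod.snd h, y.2, congrArg Prod.snd hy⟩
    · rintro ⟨h, y, hy⟩
      exact ⟨Prod.ext rfl h, (0, y), Prod.ext rfl hy⟩
  rw [h1, ← AddSubgroup.relIndex_comap, h2]

end Product

theorem isLocalizedModule_toIntLinearMap {M M' : Type*} [AddCommGroup M] [AddCommGroup M']
    {inst : Module ℤ M'} {S : Submonoid ℤ} (f : M →ₗ[ℤ] M') [IsLocalizedModule S f] :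
    @IsLocalizedModule ℤ _ M M' _ _ _ (AddCommGroup.toIntModule M') S
      f.toAddMonoidHom.toIntLinearMap := by
  obtain rfl : inst = AddCommGroup.toIntModule M' := Subsingleton.elim _ _
  assumption

section Units

variable (k L : Type*) [Field k] [Field L] [NumberField k] [NumberField L] [Algebra k L]
  [IsGalois k L]

/-- The Galois action on units as a representation over `ℤ`. -/
noncomputable def unitRep : (L ≃ₐ[k] L) →* Module.End ℤ (Additive (𝓞 L)ˣ) where
  toFun g := (unitAut g).toIntLinearMap
  map_one' := by
    rw [unitAut_one]
    rfl
  map_mul' g h := by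
    rw [unitAut_mul]
    rfl

/-- The Galois action on `U_L ⊗ ℤ[1/2]` as a representation over `ℤ`. -/
noncomputable def unitsHalfRep : (L ≃ₐ[k] L) →* Module.End ℤ (UnitsHalf L) where
  toFun g := (LocalizedModule.map (Submonoid.powers (2 : ℤ)) (unitRep k L g)).restrictScalars ℤ
  map_one' := by
    rw [map_one]
    refine LinearMap.ext fun x => ?_
    exact LinearMap.congr_fun (LocalizedModule.map_id _) x
  map_mul' g h := by
    refine LinearMap.ext fun x => ?_
    induction x with
    | h x s => simp [Module.End.mul_apply]

theorem coe_unitsHalfRep (g : L ≃ₐ[k] L) :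
    (unitsHalfRep k L g : UnitsHalf L →+ UnitsHalf L) = unitsAct k L g := rfl

/-- The localization map of the units, as a linear map for the canonical `ℤ`-module structure. -/
noncomputable def unitsHalfMap : Additive (𝓞 L)ˣ →ₗ[ℤ] UnitsHalf L :=
  (LocalizedModule.mkLinearMap (Submonoid.powers (2 : ℤ))
    (Additive (𝓞 L)ˣ)).toAddMonoidHom.toIntLinearMap

instance : IsLocalizedModule (Submonoid.powers (2 : ℤ)) (unitsHalfMap L) :=
  isLocalizedModule_toIntLinearMap (S := Submonoid.powers (2 : ℤ))
    (LocalizedModule.mkLinearMap (Submonoid.powers (2 : ℤ)) (Additive (𝓞 L)ˣ))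

theorem unitsHalfMap_unitRep (g : L ≃ₐ[k] L) (x : Additive (𝓞 L)ˣ) :
    unitsHalfMap L (unitRep k L g x) = unitsHalfRep k L g (unitsHalfMap L x) :=
  (LocalizedModule.map_mk _ (unitRep k L g) x 1).symm

theorem bijective_add_self_unitsHalf : Function.Bijective fun x : UnitsHalf L => x + x := by
  have h := (Module.End.isUnit_iff _).mp (IsLocalizedModule.map_units
    (unitsHalfMap L) ⟨(2 : ℤ), Submonoid.mem_powers 2⟩)
  convert h using 2 with x
  exact (two_zsmul x).symm

end Units

theorem isCoprime_of_mem_powers_two {q : ℕ} (hq : Odd q) :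
    ∀ c ∈ Submonoid.powers (2 : ℤ), IsCoprime c (q : ℤ) := by
  rintro _ ⟨n, rfl⟩
  refine IsCoprime.pow_left ?_
  exact_mod_cast Nat.isCoprime_iff_coprime.mpr (Nat.coprime_two_left.mpr hq)

/-- The factor of the residue of the Dedekind zeta function at `1` which depends only on the
signature and on the discriminant. -/
noncomputable def archimedeanFactor (E : Type*) [Field E] [NumberField E] : ℝ :=
  2 ^ InfinitePlace.nrRealPlaces E * (2 * Real.pi) ^ InfinitePlace.nrComplexPlaces E /
    Real.sqrt |(discr E : ℝ)|

theorem archimedeanFactor_pos (E : Type*) [Field E] [NumberField E] : 0 < archimedeanFactor E := by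
  have : (0 : ℝ) < |(discr E : ℝ)| := abs_pos.mpr (Int.cast_ne_zero.mpr (discr_ne_zero E))
  unfold archimedeanFactor
  positivity

theorem dedekindZeta_residue_eq_archimedeanFactor_mul (E : Type*) [Field E] [NumberField E] :
    dedekindZeta_residue E =
      archimedeanFactor E * (Units.regulator E / Units.torsionOrder E) * classNumber E := by
  rw [dedekindZeta_residue_def, archimedeanFactor, div_mul_div_comm, div_mul_eq_mul_div,
    mul_comm (Real.sqrt _)]

namespace IsDihedralTower

variable {q : ℕ} [NeZero q] {k L : Type*} [Field k] [Field L] [NumberField k] [NumberField L]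
  [Algebra k L] [IsGalois k L] {e : (L ≃ₐ[k] L) ≃* DihedralGroup q} {F K : IntermediateField k L}

theorem archimedeanFactor_relation (h : IsDihedralTower q e F K) :
    archimedeanFactor L * archimedeanFactor k ^ 2 =
      archimedeanFactor F * archimedeanFactor K ^ 2 := by
  obtain ⟨h1, h2⟩ := h.nrRealPlaces_nrComplexPlaces_relation
  have hd : |(discr L : ℝ)| * |(discr k : ℝ)| ^ 2 = |(discr F : ℝ)| * |(discr K : ℝ)| ^ 2 := by
    have := h.discr_relation
    simp only [← Int.cast_abs, Int.abs_eq_natAbs]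
    exact_mod_cast this
  have hs : Real.sqrt |(discr L : ℝ)| * Real.sqrt |(discr k : ℝ)| ^ 2 =
      Real.sqrt |(discr F : ℝ)| * Real.sqrt |(discr K : ℝ)| ^ 2 := by
    have := congrArg Real.sqrt hd
    rwa [Real.sqrt_mul (abs_nonneg _), Real.sqrt_mul (abs_nonneg _), Real.sqrt_sq (abs_nonneg _),
      Real.sqrt_sq (abs_nonneg _), ← Real.sq_sqrt (abs_nonneg (discr k : ℝ)),
      ← Real.sq_sqrt (abs_nonneg (discr K : ℝ))] at this
  have hpow : ∀ (x : ℝ) (a b c d : ℕ), a + 2 * b = c + 2 * d →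
      x ^ a * (x ^ b) ^ 2 = x ^ c * (x ^ d) ^ 2 := fun x a b c d h => by
    rw [← pow_mul, ← pow_mul, ← pow_add, ← pow_add, mul_comm b, mul_comm d, h]
  simp only [archimedeanFactor, div_pow, div_mul_div_comm, hs]
  congr 1
  linear_combination hpow 2 _ _ _ _ h1 * ((2 * Real.pi) ^ InfinitePlace.nrComplexPlaces L *
      ((2 * Real.pi) ^ InfinitePlace.nrComplexPlaces k) ^ 2) +
    hpow (2 * Real.pi) _ _ _ _ h2 * ((2 : ℝ) ^ InfinitePlace.nrRealPlaces F *
      (2 ^ InfinitePlace.nrRealPlaces K) ^ 2)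

theorem regulator_relation_unitsHalf (h : IsDihedralTower q e F K) :
    (Units.regulator L / Units.torsionOrder L) * (Units.regulator k / Units.torsionOrder k) ^ 2 *
        Nat.card (tateH0Of fun g : L ≃ₐ[k] L => unitsAct k L g) =
      (Units.regulator F / Units.torsionOrder F) * (Units.regulator K / Units.torsionOrder K) ^ 2 *
        Nat.card (tateHneg1Of fun g : L ≃ₐ[k] L => unitsAct k L g) := by
  have hS := isCoprime_of_mem_powers_two h.odd
  have hf := unitsHalfMap_unitRep k L
  have h0 := card_tateH0Of e (φ := unitsHalfRep k L) h.odd (bijective_add_self_unitsHalf L) rfl rfl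
  have h1 := card_tateHneg1Of e (φ := unitsHalfRep k L) h.odd (bijective_add_self_unitsHalf L)
    rfl rfl
  rw [← relIndex_normImage_eq_of_localization (unitsHalfMap L) hS (hf _) (hf _)] at h0
  rw [← relIndex_twistBoundary_eq_of_localization (unitsHalfMap L) hS (hf _) (hf _)] at h1
  have hr := h.regulator_relation (ρ := LinearMap.id.prodMap (unitRep k L (e.symm (r 1))))
    (σ := LinearMap.id.prodMap (unitRep k L (e.symm (sr 0)))) rfl rfl
  rw [relIndex_normImage_id_prodMap, relIndex_twistBoundary_id_prodMap, ← h0, ← h1] at hr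
  have hq : (q : ℝ) ≠ 0 := Nat.cast_ne_zero.mpr (NeZero.ne q)
  refine mul_left_cancel₀ hq ?_
  push_cast at hr
  simp only [coe_unitsHalfRep] at hr
  linear_combination hr

theorem classNumber_relation (h : IsDihedralTower q e F K) :
    classNumber L * classNumber k ^ 2 *
        Nat.card (tateHneg1Of (fun g : L ≃ₐ[k] L => unitsAct k L g)) =
      classNumber ↥F * classNumber ↥K ^ 2 *
        Nat.card (tateH0Of (fun g : L ≃ₐ[k] L => unitsAct k L g)) := by
  have hres := h.residue_relation
  simp only [dedekindZeta_residue_eq_archimedeanFactor_mul] at hres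
  have ha := h.archimedeanFactor_relation
  have hr := h.regulator_relation_unitsHalf
  have hpos : ∀ E : IntermediateField k L,
      0 < archimedeanFactor E * (Units.regulator E / Units.torsionOrder E) := fun E =>
    mul_pos (archimedeanFactor_pos E)
      (div_pos (Units.regulator_pos E) (Nat.cast_pos.mpr (Units.torsionOrder_pos E)))
  rw [← Nat.cast_inj (R := ℝ)]
  push_cast
  refine mul_left_cancel₀ (mul_pos (hpos F) (pow_pos (hpos K) 2)).ne' ?_
  generalize Units.regulator L / (Units.torsionOrder L : ℝ) = rL at *
  generalize Units.regulator k / (Units.torsionOrder k : ℝ) = rk at *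
  generalize Units.regulator F / (Units.torsionOrder F : ℝ) = rF at *
  generalize Units.regulator K / (Units.torsionOrder K : ℝ) = rK at *
  linear_combination (Nat.card (tateH0Of fun g : L ≃ₐ[k] L => unitsAct k L g) : ℝ) * hres -
    (archimedeanFactor F * archimedeanFactor K ^ 2 * classNumber L * classNumber k ^ 2 : ℝ) * hr -
    (rL * rk ^ 2 * classNumber L * classNumber k ^ 2 *
      Nat.card (tateH0Of fun g : L ≃ₐ[k] L => unitsAct k L g) : ℝ) * ha

end IsDihedralTower

/-- Let `L/k` be Galois with dihedral group `D` of order `2q` (`q` odd),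
`G ⊆ D` of order `q`, `Σ ⊆ D` of order 2, `F = L^G`, `K = L^Σ`.  Then
`h(L)·h(k)²/(h(F)·h(K)²) = |Ĥ⁰(D, U_L ⊗ ℤ[1/2])| / |Ĥ⁻¹(D, U_L ⊗ ℤ[1/2])|`
(written multiplied out). -/
theorem dihedral_class_number_formula (q : ℕ) [NeZero q] (hq : Odd q)
    (k L : Type*) [Field k] [Field L] [NumberField k] [NumberField L]
    [Algebra k L] [IsGalois k L]
    (e : (L ≃ₐ[k] L) ≃* DihedralGroup q)
    (F K : IntermediateField k L)
    (hF : F = fixedField ((Subgroup.closure {(r 1 : DihedralGroup q)}).comap e.toMonoidHom))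
    (hK : K = fixedField ((Subgroup.closure {(sr 0 : DihedralGroup q)}).comap e.toMonoidHom)) :
    classNumber L * classNumber k ^ 2 *
        Nat.card (tateHneg1Of (fun g : L ≃ₐ[k] L => unitsAct k L g)) =
      classNumber ↥F * classNumber ↥K ^ 2 *
        Nat.card (tateH0Of (fun g : L ≃ₐ[k] L => unitsAct k L g)) := by
  exact IsDihedralTower.classNumber_relation ⟨hq, hF, hK⟩
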